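/- arXiv:2007.14944 — 3 statements merged into one kernel-verified Lean document; each statement's English description precedes it below -/
import Mathlib

section
/- For every δ, ν ∈ ℝ with 0 < δ < 1 and ν > 0, there exists a constant Δ₀(δ,ν) such that for all Δ ≥ Δ₀(δ,ν): if G is a finite simple graph with maximum degree at most Δ and L is a list assignment of E(G) such that (i) |L(e)| ≥ (ln Δ)^25 for all e ∈ E(G), and (ii) the vector x = (1/|L(e)| : e ∈ E(G)) is an element of (1−δ)·MP(G), then G is L-edge-colourable. -/
open scoped Pointwise

/-- An `L`-edge-colouring of a simple graph `G`. -/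
def IsLEdgeColouring {V : Type} (G : SimpleGraph V) (L : Sym2 V → Finset ℕ)
    (γ : Sym2 V → ℕ) : Prop :=
  (∀ e ∈ G.edgeSet, γ e ∈ L e) ∧
  ∀ e ∈ G.edgeSet, ∀ f ∈ G.edgeSet, e ≠ f → (∃ v, v ∈ e ∧ v ∈ f) → γ e ≠ γ f

/-- `M` is a matching of `G`: a set of edges of `G`, pairwise sharing no vertex. -/
def IsMatchingFinset {V : Type} [Fintype V] [DecidableEq V] (G : SimpleGraph V)
    [DecidableRel G.Adj] (M : Finset (Sym2 V)) : Prop :=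
  M ⊆ G.edgeFinset ∧ ∀ e ∈ M, ∀ f ∈ M, e ≠ f → ∀ v : V, ¬(v ∈ e ∧ v ∈ f)

/-- The matching polytope of `G`: the convex hull in `ℝ^{E(G)}` of the characteristic
vectors of the matchings of `G`. -/
noncomputable def matchingPolytope {V : Type} [Fintype V] [DecidableEq V]
    (G : SimpleGraph V) [DecidableRel G.Adj] : Set (G.edgeFinset → ℝ) :=
  convexHull ℝ {x | ∃ M : Finset (Sym2 V), IsMatchingFinset G M ∧
    x = fun e : G.edgeFinset => if (e : Sym2 V) ∈ M then (1 : ℝ) else 0}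

/-!
Spread the weight of every edge evenly over its list. This gives every edge a probability vector on
the colours with small entries, at most `P` say, and by the degree inequalities of the matching
polytope every colour has load (total weight) at most `1 - δ` at every vertex. The lists are then
used up by a semi-random nibble. In one round every colour `c` is activated at every edge `e`
independently with probability `ε * p e c`. An edge is coloured `c` if `c` is activated there and at
no other edge sharing an end with it; a colour activated at some edge at `v` is blocked on the other
edges at `v`. On the uncoloured edges the unblocked weights are divided by their probability of
being unblocked. This preserves the expected total weight of an edge, while the loads shrink by a
constant factor because some of the edges have been coloured.

All these quantities have influences of order `P`, so they fail to be close to their expectations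
with probability at most `exp (-θ / P)`, and the local lemma yields an outcome that is good at all
vertices as soon as the local degrees and list sizes are small compared with `exp (θ / P)`. A round
increases `P` by a factor of at most `4`, and the number of rounds needed to bring the loads below
`1 / 32` depends on `δ` only. Then independent random colours are proper with positive probability,
again by the local lemma. Lists of size of order `log Δ` are therefore long enough.
-/

namespace EdgeColouring

section ProductMeasure

variable {ι α κ : Type*} [Fintype ι]

/-- The mass of the point `ω` under the product of the weights `μ i` on `α`. -/
noncomputable def weight (μ : ι → α → ℝ) (ω : ι → α) : ℝ := ∏ i, μ i (ω i)

/-- The expectation of `F` under the product of the weights `μ i`. All the probability spaces of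
the argument are finite products, so expectations are finite sums. -/
noncomputable def expect [Fintype α] [DecidableEq ι] (μ : ι → α → ℝ) (F : (ι → α) → ℝ) : ℝ :=
  ∑ ω, weight μ ω * F ω

/-- The conditional expectation of `F` given the coordinates in `S`, as a function of the whole
point: the coordinates outside `S` are resampled. -/
noncomputable def condExpect [Fintype α] [DecidableEq ι] (μ : ι → α → ℝ) (S : Set ι)
    (F : (ι → α) → ℝ) (x : ι → α) : ℝ :=
  open scoped Classical in expect μ fun y => F (S.piecewise x y)

/-- The probability of the event `A` under the product of the weights `μ i`. -/
noncomputable def prob [Fintype α] [DecidableEq ι] (μ : ι → α → ℝ) (A : (ι → α) → Prop) : ℝ :=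
  expect μ fun ω => open scoped Classical in if A ω then 1 else 0

/-- Each `μ i` is a probability vector on `α`. -/
structure IsProbWeight {ι α : Type*} [Fintype α] (μ : ι → α → ℝ) : Prop where
  nonneg : ∀ i a, 0 ≤ μ i a
  sum_eq_one : ∀ i, ∑ a, μ i a = 1

variable [Fintype α] {μ : ι → α → ℝ}

lemma IsProbWeight.weight_nonneg (hμ : IsProbWeight μ) (ω : ι → α) : 0 ≤ weight μ ω :=
  Finset.prod_nonneg fun i _ => hμ.nonneg i _

variable [DecidableEq ι]

lemma expect_add (F G : (ι → α) → ℝ) :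
    expect μ (fun ω => F ω + G ω) = expect μ F + expect μ G := by
  simp only [expect, mul_add, Finset.sum_add_distrib]

lemma expect_sub (F G : (ι → α) → ℝ) :
    expect μ (fun ω => F ω - G ω) = expect μ F - expect μ G := by
  simp only [expect, mul_sub, Finset.sum_sub_distrib]

lemma expect_neg (F : (ι → α) → ℝ) : expect μ (fun ω => -F ω) = -expect μ F := by
  simp only [expect, mul_neg, Finset.sum_neg_distrib]

lemma expect_const_mul (k : ℝ) (F : (ι → α) → ℝ) :
    expect μ (fun ω => k * F ω) = k * expect μ F := by
  simp only [expect, Finset.mul_sum, mul_left_comm]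

lemma expect_sum (s : Finset κ) (F : κ → (ι → α) → ℝ) :
    expect μ (fun ω => ∑ k ∈ s, F k ω) = ∑ k ∈ s, expect μ (F k) := by
  simp only [expect, Finset.mul_sum]
  exact Finset.sum_comm

lemma condExpect_def (S : Set ι) [∀ i, Decidable (i ∈ S)] (F : (ι → α) → ℝ) (x : ι → α) :
    condExpect μ S F x = expect μ fun y => F (S.piecewise x y) := by
  simp only [condExpect]
  congr!

lemma expect_prod_coord (f : ι → α → ℝ) :
    expect μ (fun ω => ∏ i, f i (ω i)) = ∏ i, ∑ a, μ i a * f i a := by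
  simp only [expect, weight, ← Finset.prod_mul_distrib, Finset.prod_univ_sum,
    Fintype.piFinset_univ]

namespace IsProbWeight

lemma expect_mono (hμ : IsProbWeight μ) {F G : (ι → α) → ℝ} (hFG : ∀ ω, F ω ≤ G ω) :
    expect μ F ≤ expect μ G :=
  Finset.sum_le_sum fun ω _ => mul_le_mul_of_nonneg_left (hFG ω) (hμ.weight_nonneg ω)

lemma expect_nonneg (hμ : IsProbWeight μ) {F : (ι → α) → ℝ} (hF : ∀ ω, 0 ≤ F ω) :
    0 ≤ expect μ F :=
  Finset.sum_nonneg fun ω _ => mul_nonneg (hμ.weight_nonneg ω) (hF ω)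

lemma expect_coord (hμ : IsProbWeight μ) (i : ι) (f : α → ℝ) :
    expect μ (fun ω => f (ω i)) = ∑ a, μ i a * f a := by
  have key := expect_prod_coord (μ := μ) fun j a => if j = i then f a else 1
  have hfactor (j : ι) : ∑ a, μ j a * (if j = i then f a else 1) =
      if j = i then ∑ a, μ i a * f a else 1 := by
    split_ifs with h
    · rw [h]
    · simp only [mul_one, hμ.sum_eq_one]
  simpa only [hfactor, Finset.prod_ite_eq', Finset.mem_univ, if_true] using key

lemma sum_weight (hμ : IsProbWeight μ) : ∑ ω, weight μ ω = 1 := by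
  simpa [expect, hμ.sum_eq_one] using expect_prod_coord (μ := μ) fun _ _ => 1

lemma expect_const (hμ : IsProbWeight μ) (k : ℝ) : expect μ (fun _ => k) = k := by
  rw [expect, ← Finset.sum_mul, hμ.sum_weight, one_mul]

lemma abs_expect_le (hμ : IsProbWeight μ) {F : (ι → α) → ℝ} {k : ℝ} (hF : ∀ ω, |F ω| ≤ k) :
    |expect μ F| ≤ k := by
  refine abs_le.mpr ⟨?_, ?_⟩
  · simpa only [hμ.expect_const] using hμ.expect_mono fun ω => (abs_le.mp (hF ω)).1
  · simpa only [hμ.expect_const] using hμ.expect_mono fun ω => (abs_le.mp (hF ω)).2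

lemma expect_condExpect (hμ : IsProbWeight μ) (S : Set ι) (F : (ι → α) → ℝ) :
    expect μ (condExpect μ S F) = expect μ F := by
  classical
  let swap : (ι → α) × (ι → α) ≃ (ι → α) × (ι → α) := Function.Involutive.toPerm
    (fun z => (S.piecewise z.1 z.2, S.piecewise z.2 z.1)) fun z => by
      ext i <;> by_cases hi : i ∈ S <;> simp [hi]
  have hswap (x y : ι → α) :
      weight μ (S.piecewise x y) * weight μ (S.piecewise y x) = weight μ x * weight μ y := by
    simp only [weight, ← Finset.prod_mul_distrib]
    refine Finset.prod_congr rfl fun i _ => ?_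
    by_cases hi : i ∈ S <;> simp [hi, mul_comm]
  calc expect μ (condExpect μ S F)
      = ∑ z : (ι → α) × (ι → α), weight μ z.1 * weight μ z.2 * F (S.piecewise z.1 z.2) := by
        simp only [expect, condExpect_def, Finset.mul_sum, Fintype.sum_prod_type, mul_assoc]
    _ = ∑ z : (ι → α) × (ι → α), weight μ z.1 * weight μ z.2 * F z.1 :=
        Fintype.sum_equiv swap _ _ fun z => by
          change _ = weight μ (S.piecewise z.1 z.2) * weight μ (S.piecewise z.2 z.1) *
            F (S.piecewise z.1 z.2)
          rw [hswap]
    _ = expect μ F := by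
        simp only [Fintype.sum_prod_type, mul_right_comm, ← Finset.mul_sum, hμ.sum_weight,
          mul_one, expect]

lemma condExpect_compl_singleton (hμ : IsProbWeight μ) (i : ι) (F : (ι → α) → ℝ) (x : ι → α) :
    condExpect μ {i}ᶜ F x = ∑ a, μ i a * F (Function.update x i a) := by
  classical
  have hupdate (y : ι → α) : Set.piecewise {i}ᶜ x y = Function.update x i (y i) := by
    ext j
    by_cases hj : j = i
    · subst hj; simp
    · simp [hj]
  simp only [condExpect_def, hupdate]
  exact hμ.expect_coord i fun a => F (Function.update x i a)

lemma expect_mul (hμ : IsProbWeight μ) {F G : (ι → α) → ℝ} {S T : Set ι} (hF : DependsOn F S)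
    (hG : DependsOn G T) (hST : Disjoint S T) :
    expect μ (fun ω => F ω * G ω) = expect μ F * expect μ G := by
  classical
  have hFS (x y) : F (S.piecewise x y) = F x := hF fun i hi => Set.piecewise_eq_of_mem _ _ _ hi
  have hGT (x y) : G (S.piecewise x y) = G y :=
    hG fun i hi => Set.piecewise_eq_of_notMem _ _ _ (hST.notMem_of_mem_right hi)
  have hcond : condExpect μ S (fun ω => F ω * G ω) = fun x => expect μ G * F x := by
    ext x
    simp only [condExpect_def, hFS, hGT, expect_const_mul, mul_comm]
  rw [← hμ.expect_condExpect S, hcond, expect_const_mul, mul_comm]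

lemma expect_finset_prod (hμ : IsProbWeight μ) (s : Finset κ) (F : κ → (ι → α) → ℝ)
    (S : κ → Set ι) (hF : ∀ k, DependsOn (F k) (S k))
    (hS : (s : Set κ).PairwiseDisjoint S) :
    expect μ (fun ω => ∏ k ∈ s, F k ω) = ∏ k ∈ s, expect μ (F k) := by
  classical
  induction s using Finset.induction_on with
  | empty => simp [hμ.expect_const]
  | insert a s ha ih =>
    rw [Finset.coe_insert, Set.pairwiseDisjoint_insert_of_notMem (by simpa using ha)] at hS
    simp only [Finset.prod_insert ha]
    rw [← ih hS.1]
    refine hμ.expect_mul (hF a) (T := ⋃ k ∈ s, S k) (fun x y hxy => ?_) ?_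
    · exact Finset.prod_congr rfl fun k hk => hF k fun i hi => hxy i (Set.mem_biUnion hk hi)
    · exact Set.disjoint_iUnion₂_right.mpr hS.2

lemma prob_nonneg (hμ : IsProbWeight μ) (A : (ι → α) → Prop) : 0 ≤ prob μ A :=
  hμ.expect_nonneg fun ω => by split_ifs <;> norm_num

lemma prob_mono (hμ : IsProbWeight μ) {A B : (ι → α) → Prop} (hAB : ∀ ω, A ω → B ω) :
    prob μ A ≤ prob μ B :=
  hμ.expect_mono fun ω => by have := hAB ω; split_ifs <;> first | tauto | norm_num

lemma prob_eq_one (hμ : IsProbWeight μ) {A : (ι → α) → Prop} (hA : ∀ ω, A ω) :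
    prob μ A = 1 := by
  simp only [prob, hA, if_true, hμ.expect_const]

lemma prob_and_of_disjoint (hμ : IsProbWeight μ) {A B : (ι → α) → Prop} {S T : Set ι}
    (hA : DependsOn A S) (hB : DependsOn B T) (hST : Disjoint S T) :
    prob μ (fun ω => A ω ∧ B ω) = prob μ A * prob μ B := by
  classical
  simp only [prob]
  rw [← hμ.expect_mul (fun x y hxy => by simp only [hA hxy]) (fun x y hxy => by simp only [hB hxy])
    hST]
  congr 1 with ω
  split_ifs <;> simp_all

lemma prob_exists_le (hμ : IsProbWeight μ) (s : Finset κ) (A : κ → (ι → α) → Prop) :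
    prob μ (fun ω => ∃ k ∈ s, A k ω) ≤ ∑ k ∈ s, prob μ (A k) := by
  classical
  simp only [prob, ← expect_sum]
  refine hμ.expect_mono fun ω => ?_
  have hind (k : κ) : (0 : ℝ) ≤ if A k ω then 1 else 0 := by positivity
  split_ifs with h
  · obtain ⟨k, hk, hA⟩ := h
    simpa [hA] using Finset.single_le_sum (fun k _ => hind k) hk
  · exact Finset.sum_nonneg fun k _ => hind k

lemma prob_or_le (hμ : IsProbWeight μ) (A B : (ι → α) → Prop) :
    prob μ (fun ω => A ω ∨ B ω) ≤ prob μ A + prob μ B := by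
  classical
  simp only [prob, ← expect_add]
  exact hμ.expect_mono fun ω => by split_ifs <;> first | tauto | norm_num

lemma prob_le_exp_mul_expect_exp (hμ : IsProbWeight μ) (F : (ι → α) → ℝ) {l : ℝ} (hl : 0 ≤ l)
    (t : ℝ) :
    prob μ (fun ω => t ≤ F ω) ≤ Real.exp (-(l * t)) * expect μ fun ω => Real.exp (l * F ω) := by
  classical
  simp only [prob, ← expect_const_mul]
  refine hμ.expect_mono fun ω => ?_
  split_ifs with hF
  · rw [← Real.exp_add, Real.one_le_exp_iff]
    linarith [mul_le_mul_of_nonneg_left hF hl]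
  · positivity

end IsProbWeight

lemma prob_add_prob_not (A B : (ι → α) → Prop) :
    prob μ (fun ω => A ω ∧ B ω) + prob μ (fun ω => ¬A ω ∧ B ω) = prob μ B := by
  classical
  simp only [prob, ← expect_add]
  congr 1 with ω
  split_ifs <;> simp_all

lemma exists_weight_ne_zero_of_prob_pos {A : (ι → α) → Prop} (hA : 0 < prob μ A) :
    ∃ ω, weight μ ω ≠ 0 ∧ A ω := by
  obtain ⟨ω, -, hω⟩ := Finset.exists_ne_zero_of_sum_ne_zero hA.ne'
  exact ⟨ω, left_ne_zero_of_mul hω, by simpa using right_ne_zero_of_mul hω⟩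

end ProductMeasure

section BoundedDifferences

variable {ι : Type*}

/-- The law of independent Booleans, the `i`-th being `true` with probability `b i`. -/
def bernoulliWeight (b : ι → ℝ) (i : ι) (a : Bool) : ℝ := if a then b i else 1 - b i

lemma isProbWeight_bernoulliWeight {b : ι → ℝ} (hb : ∀ i, b i ∈ Set.Icc 0 1) :
    IsProbWeight (bernoulliWeight b) where
  nonneg i a := by cases a <;> simp [bernoulliWeight, (hb i).1, (hb i).2]
  sum_eq_one i := by simp [bernoulliWeight]

/-- The influence at `x` of the Boolean coordinate `i` on `F`: how much switching it changes `F`. -/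
def influence [DecidableEq ι] (F : (ι → Bool) → ℝ) (i : ι) (x : ι → Bool) : ℝ :=
  |F (Function.update x i true) - F (Function.update x i false)|

lemma exp_le_one_add_add_sq {z : ℝ} (hz : |z| ≤ 1) : Real.exp z ≤ 1 + z + z ^ 2 := by
  linarith [(abs_le.mp (Real.abs_exp_sub_one_sub_id_le hz)).2]

lemma bernoulli_centred_mgf_le {b y : ℝ} (hb : b ∈ Set.Icc 0 1) (hy : |y| ≤ 1) :
    b * Real.exp ((1 - b) * y) + (1 - b) * Real.exp (-b * y) ≤ Real.exp (b * y ^ 2) := by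
  obtain ⟨hb0, hb1⟩ := hb
  have hexp1 := exp_le_one_add_add_sq (z := (1 - b) * y) (by
    rw [abs_mul, abs_of_nonneg (sub_nonneg.mpr hb1)]; nlinarith [abs_nonneg y])
  have hexp0 := exp_le_one_add_add_sq (z := -b * y) (by
    rw [abs_mul, abs_neg, abs_of_nonneg hb0]; nlinarith [abs_nonneg y])
  calc b * Real.exp ((1 - b) * y) + (1 - b) * Real.exp (-b * y)
      ≤ b * (1 + (1 - b) * y + ((1 - b) * y) ^ 2) + (1 - b) * (1 + -b * y + (-b * y) ^ 2) :=
        add_le_add (mul_le_mul_of_nonneg_left hexp1 hb0)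
          (mul_le_mul_of_nonneg_left hexp0 (sub_nonneg.mpr hb1))
    _ = b * y ^ 2 - (b * y) ^ 2 + 1 := by ring
    _ ≤ b * y ^ 2 + 1 := by linarith [sq_nonneg (b * y)]
    _ ≤ Real.exp (b * y ^ 2) := Real.add_one_le_exp _

lemma bernoulli_mgf_le {b l g₁ g₀ d : ℝ} (hb : b ∈ Set.Icc 0 1) (hd : |g₁ - g₀| ≤ d)
    (hl : 0 ≤ l) (hld : l * d ≤ 1) :
    b * Real.exp (l * g₁) + (1 - b) * Real.exp (l * g₀) ≤
      Real.exp (l * (b * g₁ + (1 - b) * g₀) + l ^ 2 * (b * d ^ 2)) := by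
  set m := b * g₁ + (1 - b) * g₀ with hm
  have hy : |l * (g₁ - g₀)| ≤ l * d := by
    rw [abs_mul, abs_of_nonneg hl]
    exact mul_le_mul_of_nonneg_left hd hl
  have h1 : l * g₁ = l * m + (1 - b) * (l * (g₁ - g₀)) := by rw [hm]; ring
  have h0 : l * g₀ = l * m + -b * (l * (g₁ - g₀)) := by rw [hm]; ring
  calc b * Real.exp (l * g₁) + (1 - b) * Real.exp (l * g₀)
      = Real.exp (l * m) * (b * Real.exp ((1 - b) * (l * (g₁ - g₀))) +
          (1 - b) * Real.exp (-b * (l * (g₁ - g₀)))) := by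
        rw [h1, h0, Real.exp_add, Real.exp_add]; ring
    _ ≤ Real.exp (l * m) * Real.exp (b * (l * (g₁ - g₀)) ^ 2) := by
        gcongr; exact bernoulli_centred_mgf_le hb (hy.trans hld)
    _ ≤ Real.exp (l * m + l ^ 2 * (b * d ^ 2)) := by
        rw [← Real.exp_add, Real.exp_le_exp]
        have hsq : (l * (g₁ - g₀)) ^ 2 ≤ (l * d) ^ 2 := by
          rw [← sq_abs]; exact pow_le_pow_left₀ (abs_nonneg _) hy 2
        nlinarith [mul_le_mul_of_nonneg_left hsq hb.1]

variable [DecidableEq ι] [Fintype ι] {b : ι → ℝ} {F : (ι → Bool) → ℝ} {l : ℝ}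

lemma condExpect_compl_singleton_exp_le (hb : ∀ i, b i ∈ Set.Icc 0 1) (i : ι) {d : ℝ}
    (hd : ∀ x, influence F i x ≤ d) (hl : 0 ≤ l) (hld : l * d ≤ 1) (x : ι → Bool) :
    condExpect (bernoulliWeight b) {i}ᶜ (fun x => Real.exp (l * F x)) x ≤
      Real.exp (l ^ 2 * (b i * d ^ 2)) *
        Real.exp (l * condExpect (bernoulliWeight b) {i}ᶜ F x) := by
  have hμ := isProbWeight_bernoulliWeight hb
  simp only [hμ.condExpect_compl_singleton, Fintype.sum_bool, bernoulliWeight, if_true,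
    Bool.false_eq_true, if_false]
  refine (bernoulli_mgf_le (hb i) (hd x) hl hld).trans_eq ?_
  rw [Real.exp_add, mul_comm]

lemma influence_condExpect_le {μ : ι → Bool → ℝ} (hμ : IsProbWeight μ) {S : Set ι} {i : ι}
    (hi : i ∈ S) {d : ℝ} (hd : ∀ x, influence F i x ≤ d) (x : ι → Bool) :
    influence (condExpect μ S F) i x ≤ d := by
  classical
  have hupdate (y : ι → Bool) (a : Bool) :
      S.piecewise (Function.update x i a) y = Function.update (S.piecewise x y) i a := by
    ext j
    by_cases hj : j = i
    · subst hj; simp [hi]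
    · by_cases hjS : j ∈ S <;> simp [hj, hjS]
  simp only [influence, condExpect_def, ← expect_sub, hupdate]
  exact hμ.abs_expect_le fun y => hd _

lemma dependsOn_condExpect_compl_singleton {α : Type*} [Fintype α] {μ : ι → α → ℝ}
    {F : (ι → α) → ℝ} {i : ι} {S : Set ι} (hF : DependsOn F (insert i S)) :
    DependsOn (condExpect μ {i}ᶜ F) S := by
  classical
  intro x y hxy
  simp only [condExpect_def]
  congr 1 with z
  refine hF fun j hj => ?_
  rcases eq_or_ne j i with rfl | hji
  · simp
  · simp [hji, hxy j (hj.resolve_left hji)]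

lemma expect_exp_le (hb : ∀ i, b i ∈ Set.Icc 0 1) {S : Finset ι} (hF : DependsOn F S) {d : ι → ℝ}
    (hd : ∀ i ∈ S, ∀ x, influence F i x ≤ d i) (hl : 0 ≤ l) (hld : ∀ i ∈ S, l * d i ≤ 1) :
    expect (bernoulliWeight b) (fun x => Real.exp (l * F x)) ≤
      Real.exp (l * expect (bernoulliWeight b) F + l ^ 2 * ∑ i ∈ S, b i * d i ^ 2) := by
  have hμ := isProbWeight_bernoulliWeight hb
  induction S using Finset.induction_on generalizing F with
  | empty =>
    have hconst : F = fun _ => F fun _ => true :=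
      funext fun x => (by simpa using hF : DependsOn F ∅).empty x _
    rw [hconst]
    simp only [hμ.expect_const, Finset.sum_empty, mul_zero, add_zero, le_refl]
  | insert i S hi ih =>
    set G := condExpect (bernoulliWeight b) {i}ᶜ F with hG
    have hGF : expect (bernoulliWeight b) G = expect (bernoulliWeight b) F :=
      hμ.expect_condExpect _ F
    have hGd (j) (hj : j ∈ S) : ∀ x, influence G j x ≤ d j :=
      influence_condExpect_le hμ (by rintro rfl; exact hi hj)
        (hd j (Finset.mem_insert_of_mem hj))
    calc expect (bernoulliWeight b) (fun x => Real.exp (l * F x))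
        = expect (bernoulliWeight b)
            (condExpect (bernoulliWeight b) {i}ᶜ fun x => Real.exp (l * F x)) :=
          (hμ.expect_condExpect _ _).symm
      _ ≤ Real.exp (l ^ 2 * (b i * d i ^ 2)) *
            expect (bernoulliWeight b) (fun x => Real.exp (l * G x)) := by
          rw [← expect_const_mul]
          have hi' := Finset.mem_insert_self i S
          exact hμ.expect_mono (condExpect_compl_singleton_exp_le hb i (hd i hi') hl (hld i hi'))
      _ ≤ Real.exp (l ^ 2 * (b i * d i ^ 2)) *
            Real.exp (l * expect (bernoulliWeight b) G + l ^ 2 * ∑ i ∈ S, b i * d i ^ 2) := by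
          gcongr
          exact ih (dependsOn_condExpect_compl_singleton (by simpa using hF)) hGd
            fun j hj => hld j (Finset.mem_insert_of_mem hj)
      _ = Real.exp (l * expect (bernoulliWeight b) F +
            l ^ 2 * ∑ i ∈ insert i S, b i * d i ^ 2) := by
          rw [← Real.exp_add, hGF, Finset.sum_insert hi]; ring_nf

lemma condExpect_exp_le (hb : ∀ i, b i ∈ Set.Icc 0 1) (A : Finset ι)
    {d : (ι → Bool) → ι → ℝ} (hd : ∀ i ∉ A, ∀ x, influence F i x ≤ d x i)
    (hdA : ∀ i, DependsOn (d · i) (A : Set ι)) (hl : 0 ≤ l) (hld : ∀ x, ∀ i ∉ A, l * d x i ≤ 1)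
    (x : ι → Bool) :
    condExpect (bernoulliWeight b) A (fun x => Real.exp (l * F x)) x ≤
      Real.exp (l * condExpect (bernoulliWeight b) A F x + l ^ 2 * ∑ i ∈ Aᶜ, b i * d x i ^ 2) := by
  simp only [condExpect_def]
  refine expect_exp_le hb (F := fun y => F ((A : Set ι).piecewise x y)) (fun y z hyz => ?_)
    (fun i hi y => ?_) hl fun i hi => hld x i (Finset.mem_compl.mp hi)
  · change F _ = F _
    congr 1 with j
    by_cases hj : j ∈ A
    · simp [hj]
    · simp [hj, hyz j (by simpa using hj)]
  · have hiA : i ∉ A := Finset.mem_compl.mp hi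
    have hupdate (a : Bool) : (A : Set ι).piecewise x (Function.update y i a) =
        Function.update ((A : Set ι).piecewise x y) i a := by
      ext j
      by_cases hj : j = i
      · subst hj; simp [hiA]
      · by_cases hjA : j ∈ A <;> simp [hj, hjA]
    simp only [influence, hupdate]
    exact (hd i hiA _).trans_eq (hdA i fun j hj => Set.piecewise_eq_of_mem _ _ _ hj)

-- Exposing first the coordinates in `A` lets the bounds `dB` for the others depend on the outcome.
lemma expect_exp_le_two_phase (hb : ∀ i, b i ∈ Set.Icc 0 1) (A : Finset ι) {dA : ι → ℝ}
    {dB : (ι → Bool) → ι → ℝ} {VA VB : ℝ} (hdA : ∀ i ∈ A, ∀ x, influence F i x ≤ dA i)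
    (hdB : ∀ i ∉ A, ∀ x, influence F i x ≤ dB x i)
    (hdep : ∀ i, DependsOn (dB · i) (A : Set ι))
    (hVA : ∑ i ∈ A, b i * dA i ^ 2 ≤ VA) (hVB : ∀ x, ∑ i ∈ Aᶜ, b i * dB x i ^ 2 ≤ VB)
    (hl : 0 ≤ l) (hlA : ∀ i ∈ A, l * dA i ≤ 1) (hlB : ∀ x, ∀ i ∉ A, l * dB x i ≤ 1) :
    expect (bernoulliWeight b) (fun x => Real.exp (l * F x)) ≤
      Real.exp (l * expect (bernoulliWeight b) F + l ^ 2 * (VA + VB)) := by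
  have hμ := isProbWeight_bernoulliWeight hb
  set G := condExpect (bernoulliWeight b) A F with hG
  have hGA : DependsOn G A := by
    intro x y hxy
    simp only [hG, condExpect_def]
    congr 1 with z
    congr 1 with j
    by_cases hj : j ∈ A
    · simp [hj, hxy j hj]
    · simp [hj]
  calc expect (bernoulliWeight b) (fun x => Real.exp (l * F x))
      = expect (bernoulliWeight b)
          (condExpect (bernoulliWeight b) A fun x => Real.exp (l * F x)) :=
        (hμ.expect_condExpect _ _).symm
    _ ≤ Real.exp (l ^ 2 * VB) * expect (bernoulliWeight b) (fun x => Real.exp (l * G x)) := by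
        rw [← expect_const_mul]
        refine hμ.expect_mono fun x =>
          (condExpect_exp_le hb A hdB hdep hl hlB x).trans ?_
        rw [← Real.exp_add, Real.exp_le_exp, add_comm]
        gcongr
        exact hVB x
    _ ≤ Real.exp (l ^ 2 * VB) *
          Real.exp (l * expect (bernoulliWeight b) G + l ^ 2 * ∑ i ∈ A, b i * dA i ^ 2) := by
        gcongr
        exact expect_exp_le hb hGA (fun i hi => influence_condExpect_le hμ hi (hdA i hi)) hl hlA
    _ ≤ Real.exp (l * expect (bernoulliWeight b) F + l ^ 2 * (VA + VB)) := by
        rw [← Real.exp_add, Real.exp_le_exp, hG, hμ.expect_condExpect]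
        linarith [mul_le_mul_of_nonneg_left hVA (sq_nonneg l)]

lemma prob_expect_add_le {α : Type*} [Fintype α] {μ : ι → α → ℝ} (hμ : IsProbWeight μ)
    {F : (ι → α) → ℝ} {m v : ℝ} (hl : 0 ≤ l)
    (hF : expect μ (fun ω => Real.exp (l * F ω)) ≤ Real.exp (l * m + v)) (t : ℝ) :
    prob μ (fun ω => m + t ≤ F ω) ≤ Real.exp (v - l * t) := by
  refine (hμ.prob_le_exp_mul_expect_exp F hl _).trans
    ((mul_le_mul_of_nonneg_left hF (Real.exp_pos _).le).trans_eq ?_)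
  rw [← Real.exp_add]
  ring_nf

end BoundedDifferences

section LocalLemma

variable {ι α I : Type*} {A : I → (ι → α) → Prop} {S : I → Set ι} {N : I → Finset I}

lemma dependsOn_forall_mem_not (s : Finset I) (hA : ∀ i, DependsOn (A i) (S i)) :
    DependsOn (fun ω => ∀ j ∈ s, ¬A j ω) (⋃ j ∈ s, S j) := fun x y hxy =>
  propext <| forall₂_congr fun j hj => by
    rw [hA j fun k hk => hxy k (Set.mem_biUnion hj hk)]

variable [Fintype ι] [DecidableEq ι] [Fintype α] {μ : ι → α → ℝ}

lemma prob_forall_not_le_two_mul (hμ : IsProbWeight μ) {s₁ s₂ : Finset I}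
    (hs₁ : ∑ j ∈ s₁, prob μ (A j) ≤ 1 / 4)
    (hcond : ∀ j ∈ s₁, prob μ (fun ω => A j ω ∧ ∀ k ∈ s₂, ¬A k ω) ≤
      2 * prob μ (A j) * prob μ (fun ω => ∀ k ∈ s₂, ¬A k ω)) :
    prob μ (fun ω => ∀ j ∈ s₂, ¬A j ω) ≤
      2 * prob μ (fun ω => (¬∃ j ∈ s₁, A j ω) ∧ ∀ j ∈ s₂, ¬A j ω) := by
  have hsplit := prob_add_prob_not (μ := μ) (fun ω => ∃ j ∈ s₁, A j ω)
    fun ω => ∀ j ∈ s₂, ¬A j ω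
  have hhalf : prob μ (fun ω => (∃ j ∈ s₁, A j ω) ∧ ∀ j ∈ s₂, ¬A j ω) ≤
      1 / 2 * prob μ (fun ω => ∀ j ∈ s₂, ¬A j ω) := by
    calc prob μ (fun ω => (∃ j ∈ s₁, A j ω) ∧ ∀ j ∈ s₂, ¬A j ω)
        ≤ prob μ (fun ω => ∃ k ∈ s₁, A k ω ∧ ∀ j ∈ s₂, ¬A j ω) :=
          hμ.prob_mono fun ω ⟨⟨j, hj, hjA⟩, h₂⟩ => ⟨j, hj, hjA, h₂⟩
      _ ≤ ∑ k ∈ s₁, prob μ (fun ω => A k ω ∧ ∀ j ∈ s₂, ¬A j ω) := hμ.prob_exists_le _ _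
      _ ≤ ∑ k ∈ s₁, 2 * prob μ (A k) * prob μ (fun ω => ∀ j ∈ s₂, ¬A j ω) :=
          Finset.sum_le_sum hcond
      _ = 2 * (∑ k ∈ s₁, prob μ (A k)) * prob μ (fun ω => ∀ j ∈ s₂, ¬A j ω) := by
          rw [Finset.mul_sum, Finset.sum_mul]
      _ ≤ 1 / 2 * prob μ (fun ω => ∀ j ∈ s₂, ¬A j ω) :=
          mul_le_mul_of_nonneg_right (by linarith) (hμ.prob_nonneg _)
  linarith

lemma prob_and_forall_not_le (hμ : IsProbWeight μ) (hA : ∀ i, DependsOn (A i) (S i))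
    (hN : ∀ i, ∀ j ∉ N i, Disjoint (S i) (S j))
    (hsum : ∀ i, ∑ j ∈ N i, prob μ (A j) ≤ 1 / 4) (s : Finset I) (i : I) :
    prob μ (fun ω => A i ω ∧ ∀ j ∈ s, ¬A j ω) ≤
      2 * prob μ (A i) * prob μ (fun ω => ∀ j ∈ s, ¬A j ω) := by
  classical
  induction s using Finset.strongInduction generalizing i with
  | H s ih =>
  set s₁ := s.filter (· ∈ N i)
  set s₂ := s.filter (· ∉ N i) with hs₂
  have hindep : prob μ (fun ω => A i ω ∧ ∀ j ∈ s₂, ¬A j ω) =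
      prob μ (A i) * prob μ (fun ω => ∀ j ∈ s₂, ¬A j ω) :=
    hμ.prob_and_of_disjoint (hA i) (dependsOn_forall_mem_not s₂ hA)
      (Set.disjoint_iUnion₂_right.mpr fun j hj => hN i j (Finset.mem_filter.mp hj).2)
  have hdouble : prob μ (fun ω => ∀ j ∈ s₂, ¬A j ω) ≤
      2 * prob μ (fun ω => ∀ j ∈ s, ¬A j ω) := by
    rcases (Finset.filter_subset (· ∉ N i) s).eq_or_ssubset with heq | hssub
    · rw [hs₂, heq]
      linarith [hμ.prob_nonneg fun ω => ∀ j ∈ s, ¬A j ω]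
    · have hs₁sum : ∑ j ∈ s₁, prob μ (A j) ≤ 1 / 4 :=
        (Finset.sum_le_sum_of_subset_of_nonneg (fun j hj => (Finset.mem_filter.mp hj).2)
          fun j _ _ => hμ.prob_nonneg _).trans (hsum i)
      refine (prob_forall_not_le_two_mul hμ hs₁sum fun j _ => ih s₂ hssub j).trans
        (mul_le_mul_of_nonneg_left (hμ.prob_mono fun ω ⟨h₁, h₂⟩ j hj hjA => ?_) two_pos.le)
      by_cases hjN : j ∈ N i
      · exact h₁ ⟨j, Finset.mem_filter.mpr ⟨hj, hjN⟩, hjA⟩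
      · exact h₂ j (Finset.mem_filter.mpr ⟨hj, hjN⟩) hjA
  calc prob μ (fun ω => A i ω ∧ ∀ j ∈ s, ¬A j ω)
      ≤ prob μ (fun ω => A i ω ∧ ∀ j ∈ s₂, ¬A j ω) :=
        hμ.prob_mono fun ω hω => ⟨hω.1, fun j hj => hω.2 j (Finset.mem_of_mem_filter j hj)⟩
    _ ≤ prob μ (A i) * (2 * prob μ (fun ω => ∀ j ∈ s, ¬A j ω)) :=
        hindep.trans_le (mul_le_mul_of_nonneg_left hdouble (hμ.prob_nonneg _))
    _ = 2 * prob μ (A i) * prob μ (fun ω => ∀ j ∈ s, ¬A j ω) := by ring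

lemma prob_forall_not_pos (hμ : IsProbWeight μ) (hA : ∀ i, DependsOn (A i) (S i))
    (hmem : ∀ i, i ∈ N i) (hN : ∀ i, ∀ j ∉ N i, Disjoint (S i) (S j))
    (hsum : ∀ i, ∑ j ∈ N i, prob μ (A j) ≤ 1 / 4) (s : Finset I) :
    0 < prob μ (fun ω => ∀ j ∈ s, ¬A j ω) := by
  classical
  induction s using Finset.induction_on with
  | empty => simp [hμ.prob_eq_one]
  | insert i s _ ih =>
    have hquarter : prob μ (A i) ≤ 1 / 4 :=
      (Finset.single_le_sum (fun j _ => hμ.prob_nonneg (A j)) (hmem i)).trans (hsum i)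
    have hcond := prob_and_forall_not_le hμ hA hN hsum s i
    have hsplit := prob_add_prob_not (μ := μ) (A i) fun ω => ∀ j ∈ s, ¬A j ω
    simp only [Finset.forall_mem_insert]
    nlinarith

/-- The symmetric Lovász local lemma, where `N i` contains `i` and all events that are not
independent of the `i`-th one. -/
theorem exists_forall_not_of_sum_prob_le [Finite I] (hμ : IsProbWeight μ)
    (hA : ∀ i, DependsOn (A i) (S i)) (hmem : ∀ i, i ∈ N i)
    (hN : ∀ i, ∀ j ∉ N i, Disjoint (S i) (S j))
    (hsum : ∀ i, ∑ j ∈ N i, prob μ (A j) ≤ 1 / 4) :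
    ∃ ω, weight μ ω ≠ 0 ∧ ∀ i, ¬A i ω := by
  cases nonempty_fintype I
  simpa using exists_weight_ne_zero_of_prob_pos
    (prob_forall_not_pos hμ hA hmem hN hsum Finset.univ)

end LocalLemma

section FractionalLists

variable {V C : Type*}

/-- The weights `p e` on colours form a fractional list assignment of the edges of `G`: they
vanish off the edges, are probability vectors on them, are bounded by `P`, and load every colour
at every vertex by at most `W`. -/
structure IsFracLists [Fintype V] [Fintype C] (G : SimpleGraph V) (p : Sym2 V → C → ℝ)
    (P W : ℝ) : Prop where
  nonneg : ∀ e c, 0 ≤ p e c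
  eq_zero : ∀ e ∉ G.edgeSet, ∀ c, p e c = 0
  sum_eq_one : ∀ e ∈ G.edgeSet, ∑ c, p e c = 1
  le : ∀ e c, p e c ≤ P
  load_le : ∀ v c, ∑ w, p s(v, w) c ≤ W

/-- The edges of `G` can be properly coloured so that every edge `e` receives a colour in the
support of `p e`. -/
def IsSupportColourable (G : SimpleGraph V) (p : Sym2 V → C → ℝ) : Prop :=
  ∃ γ : Sym2 V → C, (∀ e ∈ G.edgeSet, p e (γ e) ≠ 0) ∧
    ∀ e ∈ G.edgeSet, ∀ f ∈ G.edgeSet, e ≠ f → (∃ v, v ∈ e ∧ v ∈ f) → γ e ≠ γ f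

lemma sum_filter_not_disjoint_pair_le {E : Type*} [Fintype E] {r : E → E → ℝ} {R : ℝ}
    (hr : ∀ e f, 0 ≤ r e f) (hR : ∀ e, ∑ f, r e f ≤ R) (hR' : ∀ f, ∑ e, r e f ≤ R) (e f : E)
    [DecidablePred fun x : E × E => ¬Disjoint ({e, f} : Set E) {x.1, x.2}] :
    ∑ x : E × E with ¬Disjoint ({e, f} : Set E) {x.1, x.2}, r x.1 x.2 ≤ 4 * R := by
  classical
  have hcard : (Finset.card {e, f} : ℝ) ≤ 2 := mod_cast Finset.card_le_two
  have hR0 : 0 ≤ R := (Finset.sum_nonneg fun f _ => hr e f).trans (hR e)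
  have hpair (g : E → ℝ) (hg : ∀ e, g e ≤ R) : ∑ e' ∈ {e, f}, g e' ≤ 2 * R :=
    (Finset.sum_le_card_nsmul _ _ R fun e _ => hg e).trans (by
      rw [nsmul_eq_mul]; exact mul_le_mul_of_nonneg_right hcard hR0)
  calc ∑ x : E × E with ¬Disjoint ({e, f} : Set E) {x.1, x.2}, r x.1 x.2
      ≤ ∑ x ∈ ({e, f} ×ˢ Finset.univ) ∪ (Finset.univ ×ˢ {e, f}), r x.1 x.2 := by
        refine Finset.sum_le_sum_of_subset_of_nonneg (fun x hx => ?_) fun x _ _ => hr _ _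
        obtain ⟨g, hg, hgx⟩ := Set.not_disjoint_iff.mp (Finset.mem_filter.mp hx).2
        simp only [Finset.mem_union, Finset.mem_product, Finset.mem_univ, and_true, true_and]
        rcases hgx with rfl | rfl
        · exact Or.inl (by simpa using hg)
        · exact Or.inr (by simpa using hg)
    _ ≤ ∑ x ∈ {e, f} ×ˢ Finset.univ, r x.1 x.2 + ∑ x ∈ Finset.univ ×ˢ {e, f}, r x.1 x.2 := by
        rw [← Finset.sum_union_inter]
        exact le_add_of_nonneg_right (Finset.sum_nonneg fun x _ => hr _ _)
    _ ≤ 4 * R := by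
        rw [Finset.sum_product, Finset.sum_product_right]
        linarith [hpair _ hR, hpair _ hR']

lemma sum_filter_mem_sym2 [Fintype V] [DecidableEq V] (v : V) (g : Sym2 V → ℝ) :
    ∑ e with v ∈ e, g e = ∑ w, g s(v, w) := by
  have himage : Finset.univ.filter (v ∈ ·) = Finset.univ.image fun w => s(v, w) := by
    ext e
    simp [Sym2.mem_iff_exists, eq_comm]
  rw [himage, Finset.sum_image fun w _ z _ h => Sym2.congr_right.mp h]

lemma prob_coord_eq_coord {ι : Type*} [Fintype ι] [DecidableEq ι] [Fintype C] {μ : ι → C → ℝ}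
    (hμ : IsProbWeight μ) {i j : ι} (hij : i ≠ j) :
    prob μ (fun ω => ω i = ω j) = ∑ c, μ i c * μ j c := by
  classical
  have hcoord (k : ι) (c : C) : expect μ (fun ω => if ω k = c then 1 else 0) = μ k c := by
    simp [hμ.expect_coord k fun a => if a = c then 1 else 0]
  have hdep (k : ι) (c : C) : DependsOn (fun ω : ι → C => if ω k = c then (1 : ℝ) else 0) {k} :=
    fun x y hxy => by simp only [hxy k rfl]
  calc prob μ (fun ω => ω i = ω j)
      = expect μ fun ω => ∑ c, (if ω i = c then 1 else 0) * (if ω j = c then 1 else 0) := by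
        simp [prob, eq_comm]
    _ = ∑ c, μ i c * μ j c := by
        rw [expect_sum]
        refine Finset.sum_congr rfl fun c _ => ?_
        rw [hμ.expect_mul (hdep i c) (hdep j c) (by simpa using hij), hcoord, hcoord]

namespace IsFracLists

variable [Fintype V] [Fintype C] {G : SimpleGraph V} {p : Sym2 V → C → ℝ} {P W : ℝ}

lemma sum_le_one (h : IsFracLists G p P W) (e : Sym2 V) : ∑ c, p e c ≤ 1 := by
  by_cases he : e ∈ G.edgeSet
  · exact (h.sum_eq_one e he).le
  · simp [h.eq_zero e he]

lemma le_one (h : IsFracLists G p P W) (e : Sym2 V) (c : C) : p e c ≤ 1 :=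
  (Finset.single_le_sum (fun c _ => h.nonneg e c) (Finset.mem_univ c)).trans (h.sum_le_one e)

lemma sum_incident_mul_le [DecidableEq V] [Nonempty C] (h : IsFracLists G p P W) (e : Sym2 V) :
    ∑ f with ∃ v, v ∈ e ∧ v ∈ f, ∑ c, p e c * p f c ≤ 2 * W := by
  induction e with | _ a b
  have hterm (f : Sym2 V) : 0 ≤ ∑ c, p s(a, b) c * p f c :=
    Finset.sum_nonneg fun c _ => mul_nonneg (h.nonneg _ c) (h.nonneg f c)
  have hW : 0 ≤ W := (Finset.sum_nonneg fun w _ => h.nonneg s(a, w) (Classical.arbitrary C)).trans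
    (h.load_le a _)
  have hat (v : V) : ∑ f with v ∈ f, ∑ c, p s(a, b) c * p f c ≤ W := by
    rw [sum_filter_mem_sym2, Finset.sum_comm]
    calc ∑ c, ∑ w, p s(a, b) c * p s(v, w) c
        ≤ ∑ c, p s(a, b) c * W := Finset.sum_le_sum fun c _ => by
          rw [← Finset.mul_sum]
          exact mul_le_mul_of_nonneg_left (h.load_le v c) (h.nonneg _ c)
      _ ≤ W := by
          rw [← Finset.sum_mul]
          exact mul_le_of_le_one_left hW (h.sum_le_one _)
  have hunion : Finset.univ.filter (fun f : Sym2 V => ∃ v, v ∈ s(a, b) ∧ v ∈ f) =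
      Finset.univ.filter (a ∈ ·) ∪ Finset.univ.filter (b ∈ ·) := by
    ext f
    simp
  rw [hunion]
  have hinter := Finset.sum_union_inter (s₁ := Finset.univ.filter (a ∈ ·))
    (s₂ := Finset.univ.filter (b ∈ ·)) (f := fun f => ∑ c, p s(a, b) c * p f c)
  have := Finset.sum_nonneg fun f
    (_ : f ∈ Finset.univ.filter (a ∈ ·) ∩ Finset.univ.filter (b ∈ ·)) => hterm f
  linarith [hat a, hat b]

lemma isProbWeight_ite [DecidablePred (· ∈ G.edgeSet)] [DecidableEq C]
    (h : IsFracLists G p P W) (c₀ : C) :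
    IsProbWeight fun e => if e ∈ G.edgeSet then p e else Pi.single c₀ 1 where
  nonneg e c := by
    split_ifs
    · exact h.nonneg e c
    · rw [Pi.single_apply]; positivity
  sum_eq_one e := by
    split_ifs with he
    · exact h.sum_eq_one e he
    · simp

/-- If the loads are small, independent random colours have no conflict with positive
probability. -/
lemma isSupportColourable_of_load_le [Nonempty C] (h : IsFracLists G p P W) (hW : W ≤ 1 / 32) :
    IsSupportColourable G p := by
  classical
  let μ (e : Sym2 V) : C → ℝ := if e ∈ G.edgeSet then p e else Pi.single (Classical.arbitrary C) 1
  have hμ : IsProbWeight μ := h.isProbWeight_ite _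
  let conflict (x : Sym2 V × Sym2 V) : Prop :=
    x.1 ∈ G.edgeSet ∧ x.2 ∈ G.edgeSet ∧ x.1 ≠ x.2 ∧ ∃ v, v ∈ x.1 ∧ v ∈ x.2
  let r (e f : Sym2 V) : ℝ := if ∃ v, v ∈ e ∧ v ∈ f then ∑ c, p e c * p f c else 0
  have hr (e f) : 0 ≤ r e f := by
    dsimp only [r]
    split_ifs
    exacts [Finset.sum_nonneg fun c _ => mul_nonneg (h.nonneg e c) (h.nonneg f c), le_rfl]
  have hr_symm (e f) : r e f = r f e := by simp only [r, and_comm, mul_comm]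
  have hprob (x : Sym2 V × Sym2 V) :
      prob μ (fun ω => conflict x ∧ ω x.1 = ω x.2) ≤ r x.1 x.2 := by
    by_cases hx : conflict x
    · obtain ⟨he, hf, hne, hv⟩ := id hx
      simp only [hx, true_and, prob_coord_eq_coord hμ hne, μ, r, he, hf, hv, if_true, le_refl]
    · simpa [hx, prob, hμ.expect_const] using hr x.1 x.2
  have hR (e) : ∑ f, r e f ≤ 2 * W := by
    simpa only [r, Finset.sum_filter] using h.sum_incident_mul_le e
  obtain ⟨γ, hγ, hproper⟩ := exists_forall_not_of_sum_prob_le hμ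
    (A := fun x ω => conflict x ∧ ω x.1 = ω x.2) (S := fun x => {x.1, x.2})
    (N := fun x => Finset.univ.filter fun y => ¬Disjoint ({x.1, x.2} : Set _) {y.1, y.2})
    (fun x ω ω' hω => by simp only [hω x.1 (by simp), hω x.2 (by simp)]) (fun x => by simp)
    (fun x y hy => by
      simpa only [Finset.mem_filter, Finset.mem_univ, true_and, not_not] using hy) fun x =>
      calc _ ≤ ∑ y : Sym2 V × Sym2 V with ¬Disjoint ({x.1, x.2} : Set _) {y.1, y.2}, r y.1 y.2 :=
            Finset.sum_le_sum fun y _ => hprob y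
        _ ≤ 4 * (2 * W) := sum_filter_not_disjoint_pair_le hr hR
            (fun f => by simpa only [hr_symm _ f] using hR f) _ _
        _ ≤ 1 / 4 := by linarith
  refine ⟨γ, fun e he h0 => hγ (Finset.prod_eq_zero (Finset.mem_univ e) (by simp [μ, he, h0])),
    fun e he f hf hef hv heq => hproper (e, f) ⟨⟨he, hf, hef, hv⟩, heq⟩⟩

end IsFracLists

end FractionalLists

lemma one_sub_sum_le_prod_one_sub {κ : Type*} (s : Finset κ) {f : κ → ℝ}
    (hf : ∀ k ∈ s, f k ∈ Set.Icc 0 1) : 1 - ∑ k ∈ s, f k ≤ ∏ k ∈ s, (1 - f k) := by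
  classical
  induction s using Finset.induction_on with
  | empty => simp
  | insert a s ha ih =>
    obtain ⟨⟨ha0, ha1⟩, hs⟩ := (Finset.forall_mem_insert _ _ _).mp hf
    have hsum : 0 ≤ ∑ k ∈ s, f k := Finset.sum_nonneg fun k hk => (hs k hk).1
    rw [Finset.sum_insert ha, Finset.prod_insert ha]
    nlinarith [mul_le_mul_of_nonneg_left (ih hs) (sub_nonneg.mpr ha1)]

lemma prod_one_sub_eq_zero_or_one {κ : Type*} (s : Finset κ) {f : κ → ℝ}
    (hf : ∀ k, f k = 0 ∨ f k = 1) : ∏ k ∈ s, (1 - f k) = 0 ∨ ∏ k ∈ s, (1 - f k) = 1 := by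
  by_cases h : ∃ k ∈ s, f k = 1
  · obtain ⟨k, hk, h1⟩ := h
    exact Or.inl (Finset.prod_eq_zero hk (by rw [h1, sub_self]))
  · push Not at h
    refine Or.inr (Finset.prod_eq_one fun k hk => ?_)
    rw [(hf k).resolve_right (h k hk), sub_zero]

lemma mem_Icc_of_eq_zero_or_one {x : ℝ} (hx : x = 0 ∨ x = 1) : x ∈ Set.Icc 0 1 := by
  rcases hx with rfl | rfl <;> simp

section Activation

variable {V C : Type*} {G : SimpleGraph V} {ω : Sym2 V × C → Bool} {v w z : V} {e : Sym2 V}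
  {c c' : C}

open scoped Classical in
/-- The indicator that the colour `c` is activated at the edge `e` of `G`. -/
noncomputable def active (G : SimpleGraph V) (ω : Sym2 V × C → Bool) (e : Sym2 V) (c : C) : ℝ :=
  if e ∈ G.edgeSet ∧ ω (e, c) = true then 1 else 0

lemma active_eq_zero_or_one : active G ω e c = 0 ∨ active G ω e c = 1 := by
  unfold active
  split_ifs <;> simp

lemma active_mem_Icc : active G ω e c ∈ Set.Icc 0 1 :=
  mem_Icc_of_eq_zero_or_one active_eq_zero_or_one

lemma dependsOn_active (e : Sym2 V) (c : C) :
    DependsOn (fun ω => active G ω e c) {i | i.1 ∈ G.edgeSet ∧ i = (e, c)} := by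
  intro x y hxy
  by_cases he : e ∈ G.edgeSet
  · simp only [active]
    rw [hxy (e, c) ⟨he, rfl⟩]
  · simp [active, he]

/-- The coordinates with colour `c` at the edges at `v` other than `s(v, w)`. -/
def star (G : SimpleGraph V) (v w : V) (c : C) : Set (Sym2 V × C) :=
  {i | ∃ z ≠ w, G.Adj v z ∧ i = (s(v, z), c)}

lemma star_subset (v w : V) (c : C) : star G v w c ⊆ {i | i.1 ∈ G.edgeSet ∧ i.2 = c ∧ v ∈ i.1} := by
  rintro _ ⟨z, -, hvz, rfl⟩
  exact ⟨hvz, rfl, Sym2.mem_mk_left v z⟩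

lemma disjoint_star_swap (hvw : v ≠ w) : Disjoint (star G v w c) (star G w v c') := by
  rw [Set.disjoint_left]
  rintro _ ⟨z, hz, -, rfl⟩ ⟨z', -, -, h⟩
  rcases Sym2.eq_iff.mp (Prod.mk.inj h).1 with ⟨rfl, -⟩ | ⟨-, rfl⟩
  exacts [hvw rfl, hz rfl]

lemma disjoint_star_of_ne (hc : c ≠ c') : Disjoint (star G v w c) (star G v w c') := by
  rw [Set.disjoint_left]
  rintro _ ⟨z, -, -, rfl⟩ ⟨z', -, -, h⟩
  exact hc (Prod.mk.inj h).2

lemma disjoint_edge_star : Disjoint {i : Sym2 V × C | i.1 = s(v, w)} (star G w v c) := by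
  rw [Set.disjoint_left]
  rintro _ hi ⟨z, hz, -, rfl⟩
  exact hz (Sym2.congr_right.mp (hi.trans Sym2.eq_swap))

section Unblocked

variable [Fintype V] [DecidableEq V]

/-- The indicator that `c` is activated at no edge at `v` other than `s(v, w)`. -/
noncomputable def unblocked (G : SimpleGraph V) (ω : Sym2 V × C → Bool) (v w : V) (c : C) : ℝ :=
  ∏ z ∈ Finset.univ.erase w, (1 - active G ω s(v, z) c)

lemma unblocked_eq_zero_or_one : unblocked G ω v w c = 0 ∨ unblocked G ω v w c = 1 :=
  prod_one_sub_eq_zero_or_one _ fun _ => active_eq_zero_or_one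

lemma unblocked_mem_Icc : unblocked G ω v w c ∈ Set.Icc 0 1 :=
  mem_Icc_of_eq_zero_or_one unblocked_eq_zero_or_one

lemma active_eq_zero_of_unblocked (h : unblocked G ω v w c = 1) (hz : z ≠ w) :
    active G ω s(v, z) c = 0 := by
  refine active_eq_zero_or_one.resolve_right fun h1 => zero_ne_one (α := ℝ) (Eq.trans ?_ h)
  exact (Finset.prod_eq_zero (Finset.mem_erase.mpr ⟨hz, Finset.mem_univ z⟩) (by rw [h1, sub_self]))
    |>.symm

lemma dependsOn_unblocked (v w : V) (c : C) :
    DependsOn (fun ω => unblocked G ω v w c) (star G v w c) := fun _ _ hxy =>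
  Finset.prod_congr rfl fun z hz => congrArg (1 - ·) <| dependsOn_active s(v, z) c
    fun _ hi => hxy _ ⟨z, Finset.ne_of_mem_erase hz, by simpa [hi.2] using hi.1, hi.2⟩

end Unblocked

section Sole

variable [Fintype C] [DecidableEq C]

/-- The indicator that `c` is the only colour activated at `e`. -/
noncomputable def sole (G : SimpleGraph V) (ω : Sym2 V × C → Bool) (e : Sym2 V) (c : C) : ℝ :=
  active G ω e c * ∏ c' ∈ Finset.univ.erase c, (1 - active G ω e c')

lemma sole_eq_zero_or_one : sole G ω e c = 0 ∨ sole G ω e c = 1 := by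
  rcases active_eq_zero_or_one (G := G) (ω := ω) (e := e) (c := c) with h | h
  · simp [sole, h]
  · simpa [sole, h] using prod_one_sub_eq_zero_or_one (Finset.univ.erase c)
      fun c' => active_eq_zero_or_one (G := G) (ω := ω) (e := e) (c := c')

lemma sole_nonneg : 0 ≤ sole G ω e c :=
  (mem_Icc_of_eq_zero_or_one sole_eq_zero_or_one).1

lemma active_eq_one_of_sole (h : sole G ω e c = 1) : active G ω e c = 1 :=
  active_eq_zero_or_one.resolve_left fun h0 => by simp [sole, h0] at h

lemma active_eq_zero_of_sole (h : sole G ω e c = 1) (hc : c' ≠ c) : active G ω e c' = 0 := by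
  refine active_eq_zero_or_one.resolve_right fun h1 => zero_ne_one (α := ℝ) (Eq.trans ?_ h)
  rw [sole, Finset.prod_eq_zero (Finset.mem_erase.mpr ⟨hc, Finset.mem_univ c'⟩)
    (by rw [h1, sub_self]), mul_zero]

lemma sum_sole_mul_eq (h : sole G ω e c = 1) (g : C → ℝ) : ∑ c, sole G ω e c * g c = g c := by
  rw [Finset.sum_eq_single c (fun c' _ hc => ?_) (by simp), h, one_mul]
  rw [sole, active_eq_zero_of_sole h hc, zero_mul, zero_mul]

lemma sole_eq_one_or_forall_eq_zero (ω : Sym2 V × C → Bool) (e : Sym2 V) :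
    (∃ c, sole G ω e c = 1) ∨ ∀ c, sole G ω e c = 0 :=
  or_iff_not_imp_left.mpr fun h c => sole_eq_zero_or_one.resolve_right fun hc => h ⟨c, hc⟩

lemma sum_sole_mul_mem_Icc {g : C → ℝ} (hg : ∀ c, g c ∈ Set.Icc 0 1) :
    ∑ c, sole G ω e c * g c ∈ Set.Icc 0 1 := by
  obtain ⟨c, hc⟩ | h := sole_eq_one_or_forall_eq_zero (G := G) ω e
  · rw [sum_sole_mul_eq hc]
    exact hg c
  · simp [h]

lemma dependsOn_sole (e : Sym2 V) (c : C) :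
    DependsOn (fun ω => sole G ω e c) {i | i.1 ∈ G.edgeSet ∧ i.1 = e} := by
  have hactive (c' : C) : DependsOn (fun ω => active G ω e c') {i | i.1 ∈ G.edgeSet ∧ i.1 = e} :=
    (dependsOn_active e c').mono fun i hi => ⟨hi.1, by rw [hi.2]⟩
  exact fun _ _ hxy => congrArg₂ (· * ·) (hactive c hxy)
    (Finset.prod_congr rfl fun c' _ => congrArg (1 - ·) (hactive c' hxy))

lemma ite_add_sole_mem_Icc :
    (if c' = c then 1 else 0) + sole G ω e c' ∈ Set.Icc (0 : ℝ) 2 := by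
  have hsole := mem_Icc_of_eq_zero_or_one (sole_eq_zero_or_one (G := G) (ω := ω) (e := e) (c := c'))
  constructor <;> split_ifs <;> linarith [hsole.1, hsole.2]

end Sole

end Activation

section Round

variable {V C : Type*} [Fintype V] [Fintype C] {G : SimpleGraph V} {p : Sym2 V → C → ℝ}
  {P W ε : ℝ} {v w : V} {c : C}

/-- Fractional lists to which one round of random colouring with activation rate `ε` applies. -/
structure IsRoundInput (G : SimpleGraph V) (p : Sym2 V → C → ℝ) (P W ε : ℝ) : Prop
    extends IsFracLists G p P W where
  rate_nonneg : 0 ≤ ε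
  rate_le : ε ≤ 1 / 8
  load_le_one : W ≤ 1

/-- In one round, every colour `c` is activated at every edge `e` independently with probability
`ε * p e c`. -/
noncomputable def activationLaw (p : Sym2 V → C → ℝ) (ε : ℝ) : Sym2 V × C → Bool → ℝ :=
  bernoulliWeight fun i => ε * p i.1 i.2

/-- The probability that `c` is activated at no edge at `v` other than `s(v, w)`. -/
noncomputable def unblockedProb [DecidableEq V] (p : Sym2 V → C → ℝ) (ε : ℝ) (v w : V) (c : C) :
    ℝ :=
  ∏ z ∈ Finset.univ.erase w, (1 - ε * p s(v, z) c)

/-- The weight of `c` at `s(v, w)`, rescaled so that its expectation is `p s(v, w) c` again once it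
is set to zero whenever `c` is blocked at `v` or at `w`. -/
noncomputable def rescaled [DecidableEq V] (p : Sym2 V → C → ℝ) (ε : ℝ) (v w : V) (c : C) : ℝ :=
  p s(v, w) c / (unblockedProb p ε v w c * unblockedProb p ε w v c)

/-- The total weight remaining at `s(v, w)` after the round, before normalization. -/
noncomputable def remaining [DecidableEq V] (G : SimpleGraph V) (p : Sym2 V → C → ℝ) (ε : ℝ)
    (ω : Sym2 V × C → Bool) (v w : V) : ℝ :=
  ∑ c, rescaled p ε v w c * (unblocked G ω v w c * unblocked G ω w v c)

/-- The indicator that `c` is unblocked at `w`, dropped if `s(v, w)` has a sole activated colour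
and that colour is unblocked at `w`. -/
noncomputable def survival [DecidableEq V] [DecidableEq C] (G : SimpleGraph V)
    (ω : Sym2 V × C → Bool) (v w : V) (c : C) : ℝ :=
  unblocked G ω w v c * (1 - ∑ c', sole G ω s(v, w) c' * unblocked G ω w v c')

/-- The main part of the load of `c` at `v` after the round: what happens at `v` itself is
ignored. -/
noncomputable def mainLoad [DecidableEq V] [DecidableEq C] (G : SimpleGraph V)
    (p : Sym2 V → C → ℝ) (ε : ℝ) (ω : Sym2 V × C → Bool) (v : V) (c : C) : ℝ :=
  ∑ w, rescaled p ε v w c * survival G ω v w c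

namespace IsRoundInput

lemma activation_mem_Icc (h : IsRoundInput G p P W ε) (e : Sym2 V) (c : C) :
    ε * p e c ∈ Set.Icc 0 1 :=
  ⟨mul_nonneg h.rate_nonneg (h.nonneg e c),
    mul_le_one₀ (by linarith [h.rate_le]) (h.nonneg e c) (h.le_one e c)⟩

lemma isProbWeight (h : IsRoundInput G p P W ε) : IsProbWeight (activationLaw p ε) :=
  isProbWeight_bernoulliWeight fun i => h.activation_mem_Icc i.1 i.2

lemma rate_mul_load_le (h : IsRoundInput G p P W ε) : ε * W ≤ ε :=
  mul_le_of_le_one_right h.rate_nonneg h.load_le_one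

variable [DecidableEq V]

lemma one_sub_mul_load_le_unblockedProb (h : IsRoundInput G p P W ε) (v w : V) (c : C) :
    1 - ε * W ≤ unblockedProb p ε v w c := by
  refine le_trans ?_
    (one_sub_sum_le_prod_one_sub _ fun z _ => h.activation_mem_Icc s(v, z) c)
  rw [← Finset.mul_sum]
  have herase := Finset.sum_le_sum_of_subset_of_nonneg (Finset.erase_subset w Finset.univ)
    fun z _ _ => h.nonneg s(v, z) c
  exact sub_le_sub_left (mul_le_mul_of_nonneg_left (herase.trans (h.load_le v c)) h.rate_nonneg) _

lemma one_sub_rate_le_unblockedProb (h : IsRoundInput G p P W ε) (v w : V) (c : C) :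
    1 - ε ≤ unblockedProb p ε v w c := by
  linarith [h.one_sub_mul_load_le_unblockedProb v w c, h.rate_mul_load_le]

lemma unblockedProb_pos (h : IsRoundInput G p P W ε) (v w : V) (c : C) :
    0 < unblockedProb p ε v w c := by
  linarith [h.one_sub_rate_le_unblockedProb v w c, h.rate_le]

lemma half_le_unblockedProb_mul (h : IsRoundInput G p P W ε) (v w : V) (c : C) :
    1 / 2 ≤ unblockedProb p ε v w c * unblockedProb p ε w v c := by
  nlinarith [h.one_sub_rate_le_unblockedProb v w c, h.one_sub_rate_le_unblockedProb w v c,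
    h.rate_le]

lemma rescaled_nonneg (h : IsRoundInput G p P W ε) (v w : V) (c : C) : 0 ≤ rescaled p ε v w c :=
  div_nonneg (h.nonneg _ _) (by linarith [h.half_le_unblockedProb_mul v w c])

lemma rescaled_le (h : IsRoundInput G p P W ε) (v w : V) (c : C) :
    rescaled p ε v w c ≤ 2 * p s(v, w) c := by
  have hq := h.half_le_unblockedProb_mul v w c
  rw [rescaled, div_le_iff₀ (by linarith)]
  nlinarith [h.nonneg s(v, w) c]

lemma sum_rescaled_le (h : IsRoundInput G p P W ε) (v : V) (c : C) :
    ∑ w, rescaled p ε v w c ≤ 2 * W := by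
  refine (Finset.sum_le_sum fun w _ => h.rescaled_le v w c).trans ?_
  rw [← Finset.mul_sum]
  linarith [h.load_le v c]

variable [DecidableEq C]

lemma expect_active_comp (h : IsRoundInput G p P W ε) (e : Sym2 V) (c : C) (g : ℝ → ℝ) :
    expect (activationLaw p ε) (fun ω => g (active G ω e c)) =
      ε * p e c * g 1 + (1 - ε * p e c) * g 0 := by
  by_cases he : e ∈ G.edgeSet
  · have hcoord := h.isProbWeight.expect_coord (e, c) fun a => g (if a = true then 1 else 0)
    simpa [active, he, activationLaw, bernoulliWeight] using hcoord
  · simp [active, he, h.eq_zero e he, h.isProbWeight.expect_const]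

lemma expect_prod_one_sub_active (h : IsRoundInput G p P W ε) {κ : Type*} (s : Finset κ)
    {i : κ → Sym2 V × C} (hi : Function.Injective i) :
    expect (activationLaw p ε) (fun ω => ∏ k ∈ s, (1 - active G ω (i k).1 (i k).2)) =
      ∏ k ∈ s, (1 - ε * p (i k).1 (i k).2) := by
  rw [h.isProbWeight.expect_finset_prod s (fun k ω => 1 - active G ω (i k).1 (i k).2)
    (fun k => {i k})]
  · refine Finset.prod_congr rfl fun k _ => ?_
    rw [h.expect_active_comp _ _ fun x => 1 - x]
    ring
  · exact fun k _ _ hxy => congrArg (1 - ·) ((dependsOn_active _ _).mono (by simp) hxy)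
  · exact fun k _ l _ hkl => Set.disjoint_singleton.mpr (hi.ne hkl)

lemma expect_unblocked (h : IsRoundInput G p P W ε) (v w : V) (c : C) :
    expect (activationLaw p ε) (fun ω => unblocked G ω v w c) = unblockedProb p ε v w c :=
  h.expect_prod_one_sub_active _ (i := fun z => (s(v, z), c))
    fun _ _ hz => Sym2.congr_right.mp (Prod.mk.inj hz).1

lemma expect_remaining (h : IsRoundInput G p P W ε) (hvw : G.Adj v w) :
    expect (activationLaw p ε) (fun ω => remaining G p ε ω v w) = 1 := by
  simp only [remaining]
  rw [expect_sum, ← h.sum_eq_one s(v, w) hvw]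
  refine Finset.sum_congr rfl fun c _ => ?_
  rw [expect_const_mul, h.isProbWeight.expect_mul (dependsOn_unblocked v w c)
    (dependsOn_unblocked w v c) (disjoint_star_swap hvw.ne), h.expect_unblocked,
    h.expect_unblocked, rescaled]
  exact div_mul_cancel₀ _ (by linarith [h.half_le_unblockedProb_mul v w c])

lemma le_expect_sole (h : IsRoundInput G p P W ε) (e : Sym2 V) (c : C) :
    ε * p e c * (1 - ε) ≤ expect (activationLaw p ε) (fun ω => sole G ω e c) := by
  have hothers : DependsOn (fun ω => ∏ c' ∈ Finset.univ.erase c, (1 - active G ω e c'))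
      {i | i.1 = e ∧ i.2 ≠ c} := fun _ _ hxy =>
    Finset.prod_congr rfl fun c' hc' => congrArg (1 - ·) <| dependsOn_active e c'
      fun _ hi => hxy _ (by simpa [hi.2] using hc')
  simp only [sole]
  rw [h.isProbWeight.expect_mul (dependsOn_active e c) hothers
      (Set.disjoint_left.mpr fun i hi hi' => hi'.2 (by rw [hi.2])),
    h.expect_active_comp e c fun x => x,
    h.expect_prod_one_sub_active _ (i := fun c' => (e, c')) fun _ _ hc => (Prod.mk.inj hc).2,
    mul_one, mul_zero, add_zero]
  refine mul_le_mul_of_nonneg_left ?_ (h.activation_mem_Icc e c).1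
  refine le_trans ?_ (one_sub_sum_le_prod_one_sub _ fun c' _ => h.activation_mem_Icc e c')
  rw [← Finset.mul_sum]
  have herase := Finset.sum_le_sum_of_subset_of_nonneg (Finset.erase_subset c Finset.univ)
    fun c' _ _ => h.nonneg e c'
  exact sub_le_sub_left (mul_le_of_le_one_right h.rate_nonneg
    (herase.trans (h.sum_le_one e))) _

lemma le_expect_unblocked_mul_unblocked (h : IsRoundInput G p P W ε) (v w : V) (c c' : C) :
    unblockedProb p ε v w c * (1 - ε) ≤
      expect (activationLaw p ε) (fun ω => unblocked G ω v w c * unblocked G ω v w c') := by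
  have hq := h.unblockedProb_pos v w c
  rcases eq_or_ne c c' with rfl | hc
  · have hidem (ω : Sym2 V × C → Bool) :
        unblocked G ω v w c * unblocked G ω v w c = unblocked G ω v w c := by
      rcases unblocked_eq_zero_or_one (G := G) (ω := ω) (v := v) (w := w) (c := c) with h | h <;>
        simp [h]
    simp only [hidem, h.expect_unblocked]
    exact mul_le_of_le_one_right hq.le (by linarith [h.rate_nonneg])
  · rw [h.isProbWeight.expect_mul (dependsOn_unblocked v w c) (dependsOn_unblocked v w c')
      (disjoint_star_of_ne hc), h.expect_unblocked, h.expect_unblocked]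
    exact mul_le_mul_of_nonneg_left (h.one_sub_rate_le_unblockedProb v w c') hq.le

lemma expect_survival_le (h : IsRoundInput G p P W ε) (hvw : G.Adj v w) (c : C) :
    expect (activationLaw p ε) (fun ω => survival G ω v w c) ≤
      unblockedProb p ε w v c * (1 - ε * (1 - ε) ^ 2) := by
  set q := unblockedProb p ε w v c
  have hq : 0 < q := h.unblockedProb_pos w v c
  have hterm (c' : C) : ε * p s(v, w) c' * (1 - ε) * (q * (1 - ε)) ≤
      expect (activationLaw p ε)
        (fun ω => sole G ω s(v, w) c' * (unblocked G ω w v c * unblocked G ω w v c')) := by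
    have hdep : DependsOn (fun ω => unblocked G ω w v c * unblocked G ω w v c')
        (star G w v c ∪ star G w v c') := fun _ _ hxy =>
      congrArg₂ (· * ·) (dependsOn_unblocked w v c fun i hi => hxy i (Or.inl hi))
        (dependsOn_unblocked w v c' fun i hi => hxy i (Or.inr hi))
    rw [h.isProbWeight.expect_mul ((dependsOn_sole s(v, w) c').mono fun i hi => hi.2) hdep
      (Set.disjoint_union_right.mpr ⟨disjoint_edge_star, disjoint_edge_star⟩)]
    exact mul_le_mul (h.le_expect_sole s(v, w) c') (h.le_expect_unblocked_mul_unblocked w v c c')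
      (mul_nonneg hq.le (by linarith [h.rate_le]))
      (h.isProbWeight.expect_nonneg fun ω => sole_nonneg)
  calc expect (activationLaw p ε) (fun ω => survival G ω v w c)
      = q - ∑ c', expect (activationLaw p ε)
          (fun ω => sole G ω s(v, w) c' * (unblocked G ω w v c * unblocked G ω w v c')) := by
        simp only [survival, mul_sub, mul_one, Finset.mul_sum, mul_left_comm (unblocked G _ w v c)]
        rw [expect_sub, expect_sum, h.expect_unblocked]
    _ ≤ q - ∑ c', ε * p s(v, w) c' * (1 - ε) * (q * (1 - ε)) :=
        sub_le_sub_left (Finset.sum_le_sum fun c' _ => hterm c') _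
    _ = q * (1 - ε * (1 - ε) ^ 2) := by
        rw [← Finset.sum_mul, ← Finset.sum_mul, ← Finset.mul_sum, h.sum_eq_one s(v, w) hvw]
        ring

lemma expect_mainLoad_le (h : IsRoundInput G p P W ε) (v : V) (c : C) :
    expect (activationLaw p ε) (fun ω => mainLoad G p ε ω v c) ≤
      W * (1 - ε * (1 - ε) ^ 2) / (1 - ε * W) := by
  have hden : 0 < 1 - ε * W := by linarith [h.rate_mul_load_le, h.rate_le]
  have hnum : 0 ≤ 1 - ε * (1 - ε) ^ 2 := by nlinarith [h.rate_le, h.rate_nonneg]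
  have hterm (w : V) : rescaled p ε v w c * expect (activationLaw p ε)
      (fun ω => survival G ω v w c) ≤
        p s(v, w) c * ((1 - ε * (1 - ε) ^ 2) / (1 - ε * W)) := by
    by_cases hvw : G.Adj v w
    · have hq := h.unblockedProb_pos v w c
      have hq' := h.unblockedProb_pos w v c
      calc rescaled p ε v w c * expect (activationLaw p ε) (fun ω => survival G ω v w c)
          ≤ rescaled p ε v w c * (unblockedProb p ε w v c * (1 - ε * (1 - ε) ^ 2)) :=
            mul_le_mul_of_nonneg_left (h.expect_survival_le hvw c) (h.rescaled_nonneg v w c)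
        _ = p s(v, w) c * ((1 - ε * (1 - ε) ^ 2) / unblockedProb p ε v w c) := by
            rw [rescaled]
            field_simp
        _ ≤ p s(v, w) c * ((1 - ε * (1 - ε) ^ 2) / (1 - ε * W)) :=
            mul_le_mul_of_nonneg_left (div_le_div_of_nonneg_left hnum hden
              (h.one_sub_mul_load_le_unblockedProb v w c)) (h.nonneg _ _)
    · simp [rescaled, h.eq_zero s(v, w) hvw]
  simp only [mainLoad]
  rw [expect_sum]
  simp only [expect_const_mul]
  refine (Finset.sum_le_sum fun w _ => hterm w).trans ?_
  rw [← Finset.sum_mul, mul_div_assoc]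
  exact mul_le_mul_of_nonneg_right (h.load_le v c) (div_nonneg hnum hden.le)

end IsRoundInput

end Round

section Influence

variable {ι : Type*} [DecidableEq ι] {F : (ι → Bool) → ℝ} {i : ι} {x : ι → Bool}

lemma apply_update_eq_of_dependsOn {β : Type*} {F : (ι → Bool) → β} {S : Set ι}
    (hF : DependsOn F S) (hi : i ∉ S) (a : Bool) : F (Function.update x i a) = F x :=
  hF fun _ hj => Function.update_of_ne (ne_of_mem_of_not_mem hj hi) a x

lemma influence_eq_zero {S : Set ι} (hF : DependsOn F S) (hi : i ∉ S) : influence F i x = 0 := by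
  rw [influence, apply_update_eq_of_dependsOn hF hi, apply_update_eq_of_dependsOn hF hi, sub_self,
    abs_zero]

lemma influence_le_one (hF : ∀ x, F x ∈ Set.Icc 0 1) : influence F i x ≤ 1 := by
  rw [influence, abs_sub_le_iff]
  constructor <;> linarith [(hF (Function.update x i true)).1, (hF (Function.update x i true)).2,
    (hF (Function.update x i false)).1, (hF (Function.update x i false)).2]

lemma influence_neg : influence (fun x => -F x) i x = influence F i x := by
  rw [influence, influence, neg_sub_neg, abs_sub_comm]

lemma influence_sum_mul_le {κ : Type*} (s : Finset κ) {a : κ → ℝ} (ha : ∀ k ∈ s, 0 ≤ a k)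
    (f : κ → (ι → Bool) → ℝ) :
    influence (fun x => ∑ k ∈ s, a k * f k x) i x ≤ ∑ k ∈ s, a k * influence (f k) i x := by
  simp only [influence]
  rw [← Finset.sum_sub_distrib]
  refine (Finset.abs_sum_le_sum_abs _ _).trans (Finset.sum_le_sum fun k hk => ?_)
  rw [← mul_sub, abs_mul, abs_of_nonneg (ha k hk)]

end Influence

lemma sum_filter_mem_fst {V C : Type*} [Fintype V] [DecidableEq V] [Fintype C] (v : V)
    (g : Sym2 V × C → ℝ) : ∑ i : Sym2 V × C with v ∈ i.1, g i = ∑ c, ∑ w, g (s(v, w), c) := by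
  rw [Finset.sum_filter, Fintype.sum_prod_type_right]
  refine Finset.sum_congr rfl fun c _ => ?_
  rw [← Finset.sum_filter, sum_filter_mem_sym2 v fun e => g (e, c)]

lemma sum_filter_pair_eq {V : Type*} [Fintype V] [DecidableEq V] (v w : V) (f : V → ℝ) :
    ∑ z with s(v, w) = s(v, z), f z = f w := by
  simp only [Sym2.congr_right, Finset.filter_eq, Finset.mem_univ, if_true, Finset.sum_singleton]

section RemainingTail

variable {V C : Type*} [Fintype V] [DecidableEq V] {G : SimpleGraph V} {v w : V} {c : C}

lemma dependsOn_unblocked_mul (v w : V) (c : C) :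
    DependsOn (fun ω => unblocked G ω v w c * unblocked G ω w v c)
      {i | i.1 ∈ G.edgeSet ∧ i.2 = c ∧ (v ∈ i.1 ∨ w ∈ i.1)} := by
  refine fun x y hxy => congrArg₂ (· * ·) (dependsOn_unblocked v w c fun i hi => hxy i ?_)
    (dependsOn_unblocked w v c fun i hi => hxy i ?_)
  exacts [(star_subset v w c hi).imp_right (And.imp_right Or.inl),
    (star_subset w v c hi).imp_right (And.imp_right Or.inr)]

variable [Fintype C] {p : Sym2 V → C → ℝ} {P W ε : ℝ}

lemma dependsOn_remaining (v w : V) :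
    DependsOn (fun ω => remaining G p ε ω v w) {i | i.1 ∈ G.edgeSet ∧ (v ∈ i.1 ∨ w ∈ i.1)} :=
  fun _ _ hxy =>
  Finset.sum_congr rfl fun c _ => congrArg (rescaled p ε v w c * ·) <|
    dependsOn_unblocked_mul v w c fun i hi => hxy i ⟨hi.1, hi.2.2⟩

namespace IsRoundInput

lemma sum_incident_activation_mul_le (h : IsRoundInput G p P W ε) (v : V) {g : C → ℝ}
    (hg : ∀ c, 0 ≤ g c) :
    ∑ i : Sym2 V × C with v ∈ i.1, ε * p i.1 i.2 * g i.2 ≤ 1 / 8 * ∑ c, g c := by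
  rw [sum_filter_mem_fst v fun i => ε * p i.1 i.2 * g i.2, Finset.mul_sum]
  refine Finset.sum_le_sum fun c _ => ?_
  dsimp only
  rw [← Finset.sum_mul, ← Finset.mul_sum]
  refine mul_le_mul_of_nonneg_right ?_ (hg c)
  linarith [mul_le_mul_of_nonneg_left (h.load_le v c) h.rate_nonneg, h.rate_mul_load_le, h.rate_le]

lemma sum_rescaled_sq_le (h : IsRoundInput G p P W ε) (hP : 0 ≤ P) (v w : V) :
    ∑ c, rescaled p ε v w c ^ 2 ≤ 4 * P := by
  have hterm (c : C) : rescaled p ε v w c ^ 2 ≤ 4 * P * p s(v, w) c := by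
    nlinarith [h.rescaled_nonneg v w c, h.rescaled_le v w c, h.le s(v, w) c, h.nonneg s(v, w) c]
  refine (Finset.sum_le_sum fun c _ => hterm c).trans ?_
  rw [← Finset.mul_sum]
  exact mul_le_of_le_one_right (by linarith) (h.sum_le_one _)

lemma remaining_variance_le (h : IsRoundInput G p P W ε) (hP : 0 ≤ P) (v w : V) :
    ∑ i : Sym2 V × C with v ∈ i.1 ∨ w ∈ i.1, ε * p i.1 i.2 * rescaled p ε v w i.2 ^ 2 ≤ P := by
  classical
  have hterm (i : Sym2 V × C) : 0 ≤ ε * p i.1 i.2 * rescaled p ε v w i.2 ^ 2 :=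
    mul_nonneg (h.activation_mem_Icc i.1 i.2).1 (sq_nonneg _)
  have hunion : ∑ i : Sym2 V × C with v ∈ i.1 ∨ w ∈ i.1, ε * p i.1 i.2 * rescaled p ε v w i.2 ^ 2 ≤
      ∑ i : Sym2 V × C with v ∈ i.1, ε * p i.1 i.2 * rescaled p ε v w i.2 ^ 2 +
        ∑ i : Sym2 V × C with w ∈ i.1, ε * p i.1 i.2 * rescaled p ε v w i.2 ^ 2 := by
    rw [Finset.filter_or, ← Finset.sum_union_inter]
    exact le_add_of_nonneg_right (Finset.sum_nonneg fun i _ => hterm i)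
  have hsq (c : C) : 0 ≤ rescaled p ε v w c ^ 2 := sq_nonneg _
  linarith [h.sum_incident_activation_mul_le v hsq, h.sum_incident_activation_mul_le w hsq,
    h.sum_rescaled_sq_le hP v w]

variable [DecidableEq C]

lemma influence_remaining_le (h : IsRoundInput G p P W ε) (v w : V) (i : Sym2 V × C)
    (x : Sym2 V × C → Bool) :
    influence (fun ω => remaining G p ε ω v w) i x ≤ rescaled p ε v w i.2 := by
  refine (influence_sum_mul_le _ (fun c _ => h.rescaled_nonneg v w c) _).trans ?_
  rw [Finset.sum_eq_single i.2]
  · refine mul_le_of_le_one_right (h.rescaled_nonneg v w _) (influence_le_one fun ω => ?_)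
    exact ⟨mul_nonneg unblocked_mem_Icc.1 unblocked_mem_Icc.1,
      mul_le_one₀ unblocked_mem_Icc.2 unblocked_mem_Icc.1 unblocked_mem_Icc.2⟩
  · intro c _ hc
    rw [influence_eq_zero (dependsOn_unblocked_mul v w c) fun hi => hc hi.2.1.symm, mul_zero]
  · simp

lemma prob_remaining_le (h : IsRoundInput G p P W ε) (hP : 0 < P) (hvw : G.Adj v w) {η : ℝ}
    (hη : η ∈ Set.Icc 0 1) :
    prob (activationLaw p ε) (fun ω => remaining G p ε ω v w ≤ 1 - η) ≤
      Real.exp (-(η ^ 2 / (4 * P))) := by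
  have hl : 0 ≤ η / (2 * P) := div_nonneg hη.1 (by linarith)
  have hdep : DependsOn (fun ω => -remaining G p ε ω v w)
      ((Finset.univ.filter fun i : Sym2 V × C => v ∈ i.1 ∨ w ∈ i.1 : Finset _) : Set _) := by
    rw [Finset.coe_filter_univ]
    exact fun _ _ hxy => congrArg Neg.neg (dependsOn_remaining v w fun i hi => hxy i hi.2)
  have hmgf := expect_exp_le (fun i => h.activation_mem_Icc i.1 i.2) hdep
    (fun i _ x => influence_neg.trans_le (h.influence_remaining_le v w i x)) hl fun i _ => by
      rw [div_mul_eq_mul_div, div_le_one (by linarith)]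
      nlinarith [hη.1, hη.2, h.rescaled_nonneg v w i.2, h.rescaled_le v w i.2, h.le s(v, w) i.2]
  rw [← activationLaw, expect_neg, h.expect_remaining hvw] at hmgf
  replace hmgf := hmgf.trans (Real.exp_le_exp.mpr (add_le_add_right
    (mul_le_mul_of_nonneg_left (h.remaining_variance_le hP.le v w) (sq_nonneg _)) _))
  refine (h.isProbWeight.prob_mono fun ω hω => ?_).trans
    ((prob_expect_add_le h.isProbWeight hl hmgf η).trans_eq ?_)
  · linarith
  · congr 1
    field_simp
    ring

end IsRoundInput

end RemainingTail

section MainLoadTail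

variable {V C : Type*} [Fintype V] [DecidableEq V] [Fintype C]
  {G : SimpleGraph V} {p : Sym2 V → C → ℝ} {P W ε : ℝ} {v w : V} {c : C}

lemma IsRoundInput.mainLoad_direct_variance_le (h : IsRoundInput G p P W ε) (hP : 0 ≤ P) (v : V)
    (c : C) :
    ∑ i : Sym2 V × C with v ∈ i.1,
      ε * p i.1 i.2 * (∑ w with i.1 = s(v, w), rescaled p ε v w c) ^ 2 ≤ P := by
  have hterm (w : V) : ∑ c', ε * p s(v, w) c' * rescaled p ε v w c ^ 2 ≤
      1 / 8 * (2 * P) * rescaled p ε v w c := by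
    rw [← Finset.sum_mul, ← Finset.mul_sum]
    have hrate : ε * ∑ c', p s(v, w) c' ≤ 1 / 8 := by
      nlinarith [h.rate_nonneg, h.rate_le, h.sum_le_one s(v, w)]
    have hsq : rescaled p ε v w c ^ 2 ≤ 2 * P * rescaled p ε v w c := by
      nlinarith [h.rescaled_nonneg v w c, h.rescaled_le v w c, h.le s(v, w) c]
    rw [mul_assoc (1 / 8 : ℝ)]
    exact mul_le_mul hrate hsq (sq_nonneg _) (by norm_num)
  rw [sum_filter_mem_fst v fun i => ε * p i.1 i.2 *
    (∑ w with i.1 = s(v, w), rescaled p ε v w c) ^ 2, Finset.sum_comm]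
  simp only [sum_filter_pair_eq]
  refine (Finset.sum_le_sum fun w _ => hterm w).trans ?_
  rw [← Finset.mul_sum]
  nlinarith [h.sum_rescaled_le v c, h.load_le_one]

variable [DecidableEq C]

lemma survival_mem_Icc {ω : Sym2 V × C → Bool} : survival G ω v w c ∈ Set.Icc 0 1 := by
  obtain ⟨h0, h1⟩ := sum_sole_mul_mem_Icc (G := G) (ω := ω) (e := s(v, w))
    fun c' => unblocked_mem_Icc (G := G) (ω := ω) (v := w) (w := v) (c := c')
  exact ⟨mul_nonneg unblocked_mem_Icc.1 (sub_nonneg.mpr h1),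
    mul_le_one₀ unblocked_mem_Icc.2 (sub_nonneg.mpr h1) (sub_le_self _ h0)⟩

lemma dependsOn_survival (v w : V) (c : C) :
    DependsOn (fun ω => survival G ω v w c) {i | i.1 ∈ G.edgeSet ∧ w ∈ i.1} := by
  have hunblocked (c' : C) :
      DependsOn (fun ω => unblocked G ω w v c') {i | i.1 ∈ G.edgeSet ∧ w ∈ i.1} :=
    (dependsOn_unblocked w v c').mono fun i hi =>
      (star_subset w v c' hi).imp_right And.right
  have hsole (c' : C) :
      DependsOn (fun ω => sole G ω s(v, w) c') {i | i.1 ∈ G.edgeSet ∧ w ∈ i.1} :=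
    (dependsOn_sole s(v, w) c').mono fun i hi =>
      hi.imp_right fun h => by rw [h]; exact Sym2.mem_mk_right v w
  exact fun x y hxy => congrArg₂ (fun a b => a * (1 - b)) (hunblocked c hxy) <|
    Finset.sum_congr rfl fun c' _ => congrArg₂ (· * ·) (hsole c' hxy) (hunblocked c' hxy)

lemma influence_survival_le {i : Sym2 V × C} (hi : v ∉ i.1) (x : Sym2 V × C → Bool) :
    influence (fun ω => survival G ω v w c) i x ≤
      if w ∈ i.1 then (if i.2 = c then 1 else 0) + sole G x s(v, w) i.2 else 0 := by
  split_ifs with hw hc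
  · exact (influence_le_one fun ω => survival_mem_Icc).trans (le_add_of_nonneg_right sole_nonneg)
  · rw [zero_add]
    rcases sole_eq_zero_or_one (G := G) (ω := x) (e := s(v, w)) (c := i.2) with hs | hs
    · have hsole (c' : C) (a : Bool) :
          sole G (Function.update x i a) s(v, w) c' = sole G x s(v, w) c' :=
        apply_update_eq_of_dependsOn (dependsOn_sole s(v, w) c')
          (fun h => hi (h.2 ▸ Sym2.mem_mk_left v w)) a
      have hunblocked {c' : C} (hc' : i.2 ≠ c') (a : Bool) :
          unblocked G (Function.update x i a) w v c' = unblocked G x w v c' :=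
        apply_update_eq_of_dependsOn (dependsOn_unblocked w v c')
          (fun h => hc' (star_subset w v c' h).2.1) a
      have hsurvival (a : Bool) :
          survival G (Function.update x i a) v w c = survival G x v w c := by
        simp only [survival, hsole, hunblocked hc]
        congr 2
        refine Finset.sum_congr rfl fun c' _ => ?_
        rcases eq_or_ne i.2 c' with rfl | hc'
        · rw [hs, zero_mul, zero_mul]
        · rw [hunblocked hc']
      rw [influence, hsurvival, hsurvival, sub_self, abs_zero, hs]
    · rw [hs]
      exact influence_le_one fun ω => survival_mem_Icc
  · exact (influence_eq_zero (dependsOn_survival v w c) fun h => hw h.2).le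

/-- A bound on the influence of a coordinate `i` away from `v` on `mainLoad G p ε · v c`, which is
determined by the coordinates at the edges at `v`. -/
noncomputable def mainLoadInfluence (G : SimpleGraph V) (p : Sym2 V → C → ℝ) (ε : ℝ)
    (ω : Sym2 V × C → Bool) (v : V) (c : C) (i : Sym2 V × C) : ℝ :=
  ∑ w with w ∈ i.1, rescaled p ε v w c * ((if i.2 = c then 1 else 0) + sole G ω s(v, w) i.2)

lemma dependsOn_mainLoadInfluence (v : V) (c : C) (i : Sym2 V × C) :
    DependsOn (fun ω => mainLoadInfluence G p ε ω v c i) {i | v ∈ i.1} := fun _ _ hxy =>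
  Finset.sum_congr rfl fun w _ => congrArg (fun y => rescaled p ε v w c * (_ + y)) <|
    dependsOn_sole s(v, w) i.2 fun j hj => hxy j (by
      rw [Set.mem_ofPred, hj.2]
      exact Sym2.mem_mk_left v w)

namespace IsRoundInput

lemma influence_mainLoad_le (h : IsRoundInput G p P W ε) (v w : V) (c c' : C)
    (x : Sym2 V × C → Bool) :
    influence (fun ω => mainLoad G p ε ω v c) (s(v, w), c') x ≤ rescaled p ε v w c := by
  refine (influence_sum_mul_le _ (fun z _ => h.rescaled_nonneg v z c) _).trans ?_
  rw [Finset.sum_eq_single w]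
  · exact mul_le_of_le_one_right (h.rescaled_nonneg v w c)
      (influence_le_one fun ω => survival_mem_Icc)
  · intro z _ hzw
    rcases eq_or_ne z v with rfl | hzv
    · rw [rescaled, h.eq_zero s(z, z) (G.loopless.irrefl z), zero_div, zero_mul]
    · rw [influence_eq_zero (dependsOn_survival v z c) (by simp [hzv, hzw]), mul_zero]
  · simp

lemma influence_mainLoad_le_of_notMem (h : IsRoundInput G p P W ε) {i : Sym2 V × C}
    (hi : v ∉ i.1) (c : C) (x : Sym2 V × C → Bool) :
    influence (fun ω => mainLoad G p ε ω v c) i x ≤ mainLoadInfluence G p ε x v c i := by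
  refine (influence_sum_mul_le _ (fun w _ => h.rescaled_nonneg v w c) _).trans ?_
  rw [mainLoadInfluence, Finset.sum_filter]
  refine Finset.sum_le_sum fun w _ => ?_
  rw [← mul_ite_zero]
  exact mul_le_mul_of_nonneg_left (influence_survival_le hi x) (h.rescaled_nonneg v w c)

lemma mainLoadInfluence_mem_Icc (h : IsRoundInput G p P W ε) (hP : 0 ≤ P)
    (x : Sym2 V × C → Bool) (v : V) (c : C) (i : Sym2 V × C) :
    mainLoadInfluence G p ε x v c i ∈ Set.Icc 0 (8 * P) := by
  have hterm (w : V) : rescaled p ε v w c * ((if i.2 = c then 1 else 0) + sole G x s(v, w) i.2) ∈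
      Set.Icc 0 (4 * P) := by
    have hite := ite_add_sole_mem_Icc (G := G) (ω := x) (e := s(v, w)) (c := c) (c' := i.2)
    exact ⟨mul_nonneg (h.rescaled_nonneg v w c) hite.1, by
      nlinarith [hite.1, hite.2, h.rescaled_nonneg v w c, h.rescaled_le v w c, h.le s(v, w) c]⟩
  refine ⟨Finset.sum_nonneg fun w _ => (hterm w).1,
    (Finset.sum_le_card_nsmul _ _ _ fun w _ => (hterm w).2).trans ?_⟩
  have hcard : (Finset.univ.filter (· ∈ i.1)).card ≤ 2 := by
    have hsubset : Finset.univ.filter (· ∈ i.1) ⊆ i.1.toFinset := fun w hw => by simpa using hw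
    refine (Finset.card_le_card hsubset).trans ?_
    rw [Sym2.card_toFinset]
    split_ifs <;> norm_num
  rw [nsmul_eq_mul]
  have hcard' : ((Finset.univ.filter (· ∈ i.1)).card : ℝ) ≤ 2 := by exact_mod_cast hcard
  nlinarith

lemma sum_activation_mul_mainLoadInfluence_le (h : IsRoundInput G p P W ε)
    (x : Sym2 V × C → Bool) (v : V) (c : C) :
    ∑ i, ε * p i.1 i.2 * mainLoadInfluence G p ε x v c i ≤ 1 / 2 := by
  set g : V → C → ℝ := fun w c' => (if c' = c then 1 else 0) + sole G x s(v, w) c'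
  have hg (w : V) : ∑ c', g w c' ≤ 2 := by
    have hsole := (sum_sole_mul_mem_Icc (G := G) (ω := x) (e := s(v, w)) (g := fun _ => 1)
      fun _ => by simp).2
    simp only [g, Finset.sum_add_distrib, Finset.sum_ite_eq', Finset.mem_univ, if_true]
    simp only [mul_one] at hsole
    linarith
  calc ∑ i, ε * p i.1 i.2 * mainLoadInfluence G p ε x v c i
      = ∑ w, rescaled p ε v w c *
          ∑ i : Sym2 V × C with w ∈ i.1, ε * p i.1 i.2 * g w i.2 := by
        simp only [mainLoadInfluence, Finset.mul_sum, Finset.sum_filter]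
        rw [Finset.sum_comm]
        refine Finset.sum_congr rfl fun w _ => Finset.sum_congr rfl fun i _ => ?_
        simp only [mul_ite, mul_zero, g, mul_left_comm]
    _ ≤ ∑ w, rescaled p ε v w c * (1 / 8 * 2) := by
        refine Finset.sum_le_sum fun w _ => mul_le_mul_of_nonneg_left ?_ (h.rescaled_nonneg v w c)
        exact (h.sum_incident_activation_mul_le w fun c' => ite_add_sole_mem_Icc.1).trans
          (mul_le_mul_of_nonneg_left (hg w) (by norm_num))
    _ ≤ 1 / 2 := by
        rw [← Finset.sum_mul]
        linarith [h.sum_rescaled_le v c, h.load_le_one]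

lemma mainLoad_indirect_variance_le (h : IsRoundInput G p P W ε) (hP : 0 ≤ P)
    (x : Sym2 V × C → Bool) (v : V) (c : C) (s : Finset (Sym2 V × C)) :
    ∑ i ∈ s, ε * p i.1 i.2 * mainLoadInfluence G p ε x v c i ^ 2 ≤ 4 * P := by
  have hterm (i : Sym2 V × C) : ε * p i.1 i.2 * mainLoadInfluence G p ε x v c i ^ 2 ≤
      8 * P * (ε * p i.1 i.2 * mainLoadInfluence G p ε x v c i) := by
    obtain ⟨h0, h1⟩ := h.mainLoadInfluence_mem_Icc hP x v c i
    nlinarith [mul_le_mul_of_nonneg_left h1 (mul_nonneg (h.activation_mem_Icc i.1 i.2).1 h0)]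
  calc ∑ i ∈ s, ε * p i.1 i.2 * mainLoadInfluence G p ε x v c i ^ 2
      ≤ ∑ i, ε * p i.1 i.2 * mainLoadInfluence G p ε x v c i ^ 2 :=
        Finset.sum_le_sum_of_subset_of_nonneg (Finset.subset_univ s) fun i _ _ =>
          mul_nonneg (h.activation_mem_Icc i.1 i.2).1 (sq_nonneg _)
    _ ≤ 8 * P * ∑ i, ε * p i.1 i.2 * mainLoadInfluence G p ε x v c i := by
        rw [Finset.mul_sum]
        exact Finset.sum_le_sum fun i _ => hterm i
    _ ≤ 4 * P := by nlinarith [h.sum_activation_mul_mainLoadInfluence_le x v c]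

lemma expect_exp_mainLoad_le (h : IsRoundInput G p P W ε) (hP : 0 < P) (v : V) (c : C) {t : ℝ}
    (ht : t ∈ Set.Icc 0 1) :
    expect (activationLaw p ε) (fun ω => Real.exp (t / (10 * P) * mainLoad G p ε ω v c)) ≤
      Real.exp (t / (10 * P) * expect (activationLaw p ε) (fun ω => mainLoad G p ε ω v c) +
        (t / (10 * P)) ^ 2 * (P + 4 * P)) := by
  have hscale {d : ℝ} (hd : d ≤ 8 * P) : t / (10 * P) * d ≤ 1 := by
    rw [div_mul_eq_mul_div, div_le_one (by linarith)]
    nlinarith [ht.1, ht.2]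
  have hdep (i : Sym2 V × C) : DependsOn (fun ω => mainLoadInfluence G p ε ω v c i)
      ((Finset.univ.filter fun i : Sym2 V × C => v ∈ i.1 : Finset _) : Set _) := by
    rw [Finset.coe_filter_univ]
    exact dependsOn_mainLoadInfluence v c i
  have hmgf := expect_exp_le_two_phase (F := fun ω => mainLoad G p ε ω v c) (l := t / (10 * P))
    (fun i => h.activation_mem_Icc i.1 i.2)
    (Finset.univ.filter fun i : Sym2 V × C => v ∈ i.1)
    (dA := fun i => ∑ w with i.1 = s(v, w), rescaled p ε v w c) ?_
    (fun i hi x => h.influence_mainLoad_le_of_notMem (by simpa using hi) c x) hdep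
    (h.mainLoad_direct_variance_le hP.le v c)
    (fun x => h.mainLoad_indirect_variance_le hP.le x v c _) (div_nonneg ht.1 (by linarith)) ?_
    fun x i _ => hscale (h.mainLoadInfluence_mem_Icc hP.le x v c i).2
  · exact hmgf
  · rintro ⟨e, c'⟩ hi x
    obtain ⟨w, rfl⟩ := Sym2.mem_iff_exists.mp (Finset.mem_filter.mp hi).2
    exact (h.influence_mainLoad_le v w c c' x).trans_eq
      (sum_filter_pair_eq v w fun z => rescaled p ε v z c).symm
  · rintro ⟨e, c'⟩ hi
    obtain ⟨w, rfl⟩ := Sym2.mem_iff_exists.mp (Finset.mem_filter.mp hi).2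
    rw [sum_filter_pair_eq v w fun z => rescaled p ε v z c]
    exact hscale (by linarith [h.rescaled_le v w c, h.le s(v, w) c])

lemma prob_le_mainLoad (h : IsRoundInput G p P W ε) (hP : 0 < P) (v : V) (c : C) {t : ℝ}
    (ht : t ∈ Set.Icc 0 1) :
    prob (activationLaw p ε)
        (fun ω => W * (1 - ε * (1 - ε) ^ 2) / (1 - ε * W) + t ≤ mainLoad G p ε ω v c) ≤
      Real.exp (-(t ^ 2 / (20 * P))) := by
  refine (h.isProbWeight.prob_mono fun ω hω => ?_).trans ((prob_expect_add_le h.isProbWeight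
    (div_nonneg ht.1 (by linarith)) (h.expect_exp_mainLoad_le hP v c ht) t).trans_eq ?_)
  · linarith [h.expect_mainLoad_le v c]
  · congr 1
    field_simp
    ring

end IsRoundInput

end MainLoadTail

/-- An exact formula for an exponential moment of the sum of the `y k` over the selected indices
`k` (those with `X k = 1`), counted only if another index is selected as well. -/
lemma exp_sum_mul_colliding {κ : Type*} [Fintype κ] [DecidableEq κ] {X : κ → ℝ}
    (hX : ∀ k, X k = 0 ∨ X k = 1) (y : κ → ℝ) :
    Real.exp (∑ k, y k * (X k * (1 - ∏ j ∈ Finset.univ.erase k, (1 - X j)))) =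
      ∏ k, (1 + (Real.exp (y k) - 1) * X k) -
        ∑ k, (Real.exp (y k) - 1) * (X k * ∏ j ∈ Finset.univ.erase k, (1 - X j)) := by
  by_cases halone : ∃ k, X k = 1 ∧ ∀ j ≠ k, X j = 0
  · obtain ⟨k, hk, hother⟩ := halone
    have hprod : ∏ j ∈ Finset.univ.erase k, (1 - X j) = 1 :=
      Finset.prod_eq_one fun j hj => by rw [hother j (Finset.ne_of_mem_erase hj), sub_zero]
    rw [Finset.sum_eq_single k (fun j _ hj => by simp [hother j hj]) (by simp),
      Finset.sum_eq_single k (fun j _ hj => by simp [hother j hj]) (by simp), hprod,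
      Finset.prod_eq_single k (fun j _ hj => by simp [hother j hj]) (by simp), hk]
    simp
  · have hcollide (k : κ) : X k * ∏ j ∈ Finset.univ.erase k, (1 - X j) = 0 := by
      refine mul_eq_zero.mpr (or_iff_not_imp_left.mpr fun hk => ?_)
      push Not at halone
      obtain ⟨j, hjk, hj⟩ := halone k ((hX k).resolve_left hk)
      exact Finset.prod_eq_zero (Finset.mem_erase.mpr ⟨hjk, Finset.mem_univ j⟩)
        (by rw [(hX j).resolve_left hj, sub_self])
    simp only [mul_sub, hcollide, mul_one, mul_zero, sub_zero, Finset.sum_const_zero]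
    rw [Real.exp_sum]
    refine Finset.prod_congr rfl fun k _ => ?_
    rcases hX k with hk | hk <;> simp [hk]

section ConflictLoadTail

variable {V C : Type*} [Fintype V] [DecidableEq V] {G : SimpleGraph V} {p : Sym2 V → C → ℝ}
  {P W ε l : ℝ} {v w : V} {c c' : C}

/-- The load of `c` at `v` on those edges at `v` where `c'` is activated but blocked at `v`. -/
noncomputable def conflictLoadIn (G : SimpleGraph V) (p : Sym2 V → C → ℝ) (ε : ℝ)
    (ω : Sym2 V × C → Bool) (v : V) (c c' : C) : ℝ :=
  ∑ w, rescaled p ε v w c * (active G ω s(v, w) c' * (1 - unblocked G ω v w c'))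

lemma dependsOn_conflictLoadIn (v : V) (c c' : C) :
    DependsOn (fun ω => conflictLoadIn G p ε ω v c c') {i | i.2 = c'} := fun _ _ hxy =>
  Finset.sum_congr rfl fun w _ => congrArg₂ (fun a b => rescaled p ε v w c * (a * (1 - b)))
    (dependsOn_active s(v, w) c' fun i hi => hxy i (by rw [hi.2]; rfl))
    (dependsOn_unblocked v w c' fun i hi => hxy i (star_subset v w c' hi).2.1)

variable [Fintype C]

/-- The total load of `c` at `v` on those edges at `v` that fail to be coloured because of an
activation at another edge at `v`, counted once for each colour. -/
noncomputable def conflictLoad (G : SimpleGraph V) (p : Sym2 V → C → ℝ) (ε : ℝ)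
    (ω : Sym2 V × C → Bool) (v : V) (c : C) : ℝ :=
  ∑ c', conflictLoadIn G p ε ω v c c'

namespace IsRoundInput

lemma exp_mul_rescaled_sub_one_mem_Icc (h : IsRoundInput G p P W ε) (hl : 0 ≤ l)
    (hlP : l * (2 * P) ≤ 1) (v w : V) (c : C) :
    Real.exp (l * rescaled p ε v w c) - 1 ∈
      Set.Icc 0 (2 * (l * rescaled p ε v w c) ⊓ 2) := by
  have hy0 : 0 ≤ l * rescaled p ε v w c := mul_nonneg hl (h.rescaled_nonneg v w c)
  have hy1 : l * rescaled p ε v w c ≤ 1 := by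
    nlinarith [h.rescaled_le v w c, h.le s(v, w) c]
  have hexp := exp_le_one_add_add_sq (abs_le.mpr ⟨by linarith, hy1⟩)
  exact ⟨sub_nonneg.mpr (Real.one_le_exp hy0), le_inf (by nlinarith) (by nlinarith)⟩

variable [DecidableEq C]

lemma expect_prod_one_add_active_le (h : IsRoundInput G p P W ε) (v : V) (c : C) {m : V → ℝ}
    (hm : ∀ w, 0 ≤ m w) :
    expect (activationLaw p ε) (fun ω => ∏ w, (1 + m w * active G ω s(v, w) c)) ≤
      Real.exp (∑ w, ε * p s(v, w) c * m w) := by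
  rw [h.isProbWeight.expect_finset_prod _ (fun w ω => 1 + m w * active G ω s(v, w) c)
    (fun w => {(s(v, w), c)})
    (fun w _ _ hxy => congrArg (1 + m w * ·)
      (dependsOn_active s(v, w) c fun i hi => hxy i (by rw [hi.2]; rfl)))
    (fun w _ z _ hwz => Set.disjoint_singleton.mpr fun heq =>
      hwz (Sym2.congr_right.mp (Prod.mk.inj heq).1)), Real.exp_sum]
  refine Finset.prod_le_prod (fun w _ => h.isProbWeight.expect_nonneg fun ω => ?_) fun w _ => ?_
  · exact add_nonneg zero_le_one (mul_nonneg (hm w) active_mem_Icc.1)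
  · rw [h.expect_active_comp s(v, w) c fun a => 1 + m w * a]
    linarith [Real.add_one_le_exp (ε * p s(v, w) c * m w)]

lemma le_expect_sum_mul_active_mul_unblocked (h : IsRoundInput G p P W ε) (v : V) (c : C)
    {m : V → ℝ} (hm : ∀ w, 0 ≤ m w) :
    (∑ w, ε * p s(v, w) c * m w) * (1 - ε) ≤ expect (activationLaw p ε)
      (fun ω => ∑ w, m w * (active G ω s(v, w) c * unblocked G ω v w c)) := by
  rw [expect_sum, Finset.sum_mul]
  refine Finset.sum_le_sum fun w _ => ?_
  have hdisj : Disjoint {i : Sym2 V × C | i.1 = s(w, v)} (star G v w c) := disjoint_edge_star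
  rw [expect_const_mul, h.isProbWeight.expect_mul (dependsOn_active s(v, w) c)
    (dependsOn_unblocked v w c)
    (hdisj.mono_left fun i hi => (congrArg Prod.fst hi.2).trans Sym2.eq_swap),
    h.expect_unblocked, h.expect_active_comp s(v, w) c fun a => a, mul_one, mul_zero, add_zero]
  nlinarith [mul_le_mul_of_nonneg_left (h.one_sub_rate_le_unblockedProb v w c)
    (mul_nonneg (h.activation_mem_Icc s(v, w) c).1 (hm w))]

lemma expect_exp_conflictLoadIn_le (h : IsRoundInput G p P W ε) (hl : 0 ≤ l)
    (hlP : l * (2 * P) ≤ 1) (v : V) (c c' : C) :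
    expect (activationLaw p ε) (fun ω => Real.exp (l * conflictLoadIn G p ε ω v c c')) ≤
      Real.exp (6 * l * ε ^ 2 * ∑ w, p s(v, w) c' * rescaled p ε v w c) := by
  set m : V → ℝ := fun w => Real.exp (l * rescaled p ε v w c) - 1
  have hm (w : V) := h.exp_mul_rescaled_sub_one_mem_Icc hl hlP v w c
  set s := ∑ w, ε * p s(v, w) c' * m w
  have hs0 : 0 ≤ s := Finset.sum_nonneg fun w _ =>
    mul_nonneg (h.activation_mem_Icc s(v, w) c').1 (hm w).1
  have hs_rate : s ≤ 2 * ε := by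
    have hsum : s ≤ ∑ w, ε * p s(v, w) c' * 2 := Finset.sum_le_sum fun w _ =>
      mul_le_mul_of_nonneg_left ((hm w).2.trans inf_le_right) (h.activation_mem_Icc s(v, w) c').1
    rw [← Finset.sum_mul, ← Finset.mul_sum] at hsum
    linarith [mul_le_mul_of_nonneg_left (h.load_le v c') h.rate_nonneg, h.rate_mul_load_le]
  have hs_mean : s ≤ 2 * l * ε * ∑ w, p s(v, w) c' * rescaled p ε v w c := by
    rw [Finset.mul_sum]
    refine Finset.sum_le_sum fun w _ => ?_
    have := mul_le_mul_of_nonneg_left ((hm w).2.trans inf_le_left)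
      (h.activation_mem_Icc s(v, w) c').1
    linarith
  have hexp_s : Real.exp s ≤ 1 + s + s ^ 2 :=
    exp_le_one_add_add_sq (abs_le.mpr ⟨by linarith, by linarith [h.rate_le]⟩)
  calc expect (activationLaw p ε) (fun ω => Real.exp (l * conflictLoadIn G p ε ω v c c'))
      = expect (activationLaw p ε) (fun ω => ∏ w, (1 + m w * active G ω s(v, w) c')) -
          expect (activationLaw p ε)
            (fun ω => ∑ w, m w * (active G ω s(v, w) c' * unblocked G ω v w c')) := by
        rw [← expect_sub]
        congr 1 with ω
        simp only [conflictLoadIn, Finset.mul_sum, ← mul_assoc l]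
        exact exp_sum_mul_colliding (fun w => active_eq_zero_or_one) _
    _ ≤ Real.exp s - s * (1 - ε) :=
        sub_le_sub (h.expect_prod_one_add_active_le v c' fun w => (hm w).1)
          (h.le_expect_sum_mul_active_mul_unblocked v c' fun w => (hm w).1)
    _ ≤ 3 * ε * s + 1 := by nlinarith
    _ ≤ Real.exp (3 * ε * s) := Real.add_one_le_exp _
    _ ≤ Real.exp (6 * l * ε ^ 2 * ∑ w, p s(v, w) c' * rescaled p ε v w c) := by
        refine Real.exp_le_exp.mpr ?_
        linarith [mul_le_mul_of_nonneg_left hs_mean (mul_nonneg zero_le_three h.rate_nonneg)]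

lemma expect_exp_conflictLoad_le (h : IsRoundInput G p P W ε) (hl : 0 ≤ l)
    (hlP : l * (2 * P) ≤ 1) (v : V) (c : C) :
    expect (activationLaw p ε) (fun ω => Real.exp (l * conflictLoad G p ε ω v c)) ≤
      Real.exp (l * (12 * ε ^ 2 * W)) := by
  simp only [conflictLoad, Finset.mul_sum, Real.exp_sum]
  rw [h.isProbWeight.expect_finset_prod _
    (fun c' ω => Real.exp (l * conflictLoadIn G p ε ω v c c')) (fun c' => {i | i.2 = c'})
    (fun c' _ _ hxy => congrArg (fun a => Real.exp (l * a)) (dependsOn_conflictLoadIn v c c' hxy))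
    (fun c₁ _ c₂ _ hc => Set.disjoint_left.mpr fun i h₁ h₂ => hc (h₁.symm.trans h₂))]
  refine (Finset.prod_le_prod (fun c' _ => h.isProbWeight.expect_nonneg fun ω => Real.exp_nonneg _)
    fun c' _ => h.expect_exp_conflictLoadIn_le hl hlP v c c').trans ?_
  rw [← Real.exp_sum, ← Finset.mul_sum, Finset.sum_comm]
  have hsum : ∑ w, ∑ c', p s(v, w) c' * rescaled p ε v w c ≤ 2 * W := by
    refine le_trans (Finset.sum_le_sum fun w _ => ?_) (h.sum_rescaled_le v c)
    rw [← Finset.sum_mul]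
    exact mul_le_of_le_one_left (h.rescaled_nonneg v w c) (h.sum_le_one s(v, w))
  refine Real.exp_le_exp.mpr ?_
  linarith [mul_le_mul_of_nonneg_left hsum (mul_nonneg hl (sq_nonneg ε))]

lemma prob_le_conflictLoad (h : IsRoundInput G p P W ε) (hP : 0 < P) (v : V) (c : C) (t : ℝ) :
    prob (activationLaw p ε) (fun ω => 12 * ε ^ 2 * W + t ≤ conflictLoad G p ε ω v c) ≤
      Real.exp (-(t / (2 * P))) := by
  have hlP : 1 / (2 * P) * (2 * P) ≤ 1 := (one_div_mul_cancel (by positivity)).le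
  refine (prob_expect_add_le h.isProbWeight (l := 1 / (2 * P)) (m := 12 * ε ^ 2 * W) (v := 0)
    (by positivity)
    (by rw [add_zero]; exact h.expect_exp_conflictLoad_le (by positivity) hlP v c) t).trans_eq ?_
  ring_nf

end IsRoundInput

end ConflictLoadTail

section GoodRound

variable {V C : Type*} [Fintype V] {G : SimpleGraph V} {p : Sym2 V → C → ℝ}
  {P W ε η t θ : ℝ} {D K : ℕ} {v w : V} {c : C}

/-- The vertex `v` together with its neighbours in `G`. -/
noncomputable def closedNbhd (G : SimpleGraph V) (v : V) : Finset V :=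
  open scoped Classical in {w | w = v ∨ G.Adj v w}

lemma mem_closedNbhd : w ∈ closedNbhd G v ↔ w = v ∨ G.Adj v w := by
  simp [closedNbhd]

/-- The ball of radius three about `v` in `G`. -/
noncomputable def ballThree (G : SimpleGraph V) (v : V) : Finset V :=
  open scoped Classical in
    (closedNbhd G v).biUnion fun a => (closedNbhd G a).biUnion fun b => closedNbhd G b

/-- The coordinates at the edges of `G` that meet the closed neighbourhood of `v`. -/
def nearCoords (C : Type*) (G : SimpleGraph V) (v : V) : Set (Sym2 V × C) :=
  {i | i.1 ∈ G.edgeSet ∧ ∃ a ∈ closedNbhd G v, a ∈ i.1}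

lemma mem_nearCoords_of_mem {i : Sym2 V × C} (hi : i.1 ∈ G.edgeSet) (hv : v ∈ i.1) :
    i ∈ nearCoords C G v :=
  ⟨hi, v, mem_closedNbhd.mpr (Or.inl rfl), hv⟩

lemma mem_nearCoords_of_adj {i : Sym2 V × C} (hi : i.1 ∈ G.edgeSet) (hvw : G.Adj v w)
    (hw : w ∈ i.1) : i ∈ nearCoords C G v :=
  ⟨hi, w, mem_closedNbhd.mpr (Or.inr hvw), hw⟩

lemma disjoint_nearCoords (hw : w ∉ ballThree G v) :
    Disjoint (nearCoords C G v) (nearCoords C G w) := by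
  classical
  rw [Set.disjoint_left]
  rintro ⟨e, c⟩ ⟨he, a, ha, hae⟩ ⟨-, b, hb, hbe⟩
  have hab : b ∈ closedNbhd G a := by
    rcases eq_or_ne b a with rfl | hba
    · exact mem_closedNbhd.mpr (Or.inl rfl)
    · rw [(Sym2.mem_and_mem_iff hba.symm).mp ⟨hae, hbe⟩] at he
      exact mem_closedNbhd.mpr (Or.inr he)
  refine hw (Finset.mem_biUnion.mpr ⟨a, ha, Finset.mem_biUnion.mpr ⟨b, hab, ?_⟩⟩)
  exact mem_closedNbhd.mpr ((mem_closedNbhd.mp hb).imp Eq.symm SimpleGraph.Adj.symm)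

lemma self_mem_ballThree (v : V) : v ∈ ballThree G v := by
  have hself (a : V) : a ∈ closedNbhd G a := mem_closedNbhd.mpr (Or.inl rfl)
  simp only [ballThree, Finset.mem_biUnion]
  exact ⟨v, hself v, v, hself v, hself v⟩

variable [Fintype C]

/-- The colours of positive weight at some edge at `v`. -/
noncomputable def usedColours (p : Sym2 V → C → ℝ) (v : V) : Finset C :=
  open scoped Classical in {c | ∃ w, p s(v, w) c ≠ 0}

lemma mem_usedColours : c ∈ usedColours p v ↔ ∃ w, p s(v, w) c ≠ 0 := by
  simp [usedColours]

/-- Closed neighbourhoods have at most `D` vertices, and at most `K` colours are used at a vertex.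
Only these bounds, and not the size of the graph, matter to the local lemma. -/
structure IsLocallyBounded (G : SimpleGraph V) (p : Sym2 V → C → ℝ) (D K : ℕ) : Prop where
  card_closedNbhd_le : ∀ v, (closedNbhd G v).card ≤ D
  card_usedColours_le : ∀ v, (usedColours p v).card ≤ K

lemma IsLocallyBounded.card_ballThree_le (hb : IsLocallyBounded G p D K) (v : V) :
    (ballThree G v).card ≤ D ^ 3 := by
  classical
  have hball (a : V) : ((closedNbhd G a).biUnion fun b => closedNbhd G b).card ≤ D * D :=
    (Finset.card_biUnion_le_card_mul _ _ D fun b _ => hb.card_closedNbhd_le b).trans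
      (Nat.mul_le_mul_right _ (hb.card_closedNbhd_le a))
  calc (ballThree G v).card ≤ (closedNbhd G v).card * (D * D) :=
        Finset.card_biUnion_le_card_mul _ _ _ fun a _ => hball a
    _ ≤ D * (D * D) := Nat.mul_le_mul_right _ (hb.card_closedNbhd_le v)
    _ = D ^ 3 := by ring

variable [DecidableEq V]

lemma dependsOn_remaining_of_adj (hvw : G.Adj v w) :
    DependsOn (fun ω => remaining G p ε ω v w) (nearCoords C G v) :=
  (dependsOn_remaining v w).mono fun _ hi => hi.2.elim (mem_nearCoords_of_mem hi.1)
    (mem_nearCoords_of_adj hi.1 hvw)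

lemma dependsOn_conflictLoad (v : V) (c : C) :
    DependsOn (fun ω => conflictLoad G p ε ω v c) (nearCoords C G v) := fun x y hxy =>
  Finset.sum_congr rfl fun c' _ => Finset.sum_congr rfl fun w _ =>
    congrArg₂ (fun a b => rescaled p ε v w c * (a * (1 - b)))
      (dependsOn_active s(v, w) c' fun i hi =>
        hxy i (mem_nearCoords_of_mem hi.1 (by rw [hi.2]; exact Sym2.mem_mk_left v w)))
      (dependsOn_unblocked v w c' fun i hi =>
        hxy i (mem_nearCoords_of_mem (star_subset v w c' hi).1 (star_subset v w c' hi).2.2))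

variable [DecidableEq C]

/-- The quantities at `v` that govern the new weights are close to their expectations. -/
structure IsGoodAt (G : SimpleGraph V) (p : Sym2 V → C → ℝ) (W ε η t : ℝ)
    (ω : Sym2 V × C → Bool) (v : V) : Prop where
  lt_remaining : ∀ w, G.Adj v w → 1 - η < remaining G p ε ω v w
  mainLoad_lt : ∀ c ∈ usedColours p v,
    mainLoad G p ε ω v c < W * (1 - ε * (1 - ε) ^ 2) / (1 - ε * W) + t
  conflictLoad_lt : ∀ c ∈ usedColours p v, conflictLoad G p ε ω v c < 12 * ε ^ 2 * W + t

namespace IsRoundInput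

lemma dependsOn_mainLoad (h : IsRoundInput G p P W ε) (v : V) (c : C) :
    DependsOn (fun ω => mainLoad G p ε ω v c) (nearCoords C G v) := fun x y hxy => by
  refine Finset.sum_congr rfl fun w _ => ?_
  by_cases hvw : G.Adj v w
  · exact congrArg (rescaled p ε v w c * ·) (dependsOn_survival v w c fun i hi =>
      hxy i (mem_nearCoords_of_adj hi.1 hvw hi.2))
  · rw [rescaled, h.eq_zero s(v, w) hvw, zero_div, zero_mul, zero_mul]

lemma dependsOn_isGoodAt (h : IsRoundInput G p P W ε) (v : V) :
    DependsOn (fun ω => IsGoodAt G p W ε η t ω v) (nearCoords C G v) := fun x y hxy => by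
  have hremaining {w : V} (hvw : G.Adj v w) :=
    dependsOn_remaining_of_adj (p := p) (ε := ε) hvw hxy
  have hmain (c : C) := h.dependsOn_mainLoad v c hxy
  have hconflict (c : C) := dependsOn_conflictLoad (G := G) (p := p) (ε := ε) v c hxy
  dsimp only at hremaining hmain hconflict
  refine propext ⟨fun hx => ⟨fun w hvw => ?_, fun c hc => ?_, fun c hc => ?_⟩,
    fun hy => ⟨fun w hvw => ?_, fun c hc => ?_, fun c hc => ?_⟩⟩
  · exact hremaining hvw ▸ hx.lt_remaining w hvw
  · exact hmain c ▸ hx.mainLoad_lt c hc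
  · exact hconflict c ▸ hx.conflictLoad_lt c hc
  · exact hremaining hvw ▸ hy.lt_remaining w hvw
  · exact hmain c ▸ hy.mainLoad_lt c hc
  · exact hconflict c ▸ hy.conflictLoad_lt c hc

lemma prob_not_isGoodAt_le (h : IsRoundInput G p P W ε) (hb : IsLocallyBounded G p D K)
    (hP : 0 < P) (hη : η ∈ Set.Icc 0 1) (ht : t ∈ Set.Icc 0 1) (hθη : θ ≤ η ^ 2 / 4)
    (hθt : θ ≤ t ^ 2 / 20) (v : V) :
    prob (activationLaw p ε) (fun ω => ¬IsGoodAt G p W ε η t ω v) ≤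
      (D + 2 * K) * Real.exp (-(θ / P)) := by
  have hexp {a b : ℝ} (hθ : θ ≤ a / b) : Real.exp (-(a / (b * P))) ≤ Real.exp (-(θ / P)) := by
    rw [Real.exp_le_exp, neg_le_neg_iff, ← div_div]
    exact div_le_div_of_nonneg_right hθ hP.le
  have hload (c : C) : prob (activationLaw p ε)
      (fun ω => W * (1 - ε * (1 - ε) ^ 2) / (1 - ε * W) + t ≤ mainLoad G p ε ω v c ∨
        12 * ε ^ 2 * W + t ≤ conflictLoad G p ε ω v c) ≤ 2 * Real.exp (-(θ / P)) := by
    rw [two_mul]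
    exact (h.isProbWeight.prob_or_le _ _).trans (add_le_add
      ((h.prob_le_mainLoad hP v c ht).trans (hexp hθt))
      ((h.prob_le_conflictLoad hP v c t).trans (hexp (hθt.trans (by nlinarith [ht.1, ht.2])))))
  have hremaining (w : V) : prob (activationLaw p ε)
      (fun ω => G.Adj v w ∧ remaining G p ε ω v w ≤ 1 - η) ≤ Real.exp (-(θ / P)) := by
    by_cases hvw : G.Adj v w
    · simpa only [hvw, true_and] using (h.prob_remaining_le hP hvw hη).trans (hexp hθη)
    · simpa [hvw, prob, expect] using Real.exp_nonneg _
  calc prob (activationLaw p ε) (fun ω => ¬IsGoodAt G p W ε η t ω v)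
      ≤ prob (activationLaw p ε) (fun ω =>
          (∃ w ∈ closedNbhd G v, G.Adj v w ∧ remaining G p ε ω v w ≤ 1 - η) ∨
          ∃ c ∈ usedColours p v, W * (1 - ε * (1 - ε) ^ 2) / (1 - ε * W) + t ≤
            mainLoad G p ε ω v c ∨ 12 * ε ^ 2 * W + t ≤ conflictLoad G p ε ω v c) := by
        refine h.isProbWeight.prob_mono fun ω hω => ?_
        contrapose! hω
        exact ⟨fun w hw => hω.1 w (mem_closedNbhd.mpr (Or.inr hw)) hw,
          fun c hc => (hω.2 c hc).1, fun c hc => (hω.2 c hc).2⟩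
    _ ≤ (closedNbhd G v).card • Real.exp (-(θ / P)) +
          (usedColours p v).card • (2 * Real.exp (-(θ / P))) :=
        (h.isProbWeight.prob_or_le _ _).trans (add_le_add
          ((h.isProbWeight.prob_exists_le _ _).trans
            (Finset.sum_le_card_nsmul _ _ _ fun w _ => hremaining w))
          ((h.isProbWeight.prob_exists_le _ _).trans
            (Finset.sum_le_card_nsmul _ _ _ fun c _ => hload c)))
    _ ≤ D * Real.exp (-(θ / P)) + K * (2 * Real.exp (-(θ / P))) := by
        rw [nsmul_eq_mul, nsmul_eq_mul]
        gcongr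
        exacts [hb.card_closedNbhd_le v, hb.card_usedColours_le v]
    _ = (D + 2 * K) * Real.exp (-(θ / P)) := by ring

lemma exists_forall_isGoodAt (h : IsRoundInput G p P W ε) (hb : IsLocallyBounded G p D K)
    (hP : 0 < P) (hη : η ∈ Set.Icc 0 1) (ht : t ∈ Set.Icc 0 1) (hθη : θ ≤ η ^ 2 / 4)
    (hθt : θ ≤ t ^ 2 / 20)
    (hlll : (D : ℝ) ^ 3 * ((D + 2 * K) * Real.exp (-(θ / P))) ≤ 1 / 4) :
    ∃ ω, weight (activationLaw p ε) ω ≠ 0 ∧ ∀ v, IsGoodAt G p W ε η t ω v := by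
  have hsum (v : V) : ∑ w ∈ ballThree G v,
      prob (activationLaw p ε) (fun ω => ¬IsGoodAt G p W ε η t ω w) ≤ 1 / 4 := by
    calc ∑ w ∈ ballThree G v, prob (activationLaw p ε) (fun ω => ¬IsGoodAt G p W ε η t ω w)
        ≤ (ballThree G v).card • ((D + 2 * K) * Real.exp (-(θ / P))) :=
          Finset.sum_le_card_nsmul _ _ _ fun w _ => h.prob_not_isGoodAt_le hb hP hη ht hθη hθt w
      _ ≤ (D : ℝ) ^ 3 * ((D + 2 * K) * Real.exp (-(θ / P))) := by
          rw [nsmul_eq_mul]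
          exact mul_le_mul_of_nonneg_right (mod_cast hb.card_ballThree_le v) (by positivity)
      _ ≤ 1 / 4 := hlll
  simpa only [not_not] using exists_forall_not_of_sum_prob_le h.isProbWeight
    (fun v _ _ hxy => congrArg Not (h.dependsOn_isGoodAt v hxy)) self_mem_ballThree
    (fun v w => disjoint_nearCoords) hsum

end IsRoundInput

end GoodRound

section Residual

variable {V C : Type*} [Fintype V] {G : SimpleGraph V} {p : Sym2 V → C → ℝ}
  {P W W' ε η t : ℝ} {D K : ℕ} {ω : Sym2 V × C → Bool} {e : Sym2 V} {v w : V} {c : C}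

lemma ne_zero_of_active_of_weight_ne_zero [Fintype C] (hω : weight (activationLaw p ε) ω ≠ 0)
    (hactive : active G ω e c = 1) : p e c ≠ 0 := by
  have htrue : ω (e, c) = true := by
    by_contra hfalse
    simp [active, hfalse] at hactive
  have hfactor := Finset.prod_ne_zero_iff.mp hω (e, c) (Finset.mem_univ _)
  intro hzero
  simp [activationLaw, bernoulliWeight, htrue, hzero] at hfactor

variable [DecidableEq V]

/-- The edge `s(v, w)` is coloured `c` in the round: `c` is activated there and at no other edge at
`v` or `w`. An edge may receive several colours, any of which can be kept. -/
def Receives (G : SimpleGraph V) (ω : Sym2 V × C → Bool) (v w : V) (c : C) : Prop :=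
  active G ω s(v, w) c = 1 ∧ unblocked G ω v w c = 1 ∧ unblocked G ω w v c = 1

lemma Receives.symm (h : Receives G ω v w c) : Receives G ω w v c :=
  ⟨by rw [Sym2.eq_swap]; exact h.1, h.2.2, h.2.1⟩

/-- The graph formed by the edges of `G` that are not coloured in the round. -/
def residual (G : SimpleGraph V) (ω : Sym2 V × C → Bool) : SimpleGraph V where
  Adj v w := G.Adj v w ∧ ∀ c, ¬Receives G ω v w c
  symm := ⟨fun _ _ h => ⟨h.1.symm, fun c hc => h.2 c hc.symm⟩⟩
  loopless := ⟨fun v h => G.loopless.irrefl v h.1⟩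

lemma rescaled_symm (v w : V) (c : C) : rescaled p ε v w c = rescaled p ε w v c := by
  rw [rescaled, rescaled, Sym2.eq_swap, mul_comm (unblockedProb p ε v w c)]

lemma mem_residual_edgeSet_or_exists_receives (he : e ∈ G.edgeSet) (ω : Sym2 V × C → Bool) :
    e ∈ (residual G ω).edgeSet ∨ ∃ c, ∀ v w, e = s(v, w) → Receives G ω v w c := by
  induction e using Sym2.ind with | _ x y
  by_cases hres : (residual G ω).Adj x y
  · exact Or.inl hres
  · obtain ⟨c, hc⟩ : ∃ c, Receives G ω x y c := by
      by_contra! hnone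
      exact hres ⟨he, hnone⟩
    refine Or.inr ⟨c, fun v w heq => ?_⟩
    rcases Sym2.eq_iff.mp heq with ⟨rfl, rfl⟩ | ⟨rfl, rfl⟩
    exacts [hc, hc.symm]

variable [Fintype C]

lemma remaining_symm (v w : V) : remaining G p ε ω v w = remaining G p ε ω w v :=
  Finset.sum_congr rfl fun c _ => by rw [rescaled_symm, mul_comm (unblocked G ω v w c)]

open scoped Classical in
/-- The weights after the round: on the uncoloured edges, the weight of every colour that is
blocked at an end is set to zero, and the other weights are rescaled to sum up to `1`. -/
noncomputable def residualWeight (G : SimpleGraph V) (p : Sym2 V → C → ℝ) (ε : ℝ)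
    (ω : Sym2 V × C → Bool) (e : Sym2 V) (c : C) : ℝ :=
  Sym2.lift ⟨fun v w => if (residual G ω).Adj v w then
      rescaled p ε v w c * (unblocked G ω v w c * unblocked G ω w v c) / remaining G p ε ω v w
    else 0, fun v w => by
      dsimp only
      rw [(residual G ω).adj_comm, rescaled_symm, remaining_symm,
        mul_comm (unblocked G ω v w c)]⟩ e

lemma residualWeight_of_adj (h : (residual G ω).Adj v w) :
    residualWeight G p ε ω s(v, w) c =
      rescaled p ε v w c * (unblocked G ω v w c * unblocked G ω w v c) /
        remaining G p ε ω v w :=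
  if_pos h

lemma residualWeight_of_not_adj (h : ¬(residual G ω).Adj v w) :
    residualWeight G p ε ω s(v, w) c = 0 :=
  if_neg h

lemma ne_zero_of_residualWeight_ne_zero (h : residualWeight G p ε ω s(v, w) c ≠ 0) :
    p s(v, w) c ≠ 0 ∧ unblocked G ω v w c = 1 := by
  have hadj : (residual G ω).Adj v w := by_contra fun hadj => h (residualWeight_of_not_adj hadj)
  rw [residualWeight_of_adj hadj] at h
  refine ⟨fun h0 => h ?_, unblocked_eq_zero_or_one.resolve_left fun h0 => h ?_⟩
  · rw [rescaled, h0, zero_div, zero_mul, zero_div]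
  · rw [h0, zero_mul, mul_zero, zero_div]

lemma IsLocallyBounded.residual (hb : IsLocallyBounded G p D K) (ε : ℝ)
    (ω : Sym2 V × C → Bool) :
    IsLocallyBounded (residual G ω) (residualWeight G p ε ω) D K where
  card_closedNbhd_le v := le_trans (Finset.card_le_card fun _ hw =>
    mem_closedNbhd.mpr ((mem_closedNbhd.mp hw).imp_right And.left)) (hb.card_closedNbhd_le v)
  card_usedColours_le v := le_trans (Finset.card_le_card fun c hc => by
    obtain ⟨w, hw⟩ := mem_usedColours.mp hc
    exact mem_usedColours.mpr ⟨w, (ne_zero_of_residualWeight_ne_zero hw).1⟩)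
    (hb.card_usedColours_le v)

lemma sum_active_mul_one_sub_unblocked_nonneg (v w : V) :
    0 ≤ ∑ c, active G ω s(v, w) c * (1 - unblocked G ω v w c) :=
  Finset.sum_nonneg fun _ _ => mul_nonneg active_mem_Icc.1 (sub_nonneg.mpr unblocked_mem_Icc.2)

lemma IsRoundInput.isFracLists_residual (h : IsRoundInput G p P W ε) (hP : 0 ≤ P) (hη : η ≤ 1 / 2)
    (hgood : ∀ v w, G.Adj v w → 1 - η < remaining G p ε ω v w)
    (hload : ∀ v c, ∑ w, residualWeight G p ε ω s(v, w) c ≤ W') :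
    IsFracLists (residual G ω) (residualWeight G p ε ω) (4 * P) W' := by
  have hunblocked {v w : V} {c : C} :
      unblocked G ω v w c * unblocked G ω w v c ∈ Set.Icc 0 1 :=
    ⟨mul_nonneg unblocked_mem_Icc.1 unblocked_mem_Icc.1,
      mul_le_one₀ unblocked_mem_Icc.2 unblocked_mem_Icc.1 unblocked_mem_Icc.2⟩
  have hpos {v w : V} (hvw : (residual G ω).Adj v w) : 1 / 2 < remaining G p ε ω v w := by
    linarith [hgood v w hvw.1]
  refine ⟨fun e c => ?_, fun e he c => ?_, fun e he => ?_, fun e c => ?_, hload⟩ <;>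
    induction e using Sym2.ind with | _ v w
  · by_cases hvw : (residual G ω).Adj v w
    · rw [residualWeight_of_adj hvw]
      exact div_nonneg (mul_nonneg (h.rescaled_nonneg v w c) hunblocked.1)
        (by linarith [hpos hvw])
    · rw [residualWeight_of_not_adj hvw]
  · exact residualWeight_of_not_adj he
  · simp only [residualWeight_of_adj he, ← Finset.sum_div]
    exact div_self (ne_of_gt (by linarith [hpos he]) : remaining G p ε ω v w ≠ 0)
  · by_cases hvw : (residual G ω).Adj v w
    · rw [residualWeight_of_adj hvw, div_le_iff₀ (by linarith [hpos hvw])]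
      have hle := mul_le_of_le_one_right (h.rescaled_nonneg v w c)
        (hunblocked (v := v) (w := w) (c := c)).2
      nlinarith [h.rescaled_le v w c, h.le s(v, w) c, hpos hvw]
    · rw [residualWeight_of_not_adj hvw]
      linarith

theorem IsSupportColourable.of_residual (hω : weight (activationLaw p ε) ω ≠ 0)
    (hres : IsSupportColourable (residual G ω) (residualWeight G p ε ω)) :
    IsSupportColourable G p := by
  obtain ⟨γ, hsupp, hproper⟩ := hres
  have hex (e : Sym2 V) : ∃ c, e ∈ G.edgeSet → (e ∈ (residual G ω).edgeSet ∧ c = γ e) ∨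
      ∀ v w, e = s(v, w) → Receives G ω v w c := by
    by_cases he : e ∈ G.edgeSet
    · rcases mem_residual_edgeSet_or_exists_receives he ω with hr | ⟨c, hc⟩
      · exact ⟨γ e, fun _ => Or.inl ⟨hr, rfl⟩⟩
      · exact ⟨c, fun _ => Or.inr hc⟩
    · exact ⟨γ e, fun he' => absurd he' he⟩
  choose γ' hγ' using hex
  have hsound {v w : V} (hvw : G.Adj v w) :
      p s(v, w) (γ' s(v, w)) ≠ 0 ∧ unblocked G ω v w (γ' s(v, w)) = 1 := by
    rcases hγ' s(v, w) hvw with ⟨hr, hc⟩ | hc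
    · exact hc ▸ ne_zero_of_residualWeight_ne_zero (hsupp s(v, w) hr)
    · exact ⟨ne_zero_of_active_of_weight_ne_zero hω (hc v w rfl).1, (hc v w rfl).2.1⟩
  have hclash {v w z : V} (hvz : G.Adj v z) (hne : w ≠ z)
      (hw : Receives G ω v w (γ' s(v, w))) : γ' s(v, w) ≠ γ' s(v, z) := fun heq =>
    zero_ne_one ((active_eq_zero_of_unblocked (hsound hvz).2 hne).symm.trans (heq ▸ hw.1))
  refine ⟨γ', fun e he => ?_, fun e he f hf hne hvef => ?_⟩
  · induction e using Sym2.ind with | _ v w => exact (hsound he).1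
  · obtain ⟨v, ⟨w, rfl⟩, ⟨z, rfl⟩⟩ := hvef
    have hwz : w ≠ z := fun h => hne (by rw [h])
    rcases hγ' _ he with ⟨her, hec⟩ | hw
    · rcases hγ' _ hf with ⟨hfr, hfc⟩ | hz
      · rw [hec, hfc]
        exact hproper _ her _ hfr hne ⟨v, Sym2.mem_mk_left v w, Sym2.mem_mk_left v z⟩
      · exact (hclash he hwz.symm (hz v z rfl)).symm
    · exact hclash hf hwz (hw v w rfl)

variable [DecidableEq C]

/-- If `c` survives at both ends of an uncoloured edge without contributing to `survival`, then
the sole activated colour of the edge is unblocked at `w`, hence blocked at `v`. -/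
lemma unblocked_mul_unblocked_le (h : (residual G ω).Adj v w) (c : C) :
    unblocked G ω v w c * unblocked G ω w v c ≤
      survival G ω v w c + ∑ c', active G ω s(v, w) c' * (1 - unblocked G ω v w c') := by
  have hnonneg (c' : C) : 0 ≤ active G ω s(v, w) c' * (1 - unblocked G ω v w c') :=
    mul_nonneg active_mem_Icc.1 (sub_nonneg.mpr unblocked_mem_Icc.2)
  have hle : unblocked G ω v w c * unblocked G ω w v c ≤ unblocked G ω w v c :=
    mul_le_of_le_one_left unblocked_mem_Icc.1 unblocked_mem_Icc.2
  have hsum := sum_active_mul_one_sub_unblocked_nonneg (G := G) (ω := ω) v w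
  obtain ⟨c₀, hc₀⟩ | hnone := sole_eq_one_or_forall_eq_zero (G := G) ω s(v, w)
  · rw [survival, sum_sole_mul_eq hc₀]
    rcases unblocked_eq_zero_or_one (G := G) (ω := ω) (v := w) (w := v) (c := c₀) with hw | hw
    · rw [hw]
      linarith
    · have hv : unblocked G ω v w c₀ = 0 := unblocked_eq_zero_or_one.resolve_right fun hv =>
        h.2 c₀ ⟨active_eq_one_of_sole hc₀, hv, hw⟩
      have hone := Finset.single_le_sum (fun c' _ => hnonneg c') (Finset.mem_univ c₀)
      rw [hv, active_eq_one_of_sole hc₀] at hone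
      have hle_one : unblocked G ω w v c ≤ 1 := unblocked_mem_Icc.2
      rw [hw]
      linarith
  · simp only [survival, hnone, zero_mul, Finset.sum_const_zero, sub_zero, mul_one]
    linarith

namespace IsRoundInput

lemma sum_residualWeight_le (h : IsRoundInput G p P W ε) (hη : η < 1)
    (hgood : ∀ w, G.Adj v w → 1 - η < remaining G p ε ω v w) (c : C) :
    ∑ w, residualWeight G p ε ω s(v, w) c ≤
      (mainLoad G p ε ω v c + conflictLoad G p ε ω v c) / (1 - η) := by
  have hη0 : 0 < 1 - η := sub_pos.mpr hη
  have hsplit : mainLoad G p ε ω v c + conflictLoad G p ε ω v c = ∑ w, rescaled p ε v w c *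
      (survival G ω v w c + ∑ c', active G ω s(v, w) c' * (1 - unblocked G ω v w c')) := by
    simp only [mainLoad, conflictLoad, conflictLoadIn, mul_add, Finset.mul_sum,
      Finset.sum_add_distrib]
    rw [Finset.sum_comm]
  rw [hsplit, Finset.sum_div]
  refine Finset.sum_le_sum fun w _ => ?_
  have hterm : 0 ≤ rescaled p ε v w c * (survival G ω v w c +
      ∑ c', active G ω s(v, w) c' * (1 - unblocked G ω v w c')) :=
    mul_nonneg (h.rescaled_nonneg v w c) (add_nonneg survival_mem_Icc.1
      (sum_active_mul_one_sub_unblocked_nonneg v w))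
  by_cases hadj : (residual G ω).Adj v w
  · rw [residualWeight_of_adj hadj]
    exact div_le_div₀ hterm (mul_le_mul_of_nonneg_left (unblocked_mul_unblocked_le hadj c)
      (h.rescaled_nonneg v w c)) hη0 (hgood w hadj.1).le
  · rw [residualWeight_of_not_adj hadj]
    exact div_nonneg hterm hη0.le

lemma sum_residualWeight_le_of_isGoodAt (h : IsRoundInput G p P W ε) (hη : η < 1)
    (hgood : IsGoodAt G p W ε η t ω v) (hW' : 0 ≤ W')
    (hle : (W * (1 - ε * (1 - ε) ^ 2) / (1 - ε * W) + 12 * ε ^ 2 * W + 2 * t) / (1 - η) ≤ W')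
    (c : C) : ∑ w, residualWeight G p ε ω s(v, w) c ≤ W' := by
  by_cases hc : c ∈ usedColours p v
  · refine (h.sum_residualWeight_le hη hgood.lt_remaining c).trans (le_trans ?_ hle)
    refine div_le_div_of_nonneg_right ?_ (sub_pos.mpr hη).le
    linarith [hgood.mainLoad_lt c hc, hgood.conflictLoad_lt c hc]
  · rw [mem_usedColours] at hc
    push Not at hc
    refine (Finset.sum_nonpos fun w _ => ?_).trans hW'
    exact (not_not.mp (mt ne_zero_of_residualWeight_ne_zero fun hw => hw.1 (hc w))).le

end IsRoundInput

end Residual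

section Iteration

universe u v

/-- Fractional lists of load at most `W` suffice to colour every graph, provided that the local
counts `D` and `K` are small compared with `exp (θ / P)`, where `P` bounds the weights. -/
def IsColourableAtRate (θ W : ℝ) : Prop :=
  ∀ (V : Type u) (C : Type v) [Fintype V] [Fintype C] [Nonempty C] (G : SimpleGraph V)
    (p : Sym2 V → C → ℝ) (P : ℝ) (D K : ℕ), 0 < P → IsFracLists G p P W →
    IsLocallyBounded G p D K → (D : ℝ) ^ 3 * ((D + 2 * K) * Real.exp (-(θ / P))) ≤ 1 / 4 →
    IsSupportColourable G p

/-- Fractional lists of load at most `W` suffice to colour every graph at some positive rate, which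
depends on `W` alone. -/
def IsColourableLoad (W : ℝ) : Prop :=
  ∃ θ > 0, IsColourableAtRate.{u, v} θ W

variable {W W' ε η t δ : ℝ}

lemma isColourableLoad_of_le (hW : W ≤ 1 / 32) : IsColourableLoad.{u, v} W :=
  ⟨1, one_pos, fun _ _ _ _ _ _ _ _ _ _ _ h _ _ => h.isSupportColourable_of_load_le hW⟩

lemma IsColourableLoad.of_round (hε : ε ∈ Set.Icc 0 (1 / 8)) (hW : W ≤ 1)
    (hη : η ∈ Set.Ioc 0 (1 / 2)) (ht : t ∈ Set.Ioc 0 1) (hW' : 0 ≤ W')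
    (hle : (W * (1 - ε * (1 - ε) ^ 2) / (1 - ε * W) + 12 * ε ^ 2 * W + 2 * t) / (1 - η) ≤ W')
    (h : IsColourableLoad.{u, v} W') : IsColourableLoad.{u, v} W := by
  classical
  obtain ⟨θ', hθ', hcol⟩ := h
  obtain ⟨hη0, hη_le⟩ := hη
  have ht0 := ht.1
  refine ⟨min (θ' / 4) (min (η ^ 2 / 4) (t ^ 2 / 20)), by positivity, ?_⟩
  intro V C _ _ _ G p P D K hP hp hb hlll
  set θ := min (θ' / 4) (min (η ^ 2 / 4) (t ^ 2 / 20))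
  have hround : IsRoundInput G p P W ε := ⟨hp, hε.1, hε.2, hW⟩
  obtain ⟨ω, hω, hgood⟩ := hround.exists_forall_isGoodAt hb hP
    ⟨hη0.le, by linarith⟩ (Set.Ioc_subset_Icc_self ht)
    ((min_le_right _ _).trans (min_le_left _ _)) ((min_le_right _ _).trans (min_le_right _ _)) hlll
  have hres : IsFracLists (residual G ω) (residualWeight G p ε ω) (4 * P) W' :=
    hround.isFracLists_residual hP.le hη_le (fun v => (hgood v).lt_remaining) fun v =>
      hround.sum_residualWeight_le_of_isGoodAt (by linarith) (hgood v) hW' hle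
  have hrate : θ / P ≤ θ' / (4 * P) := by
    rw [← div_div]
    exact div_le_div_of_nonneg_right (min_le_left _ _) hP.le
  refine IsSupportColourable.of_residual hω
    (hcol V C _ _ (4 * P) D K (by positivity) hres (hb.residual ε ω) (le_trans ?_ hlll))
  gcongr

lemma round_load_le (hδ : δ ∈ Set.Ioo 0 1) (hW : W ∈ Set.Ioc 0 (1 - δ)) (hε : ε = δ / 100)
    (hη : η = δ ^ 2 / 1000) :
    (W * (1 - ε * (1 - ε) ^ 2) / (1 - ε * W) + 12 * ε ^ 2 * W + 2 * (η * W / 2)) / (1 - η) ≤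
      (1 - η) * W := by
  obtain ⟨hδ0, hδ1⟩ := hδ
  obtain ⟨hW0, hWδ⟩ := hW
  have hε0 : 0 < ε := by rw [hε]; positivity
  have hεδ : 0 < ε * δ := by positivity
  have hε_sq : ε ^ 2 = ε * δ / 100 := by rw [hε]; ring
  have hηεδ : η = ε * δ / 10 := by rw [hη, hε]; ring
  have hεδ_le : ε * δ ≤ 1 / 100 := by rw [hε]; nlinarith
  have hεW : ε * W ≤ ε * (1 - δ) := mul_le_mul_of_nonneg_left hWδ hε0.le
  have hmain : W * (1 - ε * (1 - ε) ^ 2) / (1 - ε * W) ≤ W * (1 - ε * δ / 2) := by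
    rw [div_le_iff₀ (by nlinarith), mul_assoc]
    refine mul_le_mul_of_nonneg_left ?_ hW0.le
    calc 1 - ε * (1 - ε) ^ 2 ≤ 1 - ε + 2 * ε ^ 2 := by nlinarith [pow_pos hε0 3]
      _ ≤ 1 - ε + ε * δ / 2 := by rw [hε_sq]; linarith
      _ ≤ (1 - ε * δ / 2) * (1 - ε * (1 - δ)) := by
        nlinarith [mul_pos (mul_pos hεδ hε0) (sub_pos.mpr hδ1)]
      _ ≤ (1 - ε * δ / 2) * (1 - ε * W) := mul_le_mul_of_nonneg_left (by linarith) (by linarith)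
  rw [div_le_iff₀ (by linarith), hηεδ, hε_sq]
  nlinarith [mul_pos (mul_pos hεδ hW0) hεδ]

lemma IsColourableLoad.of_one_sub_mul (hδ : δ ∈ Set.Ioo 0 1) (hW : W ∈ Set.Ioc 0 (1 - δ))
    (h : IsColourableLoad.{u, v} ((1 - δ ^ 2 / 1000) * W)) : IsColourableLoad.{u, v} W := by
  obtain ⟨hδ0, hδ1⟩ := hδ
  obtain ⟨hW0, hWδ⟩ := hW
  have hδ_sq : δ ^ 2 ≤ 1 := pow_le_one₀ hδ0.le hδ1.le
  refine h.of_round (ε := δ / 100) (η := δ ^ 2 / 1000) (t := δ ^ 2 / 1000 * W / 2)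
    ⟨by positivity, by linarith⟩ (by linarith) ⟨by positivity, by linarith⟩
    ⟨by positivity, by nlinarith⟩ (mul_nonneg (by linarith) hW0.le)
    (round_load_le ⟨hδ0, hδ1⟩ ⟨hW0, hWδ⟩ rfl rfl)

theorem isColourableLoad_one_sub (hδ : δ ∈ Set.Ioo 0 1) : IsColourableLoad.{u, v} (1 - δ) := by
  have hδ_sq : δ ^ 2 ≤ 1 := pow_le_one₀ hδ.1.le hδ.2.le
  have hr0 : 0 < 1 - δ ^ 2 / 1000 := by linarith
  have hr1 : 1 - δ ^ 2 / 1000 < 1 := sub_lt_self _ (div_pos (pow_pos hδ.1 2) (by norm_num))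
  have hload : 0 < 1 - δ := sub_pos.mpr hδ.2
  have hrounds (n : ℕ) (h : IsColourableLoad.{u, v} ((1 - δ ^ 2 / 1000) ^ n * (1 - δ))) :
      IsColourableLoad.{u, v} (1 - δ) := by
    induction n with
    | zero => simpa using h
    | succ n ih =>
      rw [pow_succ', mul_assoc] at h
      exact ih (h.of_one_sub_mul hδ ⟨by positivity,
        mul_le_of_le_one_left hload.le (pow_le_one₀ hr0.le hr1.le)⟩)
  obtain ⟨n, hn⟩ := exists_pow_lt_of_lt_one (show (0 : ℝ) < 1 / 32 by norm_num) hr1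
  refine hrounds n (isColourableLoad_of_le (le_trans ?_ hn.le))
  exact mul_le_of_le_one_right (by positivity) (by linarith [hδ.1])

end Iteration

section Lists

variable {V α : Type*} {G : SimpleGraph V} {L L' : Sym2 V → Finset α} {S : Finset α}
  {P W η : ℝ} {k : ℕ}

/-- The fractional lists of a list assignment `L`: every edge of `G` spreads its weight evenly over
its list. -/
noncomputable def uniformWeight (G : SimpleGraph V) (L : Sym2 V → Finset α) (e : Sym2 V)
    (c : α) : ℝ :=
  open scoped Classical in if e ∈ G.edgeSet ∧ c ∈ L e then 1 / (L e).card else 0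

lemma uniformWeight_nonneg (G : SimpleGraph V) (L : Sym2 V → Finset α) (e : Sym2 V) (c : α) :
    0 ≤ uniformWeight G L e c := by
  unfold uniformWeight
  split_ifs <;> positivity

lemma uniformWeight_of_mem {e : Sym2 V} {c : α} (he : e ∈ G.edgeSet) (hc : c ∈ L e) :
    uniformWeight G L e c = 1 / (L e).card :=
  if_pos ⟨he, hc⟩

lemma mem_of_uniformWeight_ne_zero {e : Sym2 V} {c : α} (h : uniformWeight G L e c ≠ 0) :
    e ∈ G.edgeSet ∧ c ∈ L e :=
  by_contra fun hmem => h (if_neg hmem)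

lemma sum_uniformWeight (hLS : ∀ e, L e ⊆ S) {e : Sym2 V} (he : e ∈ G.edgeSet)
    (hL : (L e).Nonempty) : ∑ c : S, uniformWeight G L e c = 1 := by
  classical
  rw [Finset.sum_coe_sort S (uniformWeight G L e), ← Finset.sum_subset (hLS e) fun c _ hc =>
    not_not.mp (mt mem_of_uniformWeight_ne_zero fun h => hc h.2),
    Finset.sum_congr rfl fun _ => uniformWeight_of_mem he, Finset.sum_const, nsmul_eq_mul]
  exact mul_one_div_cancel (mod_cast hL.card_ne_zero)

variable [Fintype V]

lemma isFracLists_uniformWeight (hLS : ∀ e, L e ⊆ S) (hP : 0 < P)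
    (hcard : ∀ e ∈ G.edgeSet, 1 / P ≤ (L e).card)
    (hload : ∀ v c, ∑ w, uniformWeight G L s(v, w) c ≤ W) :
    IsFracLists G (fun e (c : S) => uniformWeight G L e c) P W where
  nonneg e c := uniformWeight_nonneg G L e c
  eq_zero e he c := if_neg fun h => he h.1
  sum_eq_one e he := sum_uniformWeight hLS he
    (Finset.card_pos.mp (mod_cast (one_div_pos.mpr hP).trans_le (hcard e he)))
  le e c := by
    unfold uniformWeight
    split_ifs with h
    · simpa using one_div_le_one_div_of_le (one_div_pos.mpr hP) (hcard e h.1)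
    · exact hP.le
  load_le v c := hload v c

variable [DecidableRel G.Adj]

lemma isLocallyBounded_uniformWeight (hk : ∀ e, (L e).card ≤ k) :
    IsLocallyBounded G (fun e (c : S) => uniformWeight G L e c) (G.maxDegree + 1)
      (G.maxDegree * k) where
  card_closedNbhd_le v := by
    classical
    have hsub : closedNbhd G v ⊆ insert v (G.neighborFinset v) := fun w hw => by
      simpa using mem_closedNbhd.mp hw
    calc (closedNbhd G v).card ≤ (insert v (G.neighborFinset v)).card := Finset.card_le_card hsub
      _ ≤ G.degree v + 1 := Finset.card_insert_le _ _
      _ ≤ G.maxDegree + 1 := Nat.add_le_add_right (G.degree_le_maxDegree v) 1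
  card_usedColours_le v := by
    classical
    have hsub : (usedColours (fun e (c : S) => uniformWeight G L e c) v).map
        (Function.Embedding.subtype _) ⊆ (G.neighborFinset v).biUnion fun w => L s(v, w) := by
      intro _ hmap
      obtain ⟨c, hc, rfl⟩ := Finset.mem_map.mp hmap
      obtain ⟨w, hw⟩ := mem_usedColours.mp hc
      obtain ⟨hadj, hmem⟩ := mem_of_uniformWeight_ne_zero hw
      exact Finset.mem_biUnion.mpr ⟨w, (G.mem_neighborFinset v w).mpr hadj, hmem⟩
    calc (usedColours (fun e (c : S) => uniformWeight G L e c) v).card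
        ≤ ((G.neighborFinset v).biUnion fun w => L s(v, w)).card := by
          simpa only [Finset.card_map] using Finset.card_le_card hsub
      _ ≤ G.degree v * k := Finset.card_biUnion_le_card_mul _ _ _ fun w _ => hk s(v, w)
      _ ≤ G.maxDegree * k := Nat.mul_le_mul_right k (G.degree_le_maxDegree v)

lemma sum_uniformWeight_le_add (hL' : ∀ e, L' e ⊆ L e)
    (hcard : ∀ e, (L' e).card = min (L e).card k) (v : V) (c : α) :
    ∑ w, uniformWeight G L' s(v, w) c ≤ ∑ w, uniformWeight G L s(v, w) c + G.degree v / k := by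
  have hterm (w : V) : uniformWeight G L' s(v, w) c ≤
      uniformWeight G L s(v, w) c + if G.Adj v w then (1 : ℝ) / k else 0 := by
    by_cases h : uniformWeight G L' s(v, w) c = 0
    · rw [h]
      exact add_nonneg (uniformWeight_nonneg G L _ c) (by positivity)
    · obtain ⟨he, hc⟩ := mem_of_uniformWeight_ne_zero h
      have hinv : 0 ≤ (1 : ℝ) / k ∧ 0 ≤ (1 : ℝ) / (L s(v, w)).card := by constructor <;> positivity
      rw [uniformWeight_of_mem he hc, uniformWeight_of_mem he (hL' _ hc), hcard,
        if_pos (G.mem_edgeSet.mp he)]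
      rcases min_choice (L s(v, w)).card k with hmin | hmin <;> rw [hmin] <;> linarith
  calc ∑ w, uniformWeight G L' s(v, w) c
      ≤ ∑ w, (uniformWeight G L s(v, w) c + if G.Adj v w then (1 : ℝ) / k else 0) :=
        Finset.sum_le_sum fun w _ => hterm w
    _ = ∑ w, uniformWeight G L s(v, w) c + G.degree v / k := by
        rw [Finset.sum_add_distrib, ← Finset.sum_filter, Finset.sum_const,
          ← G.neighborFinset_eq_filter, G.card_neighborFinset_eq_degree, nsmul_eq_mul,
          mul_one_div]

lemma isFracLists_uniformWeight_of_truncation (hL'S : ∀ e, L' e ⊆ S)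
    (hL' : ∀ e, L' e ⊆ L e) (hcard : ∀ e, (L' e).card = min (L e).card k) (hP : 0 < P)
    (hlen : ∀ e ∈ G.edgeSet, 1 / P ≤ (L e).card) (hk : 1 / P ≤ k)
    (hdeg : (G.maxDegree : ℝ) / k ≤ η) (hload : ∀ v c, ∑ w, uniformWeight G L s(v, w) c ≤ W) :
    IsFracLists G (fun e (c : S) => uniformWeight G L' e c) P (W + η) := by
  refine isFracLists_uniformWeight hL'S hP (fun e he => ?_) fun v c => ?_
  · rw [hcard, Nat.cast_min]
    exact le_min (hlen e he) hk
  · calc ∑ w, uniformWeight G L' s(v, w) c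
        ≤ ∑ w, uniformWeight G L s(v, w) c + G.degree v / k :=
          sum_uniformWeight_le_add hL' hcard v c
      _ ≤ W + η := by
          refine add_le_add (hload v c) (le_trans ?_ hdeg)
          gcongr
          exact G.degree_le_maxDegree v

lemma sum_uniformWeight_eq_sum_incidenceFinset [DecidableEq V] [DecidableEq α] (v : V) (c : α) :
    ∑ w, uniformWeight G L s(v, w) c =
      ∑ e ∈ G.incidenceFinset v with c ∈ L e, 1 / ((L e).card : ℝ) := by
  have hsum : ∑ e ∈ G.incidenceFinset v with c ∈ L e, 1 / ((L e).card : ℝ) =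
      ∑ e ∈ G.incidenceFinset v with c ∈ L e, uniformWeight G L e c :=
    Finset.sum_congr rfl fun e he => by
      rw [Finset.mem_filter, G.mem_incidenceFinset] at he
      exact (uniformWeight_of_mem he.1.1 he.2).symm
  rw [hsum, ← sum_filter_mem_sym2 v fun e => uniformWeight G L e c]
  refine (Finset.sum_subset (fun e he => ?_) fun e he hnot => ?_).symm
  · rw [Finset.mem_filter, G.mem_incidenceFinset] at he
    simpa using he.1.2
  · by_contra h
    obtain ⟨hedge, hc⟩ := mem_of_uniformWeight_ne_zero h
    exact hnot (Finset.mem_filter.mpr ⟨(G.mem_incidenceFinset v e).mpr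
      ⟨hedge, (Finset.mem_filter.mp he).2⟩, hc⟩)

end Lists

section MatchingPolytope

variable {V : Type} [Fintype V] [DecidableEq V] {G : SimpleGraph V} [DecidableRel G.Adj]
  {x : G.edgeFinset → ℝ} {r : ℝ}

lemma sum_incident_le_one_of_mem_matchingPolytope (hx : x ∈ matchingPolytope G) (v : V) :
    ∑ e : G.edgeFinset with v ∈ e.1, x e ≤ 1 := by
  let l : (G.edgeFinset → ℝ) →ₗ[ℝ] ℝ := ∑ e : G.edgeFinset with v ∈ e.1, LinearMap.proj e
  have hl (y : G.edgeFinset → ℝ) : l y = ∑ e : G.edgeFinset with v ∈ e.1, y e := by simp [l]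
  suffices matchingPolytope G ⊆ {y | l y ≤ 1} from (hl x).symm.trans_le (this hx)
  refine convexHull_min ?_ (convex_halfSpace_le l.isLinear 1)
  rintro _ ⟨M, hM, rfl⟩
  rw [Set.mem_ofPred_eq, hl, Finset.sum_boole, Nat.cast_le_one, Finset.card_le_one]
  intro e he f hf
  simp only [Finset.mem_filter, Finset.mem_univ, true_and] at he hf
  by_contra hne
  exact hM.2 e he.2 f hf.2 (fun h => hne (Subtype.ext h)) v ⟨he.1, hf.1⟩

lemma sum_incident_le_of_mem_smul_matchingPolytope (hr : 0 ≤ r) (hx : x ∈ r • matchingPolytope G)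
    (v : V) : ∑ e : G.edgeFinset with v ∈ e.1, x e ≤ r := by
  obtain ⟨y, hy, rfl⟩ := hx
  simp only [Pi.smul_apply, smul_eq_mul, ← Finset.mul_sum]
  exact mul_le_of_le_one_right hr (sum_incident_le_one_of_mem_matchingPolytope hy v)

lemma sum_incidenceFinset_le_of_mem_smul_matchingPolytope {L : Sym2 V → Finset ℕ} (hr : 0 ≤ r)
    (hx : (fun e : G.edgeFinset => (1 : ℝ) / ((L (e : Sym2 V)).card : ℝ)) ∈ r • matchingPolytope G)
    (v : V) (c : ℕ) : ∑ e ∈ G.incidenceFinset v with c ∈ L e, 1 / ((L e).card : ℝ) ≤ r := by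
  refine le_trans ?_ (sum_incident_le_of_mem_smul_matchingPolytope hr hx v)
  rw [Finset.sum_filter (s := Finset.univ), Finset.sum_coe_sort G.edgeFinset
    fun e => if v ∈ e then 1 / ((L e).card : ℝ) else 0, ← Finset.sum_filter,
    ← G.incidenceFinset_eq_filter]
  exact Finset.sum_le_sum_of_subset_of_nonneg (Finset.filter_subset _ _)
    fun e _ _ => by positivity

end MatchingPolytope

section Colouring

open Filter

lemma pow_three_mul_exp_neg_log_le {d k : ℕ} {Δ : ℝ} (hΔ : 160 ≤ Δ) (hd : d ≤ Δ)
    (hk : k ≤ 2 * Δ ^ 2) : ((d + 1 : ℕ) : ℝ) ^ 3 *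
      (((d + 1 : ℕ) + 2 * (d * k : ℕ)) * Real.exp (-(7 * Real.log Δ))) ≤ 1 / 4 := by
  have hΔ0 : 0 < Δ := by linarith
  have hexp : Real.exp (-(7 * Real.log Δ)) = (Δ ^ 7)⁻¹ := by
    rw [Real.exp_neg, mul_comm, Real.exp_mul, Real.exp_log hΔ0]
    norm_cast
  have hd_succ : (d : ℝ) + 1 ≤ 2 * Δ := by linarith
  have hΔ_cube : 2 * Δ ≤ Δ ^ 3 := by nlinarith [mul_pos hΔ0 hΔ0]
  push_cast
  calc ((d : ℝ) + 1) ^ 3 * ((d + 1 + 2 * (d * k)) * Real.exp (-(7 * Real.log Δ)))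
      ≤ (2 * Δ) ^ 3 * ((Δ ^ 3 + 2 * (Δ * (2 * Δ ^ 2))) * (Δ ^ 7)⁻¹) := by
        rw [hexp]
        gcongr
        linarith
    _ = 40 / Δ := by field_simp; ring
    _ ≤ 1 / 4 := by rw [div_le_iff₀ hΔ0]; linarith

lemma eventually_const_mul_log_le_log_pow (κ : ℝ) {n : ℕ} (hn : 2 ≤ n) :
    ∀ᶠ Δ : ℝ in atTop, κ * Real.log Δ ≤ Real.log Δ ^ n := by
  filter_upwards [Real.tendsto_log_atTop.eventually_ge_atTop (max 1 κ)] with Δ hΔ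
  obtain ⟨hone, hκ⟩ := max_le_iff.mp hΔ
  calc κ * Real.log Δ ≤ Real.log Δ ^ 2 := by
        rw [sq]
        exact mul_le_mul_of_nonneg_right hκ (by linarith)
    _ ≤ Real.log Δ ^ n := pow_le_pow_right₀ hone hn

lemma eventually_const_mul_log_le (κ : ℝ) : ∀ᶠ Δ : ℝ in atTop, κ * Real.log Δ ≤ Δ := by
  filter_upwards [(Real.isLittleO_log_id_atTop.const_mul_left κ).bound one_pos,
    eventually_ge_atTop 0] with Δ hΔ hΔ0
  simpa [abs_of_nonneg hΔ0] using (le_abs_self _).trans hΔ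

lemma exists_natCast_mem_Icc {δ Δ : ℝ} (hδ : 0 < δ) (hΔ : 1 ≤ Δ) (hΔδ : 2 / δ ≤ Δ) :
    ∃ k : ℕ, (k : ℝ) ∈ Set.Icc (2 * Δ / δ) (2 * Δ ^ 2) := by
  refine ⟨⌈2 * Δ / δ⌉₊, Nat.le_ceil _, (Nat.ceil_lt_add_one (by positivity)).le.trans ?_⟩
  have hmul : 2 * Δ / δ ≤ Δ * Δ := by
    rw [mul_div_right_comm]
    exact mul_le_mul_of_nonneg_right hΔδ (by linarith)
  nlinarith

lemma exists_truncation {ι α : Type*} (L : ι → Finset α) (k : ℕ) :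
    ∃ L' : ι → Finset α, (∀ e, L' e ⊆ L e) ∧ ∀ e, (L' e).card = min (L e).card k := by
  choose L' hsub hcard using fun e => Finset.exists_subset_card_eq (min_le_left (L e).card k)
  exact ⟨L', hsub, hcard⟩

variable {V : Type} {G : SimpleGraph V}

lemma exists_isLEdgeColouring_of_isSupportColourable {L L' : Sym2 V → Finset ℕ}
    {S : Finset ℕ} (hL' : ∀ e, L' e ⊆ L e)
    (h : IsSupportColourable G fun e (c : S) => uniformWeight G L' e c) :
    ∃ γ : Sym2 V → ℕ, IsLEdgeColouring G L γ := by
  obtain ⟨γ, hsupp, hproper⟩ := h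
  exact ⟨fun e => γ e, fun e he => hL' e (mem_of_uniformWeight_ne_zero (hsupp e he)).2,
    fun e he f hf hne hv heq => hproper e he f hf hne hv (Subtype.ext heq)⟩

lemma IsColourableAtRate.exists_isLEdgeColouring [Fintype V] [DecidableRel G.Adj]
    {L : Sym2 V → Finset ℕ} {θ P W η : ℝ} {k : ℕ} (h : IsColourableAtRate.{0, 0} θ (W + η))
    (hP : 0 < P) (hlen : ∀ e ∈ G.edgeSet, 1 / P ≤ (L e).card) (hk : 1 / P ≤ k)
    (hdeg : (G.maxDegree : ℝ) / k ≤ η) (hload : ∀ v c, ∑ w, uniformWeight G L s(v, w) c ≤ W)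
    (hlll : ((G.maxDegree + 1 : ℕ) : ℝ) ^ 3 * (((G.maxDegree + 1 : ℕ) +
      2 * (G.maxDegree * k : ℕ)) * Real.exp (-(θ / P))) ≤ 1 / 4) :
    ∃ γ : Sym2 V → ℕ, IsLEdgeColouring G L γ := by
  classical
  obtain ⟨L', hL', hcard⟩ := exists_truncation L k
  let S : Finset ℕ := insert 0 (Finset.univ.biUnion L')
  have hS (e : Sym2 V) : L' e ⊆ S :=
    (Finset.subset_biUnion_of_mem L' (Finset.mem_univ e)).trans (Finset.subset_insert 0 _)
  have : Nonempty S := ⟨⟨0, Finset.mem_insert_self 0 _⟩⟩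
  exact exists_isLEdgeColouring_of_isSupportColourable hL' (h V S G _ P _ _ hP
    (isFracLists_uniformWeight_of_truncation hS hL' hcard hP hlen hk hdeg hload)
    (isLocallyBounded_uniformWeight fun e => (hcard e).trans_le (min_le_right _ _)) hlll)

end Colouring

end EdgeColouring

open EdgeColouring in
theorem stmt_4_general {δ : ℝ} (hδ : 0 < δ) (hδ_lt : δ < 1) :
    ∃ κ Δ₀ : ℝ, ∀ Δ : ℝ, Δ₀ ≤ Δ →
    ∀ (V : Type) [Fintype V] [DecidableEq V]
      (G : SimpleGraph V) [DecidableRel G.Adj] (L : Sym2 V → Finset ℕ),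
      (G.maxDegree : ℝ) ≤ Δ →
      (∀ e ∈ G.edgeFinset, κ * Real.log Δ ≤ ((L e).card : ℝ)) →
      (∀ v c, ∑ e ∈ G.incidenceFinset v with c ∈ L e, 1 / ((L e).card : ℝ) ≤ 1 - δ) →
      ∃ γ : Sym2 V → ℕ, IsLEdgeColouring G L γ := by
  obtain ⟨θ, hθ, hcol⟩ := isColourableLoad_one_sub.{0, 0} (δ := δ / 2) ⟨by linarith, by linarith⟩
  obtain ⟨Δ₀, hΔ₀⟩ := Filter.eventually_atTop.mp
    ((eventually_const_mul_log_le (7 / θ)).and (Filter.eventually_ge_atTop (max 160 (2 / δ))))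
  refine ⟨7 / θ, Δ₀, fun Δ hΔ V _ _ G _ L hdeg hlen hload => ?_⟩
  obtain ⟨hlog_le, hΔ_ge⟩ := hΔ₀ Δ hΔ
  obtain ⟨hΔ_large, hΔδ⟩ := max_le_iff.mp hΔ_ge
  obtain ⟨k, hΔk, hkΔ⟩ := exists_natCast_mem_Icc hδ (by linarith) hΔδ
  have hlog : 0 < Real.log Δ := Real.log_pos (by linarith)
  have hP_inv : 1 / (θ / (7 * Real.log Δ)) = 7 / θ * Real.log Δ := by
    rw [one_div_div, mul_div_right_comm]
  have hk : Δ ≤ k := le_trans (by rw [le_div_iff₀ hδ]; nlinarith) hΔk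
  rw [show 1 - δ / 2 = 1 - δ + δ / 2 by ring] at hcol
  refine hcol.exists_isLEdgeColouring (P := θ / (7 * Real.log Δ)) (k := k) (by positivity)
    (fun e he => hP_inv.trans_le (hlen e (G.mem_edgeFinset.mpr he))) (by linarith) ?_
    (fun v c => (sum_uniformWeight_eq_sum_incidenceFinset v c).trans_le (hload v c)) ?_
  · rw [div_le_iff₀ hδ] at hΔk
    rw [div_le_iff₀ (by linarith)]
    linarith
  · rw [div_div_cancel₀ hθ.ne']
    exact pow_three_mul_exp_neg_log_le hΔ_large hdeg hkΔ

theorem stmt_4 :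
    ∀ δ ν : ℝ, 0 < δ → δ < 1 → 0 < ν →
    ∃ Δ₀ : ℝ, ∀ Δ : ℝ, Δ₀ ≤ Δ →
    ∀ (V : Type) [Fintype V] [DecidableEq V]
      (G : SimpleGraph V) [DecidableRel G.Adj] (L : Sym2 V → Finset ℕ),
      (G.maxDegree : ℝ) ≤ Δ →
      -- (i)
      (∀ e ∈ G.edgeFinset, (Real.log Δ) ^ (25 : ℕ) ≤ ((L e).card : ℝ)) →
      -- (ii)
      (fun e : G.edgeFinset => (1 : ℝ) / ((L (e : Sym2 V)).card : ℝ)) ∈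
        (1 - δ) • matchingPolytope G →
      ∃ γ : Sym2 V → ℕ, IsLEdgeColouring G L γ := by
  intro δ _ hδ hδ_lt _
  obtain ⟨κ, Δ₀, hcol⟩ := stmt_4_general hδ hδ_lt
  obtain ⟨Δ₁, hΔ₁⟩ := Filter.eventually_atTop.mp
    (EdgeColouring.eventually_const_mul_log_le_log_pow κ (n := 25) (by norm_num))
  refine ⟨max Δ₀ Δ₁, fun Δ hΔ V _ _ G _ L hdeg hlen hx => ?_⟩
  obtain ⟨hΔ_ge₀, hΔ_ge₁⟩ := max_le_iff.mp hΔ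
  exact hcol Δ hΔ_ge₀ V G L hdeg (fun e he => (hΔ₁ Δ hΔ_ge₁).trans (hlen e he))
    (EdgeColouring.sum_incidenceFinset_le_of_mem_smul_matchingPolytope (sub_pos.mpr hδ_lt).le hx)
end

section
/- Let G = (V,E) be a finite k-uniform linear hypergraph with an edge correspondence σ and weighted lists of colours (L,μ) assigned to its edges, where all lists L(e) are finite. Let ℓ, n > 0 be such that, for all edges e ∈ E: (i) ℓ/n ≥ 3ek, (ii) |L(e)|_μ ≥ ℓ, and (iii) |N_{G,L,σ}(e,v,c)|_μ ≤ n for all v ∈ e and c ∈ L(e). Then G is (L,σ)-colourable. -/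
/-- Two hyperedges are incident if they are distinct and intersect. -/
def HIncident {V : Type} [DecidableEq V] (e f : Finset V) : Prop :=
  e ≠ f ∧ (e ∩ f).Nonempty

instance {V : Type} [DecidableEq V] (e f : Finset V) : Decidable (HIncident e f) :=
  inferInstanceAs (Decidable (e ≠ f ∧ (e ∩ f).Nonempty))

/-- `σ` is an edge correspondence on the edge set `E`: for incident edges,
`σ_{f,e}` is the inverse of `σ_{e,f}`. -/
def IsEdgeCorrespondence {V : Type} [DecidableEq V] (E : Finset (Finset V))
    (σ : Finset V → Finset V → ℕ ≃ ℕ) : Prop :=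
  ∀ e ∈ E, ∀ f ∈ E, HIncident e f → σ f e = (σ e f).symm

/-- The weighted size `|N_{G,L,σ}(e,v,c)|_μ` of the colour neighbourhood of `(e,v,c)`:
the `μ`-weight of all pairs `(f, c')` with `v ∈ f`, `f ≠ e`, `c' ∈ L f` and
`(f, c')` blocking `(e, c)`, i.e. `σ f e c' = c`. -/
def NWeight {V : Type} [DecidableEq V] (E : Finset (Finset V))
    (L : Finset V → Finset ℕ) (μ : Finset V → ℕ → ℝ)
    (σ : Finset V → Finset V → ℕ ≃ ℕ) (e : Finset V) (v : V) (c : ℕ) : ℝ :=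
  ∑ f ∈ E.filter (fun f => v ∈ f ∧ f ≠ e),
    ∑ c' ∈ (L f).filter (fun c' => σ f e c' = c), μ f c'

/-- An `(L,σ)`-colouring of the hypergraph with edge set `E`. -/
def IsLσColouring {V : Type} [DecidableEq V] (E : Finset (Finset V))
    (L : Finset V → Finset ℕ) (σ : Finset V → Finset V → ℕ ≃ ℕ)
    (γ : Finset V → ℕ) : Prop :=
  (∀ e ∈ E, γ e ∈ L e) ∧
  ∀ e ∈ E, ∀ f ∈ E, HIncident e f → σ e f (γ e) ≠ γ f

/-!
Colour the edges independently, the edge `e` receiving `c` with probability proportional to `μ e c`,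
and let `P S` be the probability that no two edges of `S` conflict. Averaging the bound on the
colour neighbourhoods shows that the probabilities of a conflict between `e` and the other edges sum
to at most `|e| n / ℓ ≤ 1 / 4`. For `f ∈ S`, a conflict between `e ∉ S` and `f` is independent of
`S \ {f}` being properly coloured, and inductively `P (S \ {f}) ≤ 2 P S`. A union bound then gives
`P S ≤ P (S ∪ {e}) + 1 / 4 * 2 P S`, that is `P S ≤ 2 P (S ∪ {e})`, so every `P S` is positive.
-/

open Finset Function

section Conflicts

variable {ι : Type*} {δ : ι → Type*} {R : ∀ i j, δ i → δ j → Prop}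

/-- The choice `γ` avoids the conflicts `R` between distinct elements of `S`. -/
def IsProperOn (R : ∀ i j, δ i → δ j → Prop) (S : Finset ι) (γ : ∀ i, δ i) : Prop :=
  (S : Set ι).Pairwise fun i j ↦ ¬ R i j (γ i) (γ j)

lemma IsProperOn.mono {S T : Finset ι} {γ : ∀ i, δ i} (hST : S ⊆ T) (hT : IsProperOn R T γ) :
    IsProperOn R S γ :=
  Set.Pairwise.mono (coe_subset.2 hST) hT

open scoped Classical in
/-- The total weight of the conflicts `R i j c d` between the choices `c ∈ t i` and `d ∈ t j`; the
probability of a conflict when the weights of each list have total `1`. -/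
noncomputable def conflictWeight {𝕜 : Type*} [Semiring 𝕜] (t : ∀ i, Finset (δ i))
    (w : ∀ i, δ i → 𝕜) (R : ∀ i j, δ i → δ j → Prop) (i j : ι) : 𝕜 :=
  ∑ c ∈ t i, w i c * ∑ d ∈ t j with R i j c d, w j d

lemma conflictWeight_nonneg {𝕜 : Type*} [Semiring 𝕜] [PartialOrder 𝕜] [IsOrderedRing 𝕜]
    {t : ∀ i, Finset (δ i)} {w : ∀ i, δ i → 𝕜} {i j : ι} (hi : ∀ c ∈ t i, 0 ≤ w i c)
    (hj : ∀ d ∈ t j, 0 ≤ w j d) : 0 ≤ conflictWeight t w R i j :=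
  sum_nonneg fun c hc ↦ mul_nonneg (hi c hc) <|
    sum_nonneg fun d hd ↦ by classical exact hj d (mem_filter.1 hd).1

lemma conflictWeight_div {𝕜 : Type*} [Semifield 𝕜] (t : ∀ i, Finset (δ i)) (w : ∀ i, δ i → 𝕜)
    (W : ι → 𝕜) (i j : ι) :
    conflictWeight t (fun i c ↦ w i c / W i) R i j = conflictWeight t w R i j / W j / W i := by
  simp only [conflictWeight, sum_div, mul_sum]
  exact sum_congr rfl fun c _ ↦ sum_congr rfl fun d _ ↦ by ring

variable [DecidableEq ι] {S : Finset ι} {i : ι} {γ : ∀ i, δ i}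

lemma IsProperOn.insert (hR : ∀ i j c d, R i j c d → R j i d c) (hS : IsProperOn R S γ)
    (hi : ∀ j ∈ S, ¬ R i j (γ i) (γ j)) : IsProperOn R (insert i S) γ := by
  rw [IsProperOn, coe_insert]
  exact Set.Pairwise.insert hS fun j hj _ ↦ ⟨hi j hj, fun h ↦ hi j hj (hR _ _ _ _ h)⟩

lemma isProperOn_update_iff (hi : i ∉ S) (c : δ i) :
    IsProperOn R S (update γ i c) ↔ IsProperOn R S γ := by
  refine forall₂_congr fun a ha ↦ forall₂_congr fun b hb ↦ ?_
  simp only [update_of_ne (ne_of_mem_of_not_mem ha hi), update_of_ne (ne_of_mem_of_not_mem hb hi)]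

variable {𝕜 : Type*} [Semiring 𝕜] [PartialOrder 𝕜] [IsOrderedRing 𝕜]

open scoped Classical in
lemma ite_isProperOn_le_add_sum (hR : ∀ i j c d, R i j c d → R j i d c) :
    (if IsProperOn R S γ then 1 else 0 : 𝕜) ≤ (if IsProperOn R (insert i S) γ then 1 else 0) +
      ∑ j ∈ S, if R i j (γ i) (γ j) ∧ IsProperOn R (S.erase j) γ then 1 else 0 := by
  by_cases hS : IsProperOn R S γ
  · by_cases hconflict : ∃ j ∈ S, R i j (γ i) (γ j)
    · obtain ⟨j, hj, hRj⟩ := hconflict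
      refine le_add_of_nonneg_of_le (ite_nonneg zero_le_one le_rfl) ?_
      refine le_trans ?_ (single_le_sum (fun j _ ↦ ite_nonneg zero_le_one le_rfl) hj)
      rw [if_pos hS, if_pos ⟨hRj, hS.mono (erase_subset j S)⟩]
    · push Not at hconflict
      rw [if_pos hS, if_pos (hS.insert hR hconflict)]
      exact le_add_of_nonneg_right (sum_nonneg fun j _ ↦ ite_nonneg zero_le_one le_rfl)
  · rw [if_neg hS]
    exact add_nonneg (ite_nonneg zero_le_one le_rfl)
      (sum_nonneg fun j _ ↦ ite_nonneg zero_le_one le_rfl)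

end Conflicts

section ProductExpectation

variable {ι : Type*} [Fintype ι] [DecidableEq ι] {δ : ι → Type*} {𝕜 : Type*} [CommSemiring 𝕜]

/-- The expectation of a function of `γ`, where the coordinates `γ i ∈ t i` are chosen independently
with weights `p i`. It is a genuine expectation when the
weights of each list have total `1`. -/
def productExpectation (t : ∀ i, Finset (δ i)) (p : ∀ i, δ i → 𝕜) : ((∀ i, δ i) → 𝕜) →ₗ[𝕜] 𝕜 :=
  ∑ γ ∈ Fintype.piFinset t, (∏ i, p i (γ i)) • LinearMap.proj γ

variable {t : ∀ i, Finset (δ i)} {p : ∀ i, δ i → 𝕜}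

lemma productExpectation_apply (F : (∀ i, δ i) → 𝕜) :
    productExpectation t p F = ∑ γ ∈ Fintype.piFinset t, (∏ i, p i (γ i)) * F γ := by
  simp [productExpectation]

lemma productExpectation_one (hp : ∀ i, ∑ c ∈ t i, p i c = 1) : productExpectation t p 1 = 1 := by
  simp [productExpectation_apply, ← prod_univ_sum, hp]

lemma mul_prod_update (p : ∀ i, δ i → 𝕜) (γ : ∀ i, δ i) (i : ι) (c : δ i) :
    p i (γ i) * ∏ j, p j (update γ i c j) = p i c * ∏ j, p j (γ j) := by
  simp only [apply_update p, prod_update_of_mem (mem_univ i)]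
  rw [← mul_prod_erase univ (fun j ↦ p j (γ j)) (mem_univ i), erase_eq, mul_left_comm]

lemma productExpectation_resample {i : ι} (hi : ∑ c ∈ t i, p i c = 1) (F : (∀ i, δ i) → 𝕜) :
    productExpectation t p F =
      productExpectation t p fun γ ↦ ∑ c ∈ t i, p i c * F (update γ i c) := by
  calc productExpectation t p F
      = ∑ x ∈ Fintype.piFinset t ×ˢ t i, p i x.2 * (∏ j, p j (x.1 j)) * F x.1 := by
        simp_rw [productExpectation_apply, sum_product, mul_assoc, ← sum_mul, hi, one_mul]
    _ = ∑ x ∈ Fintype.piFinset t ×ˢ t i,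
          p i x.2 * (∏ j, p j (x.1 j)) * F (update x.1 i x.2) := by
        -- Exchanging the `i`-th coordinate with the resampled value is an involution that
        -- preserves the weights.
        let swap (x : (∀ j, δ j) × δ i) : (∀ j, δ j) × δ i := (update x.1 i x.2, x.1 i)
        have swap_mem : ∀ x ∈ Fintype.piFinset t ×ˢ t i, swap x ∈ Fintype.piFinset t ×ˢ t i := by
          intro x hx
          simp only [mem_product, Fintype.mem_piFinset] at hx ⊢
          exact ⟨(forall_update_iff x.1 fun j c ↦ c ∈ t j).2 ⟨hx.2, fun j _ ↦ hx.1 j⟩, hx.1 i⟩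
        refine sum_nbij' swap swap swap_mem swap_mem (by simp [swap]) (by simp [swap]) fun x _ ↦ ?_
        simp only [swap, update_idem, update_eq_self, mul_prod_update]
    _ = productExpectation t p fun γ ↦ ∑ c ∈ t i, p i c * F (update γ i c) := by
        simp_rw [productExpectation_apply, sum_product, mul_sum, mul_left_comm, mul_assoc]

open scoped Classical in
lemma productExpectation_conflict_and {R : ∀ i j, δ i → δ j → Prop} {i j : ι} (hij : i ≠ j)
    (hi : ∑ c ∈ t i, p i c = 1) (hj : ∑ d ∈ t j, p j d = 1) {A : (∀ i, δ i) → Prop}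
    (hAi : ∀ γ c, A (update γ i c) ↔ A γ) (hAj : ∀ γ d, A (update γ j d) ↔ A γ) :
    productExpectation t p (fun γ ↦ if R i j (γ i) (γ j) ∧ A γ then 1 else 0) =
      conflictWeight t p R i j * productExpectation t p fun γ ↦ if A γ then 1 else 0 := by
  rw [productExpectation_resample hj, productExpectation_resample hi, ← smul_eq_mul, ← map_smul]
  congr 1
  ext γ
  simp only [hAi, hAj, update_self, update_of_ne hij, ite_and, conflictWeight, sum_filter,
    Pi.smul_apply, smul_eq_mul]
  by_cases hA : A γ <;> simp [hA]

open scoped Classical in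
/-- The probability that independent random choices with weights `p` avoid all conflicts `R` inside
`S`. -/
noncomputable def properProb (t : ∀ i, Finset (δ i)) (p : ∀ i, δ i → 𝕜)
    (R : ∀ i j, δ i → δ j → Prop) (S : Finset ι) : 𝕜 :=
  productExpectation t p fun γ ↦ if IsProperOn R S γ then 1 else 0

variable {R : ∀ i j, δ i → δ j → Prop} {S : Finset ι}

lemma properProb_empty (hp₁ : ∀ i, ∑ c ∈ t i, p i c = 1) : properProb t p R ∅ = 1 := by
  simpa [properProb, IsProperOn, Pi.one_def] using productExpectation_one hp₁

lemma exists_isProperOn_of_properProb_ne_zero (h : properProb t p R S ≠ 0) :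
    ∃ γ, (∀ i, γ i ∈ t i) ∧ IsProperOn R S γ := by
  rw [properProb, productExpectation_apply] at h
  obtain ⟨γ, hγ, hne⟩ := exists_ne_zero_of_sum_ne_zero h
  exact ⟨γ, Fintype.mem_piFinset.1 hγ, by_contra fun hS ↦ hne (by rw [if_neg hS, mul_zero])⟩

variable [PartialOrder 𝕜] [IsOrderedRing 𝕜]

lemma productExpectation_mono (hp : ∀ i, ∀ c ∈ t i, 0 ≤ p i c) :
    Monotone (productExpectation t p) := by
  intro F G hFG
  simp only [productExpectation_apply]
  exact sum_le_sum fun γ hγ ↦ mul_le_mul_of_nonneg_left (hFG γ) <|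
    prod_nonneg fun i _ ↦ hp i _ (Fintype.mem_piFinset.1 hγ i)

lemma properProb_nonneg (hp : ∀ i, ∀ c ∈ t i, 0 ≤ p i c) (S : Finset ι) :
    0 ≤ properProb t p R S := by
  rw [properProb, ← map_zero (productExpectation t p)]
  exact productExpectation_mono hp fun γ ↦ by dsimp only; split_ifs <;> simp

lemma properProb_le_insert_add_sum (hp : ∀ i, ∀ c ∈ t i, 0 ≤ p i c)
    (hp₁ : ∀ i, ∑ c ∈ t i, p i c = 1) (hR : ∀ i j c d, R i j c d → R j i d c) {i : ι}
    (hi : i ∉ S) :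
    properProb t p R S ≤ properProb t p R (insert i S) +
      ∑ j ∈ S, conflictWeight t p R i j * properProb t p R (S.erase j) := by
  classical
  calc properProb t p R S
      ≤ productExpectation t p ((fun γ ↦ if IsProperOn R (insert i S) γ then 1 else 0) +
          ∑ j ∈ S, fun γ ↦ if R i j (γ i) (γ j) ∧ IsProperOn R (S.erase j) γ then 1 else 0) :=
        productExpectation_mono hp fun γ ↦ by
          simpa only [Pi.add_apply, Finset.sum_apply] using ite_isProperOn_le_add_sum hR
    _ = _ := by
        rw [map_add, map_sum]
        refine congrArg₂ _ rfl (sum_congr rfl fun j hj ↦ ?_)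
        exact productExpectation_conflict_and (ne_of_mem_of_not_mem hj hi).symm (hp₁ i) (hp₁ j)
          (fun _ ↦ isProperOn_update_iff fun h ↦ hi (mem_of_mem_erase h))
          (fun _ ↦ isProperOn_update_iff (notMem_erase j S))

end ProductExpectation

section ExistsProper

variable {ι : Type*} [Fintype ι] [DecidableEq ι] {δ : ι → Type*} {𝕜 : Type*} [Field 𝕜]
  [LinearOrder 𝕜] [IsStrictOrderedRing 𝕜] {t : ∀ i, Finset (δ i)} {p : ∀ i, δ i → 𝕜}
  {R : ∀ i j, δ i → δ j → Prop}

lemma properProb_le_two_mul_insert (hp : ∀ i, ∀ c ∈ t i, 0 ≤ p i c)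
    (hp₁ : ∀ i, ∑ c ∈ t i, p i c = 1) (hR : ∀ i j c d, R i j c d → R j i d c)
    (hconflict : ∀ i, ∑ j ∈ univ.erase i, conflictWeight t p R i j ≤ 1 / 4) (S : Finset ι) :
    ∀ i ∉ S, properProb t p R S ≤ 2 * properProb t p R (insert i S) := by
  induction S using Finset.strongInduction with
  | H S ih =>
    intro i hi
    have herase : ∀ j ∈ S, properProb t p R (S.erase j) ≤ 2 * properProb t p R S := fun j hj ↦ by
      simpa only [insert_erase hj] using ih _ (erase_ssubset hj) j (notMem_erase j S)
    have hS : ∑ j ∈ S, conflictWeight t p R i j ≤ 1 / 4 :=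
      (sum_le_sum_of_subset_of_nonneg (subset_erase.2 ⟨subset_univ S, hi⟩)
        fun j _ _ ↦ conflictWeight_nonneg (hp i) (hp j)).trans (hconflict i)
    have hsum :=
      calc ∑ j ∈ S, conflictWeight t p R i j * properProb t p R (S.erase j)
          ≤ ∑ j ∈ S, conflictWeight t p R i j * (2 * properProb t p R S) :=
            sum_le_sum fun j hj ↦
              mul_le_mul_of_nonneg_left (herase j hj) (conflictWeight_nonneg (hp i) (hp j))
        _ = (∑ j ∈ S, conflictWeight t p R i j) * (2 * properProb t p R S) := (sum_mul ..).symm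
        _ ≤ 1 / 4 * (2 * properProb t p R S) :=
            mul_le_mul_of_nonneg_right hS (mul_nonneg zero_le_two (properProb_nonneg hp S))
    linarith [properProb_le_insert_add_sum hp hp₁ hR hi]

lemma properProb_pos (hp : ∀ i, ∀ c ∈ t i, 0 ≤ p i c) (hp₁ : ∀ i, ∑ c ∈ t i, p i c = 1)
    (hR : ∀ i j c d, R i j c d → R j i d c)
    (hconflict : ∀ i, ∑ j ∈ univ.erase i, conflictWeight t p R i j ≤ 1 / 4) (S : Finset ι) :
    0 < properProb t p R S := by
  induction S using Finset.induction_on with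
  | empty => simp only [properProb_empty hp₁, zero_lt_one]
  | insert i S hi ih => linarith [properProb_le_two_mul_insert hp hp₁ hR hconflict S i hi]

theorem exists_isProperOn_univ_of_sum_conflictWeight_le {w : ∀ i, δ i → 𝕜}
    (hw : ∀ i, ∀ c ∈ t i, 0 ≤ w i c) (hpos : ∀ i, 0 < ∑ c ∈ t i, w i c)
    (hR : ∀ i j c d, R i j c d → R j i d c)
    (hconflict : ∀ i, ∑ j ∈ univ.erase i, conflictWeight t w R i j / ∑ d ∈ t j, w j d ≤
      (∑ c ∈ t i, w i c) / 4) :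
    ∃ γ, (∀ i, γ i ∈ t i) ∧ IsProperOn R univ γ := by
  let W i := ∑ c ∈ t i, w i c
  have hp : ∀ i, ∀ c ∈ t i, 0 ≤ w i c / W i := fun i c hc ↦ div_nonneg (hw i c hc) (hpos i).le
  have hp₁ (i : ι) : ∑ c ∈ t i, w i c / W i = 1 := by rw [← sum_div, div_self (hpos i).ne']
  refine exists_isProperOn_of_properProb_ne_zero (properProb_pos hp hp₁ hR (fun i ↦ ?_) univ).ne'
  simp only [conflictWeight_div]
  rw [← sum_div, div_le_iff₀ (hpos i), one_div_mul_eq_div]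
  exact hconflict i

end ExistsProper

section Hypergraph

variable {V : Type} [DecidableEq V] {E : Finset (Finset V)} {σ : Finset V → Finset V → ℕ ≃ ℕ}
  {L : Finset V → Finset ℕ} {μ : Finset V → ℕ → ℝ}

lemma HIncident.symm {e f : Finset V} (h : HIncident e f) : HIncident f e :=
  ⟨h.1.symm, inter_comm e f ▸ h.2⟩

/-- The edges `e` and `f` are incident and `(e, c)` blocks `(f, d)`. -/
def Blocks (σ : Finset V → Finset V → ℕ ≃ ℕ) (e f : Finset V) (c d : ℕ) : Prop :=
  HIncident e f ∧ σ e f c = d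

lemma IsEdgeCorrespondence.blocks_comm (hσ : IsEdgeCorrespondence E σ) {e f : Finset V}
    (he : e ∈ E) (hf : f ∈ E) {c d : ℕ} : Blocks σ e f c d ↔ Blocks σ f e d c := by
  refine ⟨fun h ↦ ⟨h.1.symm, ?_⟩, fun h ↦ ⟨h.1.symm, ?_⟩⟩
  · rw [hσ e he f hf h.1, Equiv.symm_apply_eq, h.2]
  · rw [hσ f hf e he h.1, Equiv.symm_apply_eq, h.2]

open scoped Classical in
lemma sum_blocks_le_sum_NWeight (hσ : IsEdgeCorrespondence E σ)
    (hμ : ∀ e ∈ E, ∀ c ∈ L e, 0 ≤ μ e c) {e : Finset V} (he : e ∈ E) (c : ℕ) :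
    ∑ f ∈ E, ∑ d ∈ L f with Blocks σ e f c d, μ f d ≤ ∑ v ∈ e, NWeight E L μ σ e v c := by
  simp only [NWeight, sum_filter (s := E)]
  rw [sum_comm (s := e)]
  refine sum_le_sum fun f hf ↦ ?_
  have hnonneg : ∀ v ∈ e,
      0 ≤ if v ∈ f ∧ f ≠ e then ∑ d ∈ L f with σ f e d = c, μ f d else 0 := fun v _ ↦ by
    split_ifs
    exacts [sum_nonneg fun d hd ↦ hμ f hf d (mem_filter.1 hd).1, le_rfl]
  have hblocks (d : ℕ) : Blocks σ e f c d ↔ HIncident f e ∧ σ f e d = c := hσ.blocks_comm he hf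
  simp only [hblocks]
  by_cases hinc : HIncident f e
  · obtain ⟨v, hv⟩ := hinc.2
    obtain ⟨hvf, hve⟩ := mem_inter.1 hv
    simpa only [hinc, true_and, if_pos (And.intro hvf hinc.1)] using single_le_sum hnonneg hve
  · simpa only [hinc, false_and, filter_false, sum_empty] using sum_nonneg hnonneg

lemma sum_conflictWeight_blocks_le (hσ : IsEdgeCorrespondence E σ)
    (hμ : ∀ e ∈ E, ∀ c ∈ L e, 0 ≤ μ e c) {e : Finset V} (he : e ∈ E) :
    ∑ f ∈ E, conflictWeight L μ (Blocks σ) e f ≤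
      ∑ v ∈ e, ∑ c ∈ L e, μ e c * NWeight E L μ σ e v c := by
  simp only [conflictWeight]
  rw [sum_comm, sum_comm (s := e)]
  simp only [← mul_sum]
  exact sum_le_sum fun c hc ↦
    mul_le_mul_of_nonneg_left (sum_blocks_le_sum_NWeight hσ hμ he c) (hμ e he c hc)

lemma exists_isLσColouring_of_isProperOn {γ : E → ℕ} (hL : ∀ e : E, γ e ∈ L e)
    (hγ : IsProperOn (fun e f : E ↦ Blocks σ e f) univ γ) :
    ∃ γ' : Finset V → ℕ, IsLσColouring E L σ γ' := by
  refine ⟨fun e ↦ if he : e ∈ E then γ ⟨e, he⟩ else 0, fun e he ↦ ?_, fun e he f hf hinc h ↦ ?_⟩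
  · simpa only [dif_pos he] using hL ⟨e, he⟩
  · simp only [dif_pos he, dif_pos hf] at h
    exact hγ (mem_coe.2 (mem_univ ⟨e, he⟩)) (mem_coe.2 (mem_univ ⟨f, hf⟩))
      (fun hef ↦ hinc.1 (congrArg Subtype.val hef)) ⟨hinc, h⟩

lemma sum_conflictWeight_blocks_div_le {ℓ n : ℝ} (hσ : IsEdgeCorrespondence E σ)
    (hμ : ∀ e ∈ E, ∀ c ∈ L e, 0 ≤ μ e c) (hℓ : 0 < ℓ) (hL : ∀ e ∈ E, ℓ ≤ ∑ c ∈ L e, μ e c)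
    {e : Finset V} (he : e ∈ E) (hcard : 4 * #e * n ≤ ℓ)
    (hN : ∀ v ∈ e, ∑ c ∈ L e, μ e c * NWeight E L μ σ e v c ≤ n * ∑ c ∈ L e, μ e c) :
    ∑ f ∈ E, conflictWeight L μ (Blocks σ) e f / ∑ d ∈ L f, μ f d ≤
      (∑ c ∈ L e, μ e c) / 4 := by
  calc ∑ f ∈ E, conflictWeight L μ (Blocks σ) e f / ∑ d ∈ L f, μ f d
      ≤ ∑ f ∈ E, conflictWeight L μ (Blocks σ) e f / ℓ :=
        sum_le_sum fun f hf ↦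
          div_le_div_of_nonneg_left (conflictWeight_nonneg (hμ e he) (hμ f hf)) hℓ (hL f hf)
    _ = (∑ f ∈ E, conflictWeight L μ (Blocks σ) e f) / ℓ := (sum_div ..).symm
    _ ≤ #e • (n * ∑ c ∈ L e, μ e c) / ℓ :=
        div_le_div_of_nonneg_right
          ((sum_conflictWeight_blocks_le hσ hμ he).trans (sum_le_card_nsmul e _ _ hN)) hℓ.le
    _ = (4 * #e * n / ℓ) * ((∑ c ∈ L e, μ e c) / 4) := by rw [nsmul_eq_mul]; ring
    _ ≤ (∑ c ∈ L e, μ e c) / 4 :=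
        mul_le_of_le_one_left (div_nonneg (hℓ.le.trans (hL e he)) zero_le_four)
          (div_le_one_of_le₀ hcard hℓ.le)

lemma sum_mul_NWeight_le {n : ℝ} {e : Finset V} {v : V} (hμ : ∀ c ∈ L e, 0 ≤ μ e c)
    (hN : ∀ c ∈ L e, NWeight E L μ σ e v c ≤ n) :
    ∑ c ∈ L e, μ e c * NWeight E L μ σ e v c ≤ n * ∑ c ∈ L e, μ e c := by
  rw [mul_comm, sum_mul]
  exact sum_le_sum fun c hc ↦ mul_le_mul_of_nonneg_left (hN c hc) (hμ c hc)

lemma four_mul_mul_le_of_three_mul_exp_one_mul_le_div {k ℓ n : ℝ} (hk : 0 ≤ k) (hn : 0 < n)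
    (h : 3 * Real.exp 1 * k ≤ ℓ / n) : 4 * k * n ≤ ℓ := by
  have hexp : 4 ≤ 3 * Real.exp 1 := by linarith [Real.add_one_le_exp (1 : ℝ)]
  exact (le_div_iff₀ hn).1 ((mul_le_mul_of_nonneg_right hexp hk).trans h)

theorem stmt_5_general {ℓ n : ℝ} (hσ : IsEdgeCorrespondence E σ)
    (hμ : ∀ e ∈ E, ∀ c ∈ L e, 0 ≤ μ e c) (hℓ : 0 < ℓ) (hcard : ∀ e ∈ E, 4 * #e * n ≤ ℓ)
    (hL : ∀ e ∈ E, ℓ ≤ ∑ c ∈ L e, μ e c)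
    (hN : ∀ e ∈ E, ∀ v ∈ e,
      ∑ c ∈ L e, μ e c * NWeight E L μ σ e v c ≤ n * ∑ c ∈ L e, μ e c) :
    ∃ γ : Finset V → ℕ, IsLσColouring E L σ γ := by
  have hconflict (e : E) : ∑ f ∈ univ.erase e,
      conflictWeight L μ (Blocks σ) e f / ∑ d ∈ L f, μ f d ≤ (∑ c ∈ L e, μ e c) / 4 :=
    calc ∑ f ∈ univ.erase e, conflictWeight L μ (Blocks σ) e f / ∑ d ∈ L f, μ f d
        ≤ ∑ f : E, conflictWeight L μ (Blocks σ) e f / ∑ d ∈ L f, μ f d :=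
          sum_le_sum_of_subset_of_nonneg (erase_subset e univ) fun f _ _ ↦
            div_nonneg (conflictWeight_nonneg (hμ e e.2) (hμ f f.2)) (sum_nonneg (hμ f f.2))
      _ = ∑ f ∈ E, conflictWeight L μ (Blocks σ) e f / ∑ d ∈ L f, μ f d :=
          sum_coe_sort E fun f ↦ conflictWeight L μ (Blocks σ) e f / ∑ d ∈ L f, μ f d
      _ ≤ _ := sum_conflictWeight_blocks_div_le hσ hμ hℓ hL e.2 (hcard e e.2) (hN e e.2)
  obtain ⟨γ, hγL, hγ⟩ := exists_isProperOn_univ_of_sum_conflictWeight_le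
    (R := fun e f : E ↦ Blocks σ e f) (fun e : E ↦ hμ e e.2) (fun e ↦ hℓ.trans_le (hL e e.2))
    (fun e f c d ↦ (hσ.blocks_comm e.2 f.2).1) hconflict
  exact exists_isLσColouring_of_isProperOn hγL hγ

end Hypergraph

theorem stmt_5 :
    ∀ (V : Type) [Fintype V] [DecidableEq V] (k : ℕ)
      (E : Finset (Finset V)) (σ : Finset V → Finset V → ℕ ≃ ℕ)
      (L : Finset V → Finset ℕ) (μ : Finset V → ℕ → ℝ) (ℓ n : ℝ),
      -- G is k-uniform
      (∀ e ∈ E, e.card = k) →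
      -- G is linear
      (∀ e ∈ E, ∀ f ∈ E, e ≠ f → (e ∩ f).card ≤ 1) →
      IsEdgeCorrespondence E σ →
      -- (L, μ) is an assignment of weighted lists: weights lie in (0,1]
      (∀ e ∈ E, ∀ c ∈ L e, 0 < μ e c ∧ μ e c ≤ 1) →
      0 < ℓ → 0 < n →
      -- (i)
      3 * Real.exp 1 * k ≤ ℓ / n →
      -- (ii)
      (∀ e ∈ E, ℓ ≤ ∑ c ∈ L e, μ e c) →
      -- (iii)
      (∀ e ∈ E, ∀ v ∈ e, ∀ c ∈ L e, NWeight E L μ σ e v c ≤ n) →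
      ∃ γ : Finset V → ℕ, IsLσColouring E L σ γ := by
  intro V _ _ k E σ L μ ℓ n hk _ hσ hμ hℓ hn hi hii hiii
  exact stmt_5_general hσ (fun e he c hc ↦ (hμ e he c hc).1.le) hℓ
    (fun e he ↦ hk e he ▸ four_mul_mul_le_of_three_mul_exp_one_mul_le_div k.cast_nonneg hn hi) hii
    fun e he v hv ↦ sum_mul_NWeight_le (fun c hc ↦ (hμ e he c hc).1.le) (hiii e he v hv)
end

section
/- Let G = (V,E) be a finite k-uniform linear hypergraph with a vertex correspondence σ and weighted lists of colours (L,μ) assigned to its vertices, where each list L(v) is finite. Let ℓ, n > 0 be such that: (i) ℓ/n ≥ 3e, (ii) |L(v)|_μ ≥ ℓ for all v ∈ V, and (iii) |N_{G,L,σ}(v,c)|_μ ≤ n for all v ∈ V and c ∈ L(v). Then G has an (L,σ)-colouring. -/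
/-- Two vertices of the hypergraph with edge set `E` are adjacent if they are distinct
and some edge contains both. -/
def HAdj {V : Type} (E : Finset (Finset V)) (u v : V) : Prop :=
  u ≠ v ∧ ∃ e ∈ E, u ∈ e ∧ v ∈ e

instance {V : Type} [DecidableEq V] (E : Finset (Finset V)) (u v : V) :
    Decidable (HAdj E u v) :=
  inferInstanceAs (Decidable (u ≠ v ∧ ∃ e ∈ E, u ∈ e ∧ v ∈ e))

/-- `σ` is a vertex correspondence: for adjacent vertices, `σ_{v,u}` is the inverse
of `σ_{u,v}`. -/
def IsVertexCorrespondence {V : Type} (E : Finset (Finset V))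
    (σ : V → V → ℕ ≃ ℕ) : Prop :=
  ∀ u v : V, HAdj E u v → σ v u = (σ u v).symm

/-- The weighted size `|N_{G,L,σ}(v,c)|_μ`: the `μ`-weight of all pairs `(w, c')` with
`w` adjacent to `v`, `c' ∈ L w` and `(w, c')` blocking `(v, c)`, i.e. `σ w v c' = c`. -/
def NWeightV {V : Type} [Fintype V] [DecidableEq V] (E : Finset (Finset V))
    (L : V → Finset ℕ) (μ : V → ℕ → ℝ) (σ : V → V → ℕ ≃ ℕ) (v : V) (c : ℕ) : ℝ :=
  ∑ w ∈ Finset.univ.filter (fun w => HAdj E w v),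
    ∑ c' ∈ (L w).filter (fun c' => σ w v c' = c), μ w c'

/-- An `(L,σ)`-colouring of the vertices of the hypergraph with edge set `E`. -/
def IsLσVertexColouring {V : Type} (E : Finset (Finset V)) (L : V → Finset ℕ)
    (σ : V → V → ℕ ≃ ℕ) (γ : V → ℕ) : Prop :=
  (∀ v : V, γ v ∈ L v) ∧
  ∀ u v : V, HAdj E u v → σ u v (γ u) ≠ γ v

/-!
Choose the colours independently, the colour of `v` with probability proportional to its weight,
and let `Q S` be the event that no two vertices of `S` receive conflicting colours. The counting
argument of Rosenfeld shows `P (Q S) ≤ 2 * P (Q (insert v S))` by induction on `S`: if `Q S` holds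
and `Q (insert v S)` fails, then `v` conflicts with some `u ∈ S`, while `Q (S.erase u)` holds
independently of the colours of `u` and `v`, and `P (Q (S.erase u)) ≤ 2 * P (Q S)` by induction.
If the probabilities of the colours conflicting with a given one sum to at most `1 / 4`, the union
bound gives `P (Q S) - P (Q (insert v S)) ≤ P (Q S) / 2`. Hence every `Q S` has positive
probability.
-/

open MeasureTheory ProbabilityTheory

section RandomColours

variable {V Ω : Type*} {C : V → Type*} {H : SimpleGraph (Σ v, C v)} {X : ∀ v, Ω → C v}

/-- The event that the random colours `X v` of the vertices `v ∈ S` do not conflict, where `H` is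
the graph of conflicts between (vertex, colour) pairs. -/
def conflictFree (H : SimpleGraph (Σ v, C v)) (X : ∀ v, Ω → C v) (S : Finset V) : Set Ω :=
  {ω | ∀ u ∈ S, ∀ v ∈ S, ¬ H.Adj ⟨u, X u ω⟩ ⟨v, X v ω⟩}

theorem conflictFree_anti : Antitone (conflictFree H X) :=
  fun _ _ hST _ hω u hu v hv => hω u (hST hu) v (hST hv)

theorem mem_conflictFree_insert [DecidableEq V] {S : Finset V} {v : V} {ω : Ω} :
    ω ∈ conflictFree H X (insert v S) ↔
      ω ∈ conflictFree H X S ∧ ∀ u ∈ S, ¬ H.Adj ⟨v, X v ω⟩ ⟨u, X u ω⟩ := by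
  simp only [conflictFree, Set.mem_ofPred_eq, Finset.forall_mem_insert, H.irrefl,
    not_false_eq_true, true_and, H.adj_comm _ ⟨v, X v ω⟩]
  grind

theorem conflictFree_subset_insert_union [DecidableEq V] [H.LocallyFinite] (S : Finset V) (v : V) :
    conflictFree H X S ⊆ conflictFree H X (insert v S) ∪
      ⋃ d, ⋃ y ∈ {y ∈ H.neighborFinset ⟨v, d⟩ | y.1 ∈ S},
        conflictFree H X (S.erase y.1) ∩ (X v ⁻¹' {d} ∩ X y.1 ⁻¹' {y.2}) := by
  intro ω hS
  refine or_iff_not_imp_left.mpr fun hvS => ?_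
  obtain ⟨u, huS, hadj⟩ : ∃ u ∈ S, H.Adj ⟨v, X v ω⟩ ⟨u, X u ω⟩ := by
    simpa [mem_conflictFree_insert, hS] using hvS
  simp only [Set.mem_iUnion, Finset.mem_filter, SimpleGraph.mem_neighborFinset]
  exact ⟨X v ω, ⟨u, X u ω⟩, ⟨hadj, huS⟩, conflictFree_anti (S.erase_subset u) hS, rfl, rfl⟩

variable [MeasurableSpace Ω] {P : Measure Ω} [∀ v, MeasurableSpace (C v)]
  [∀ v, DiscreteMeasurableSpace (C v)]

theorem measureReal_conflictFree_inter [∀ v, Countable (C v)]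
    (hX : ∀ v, Measurable (X v)) (hindep : iIndepFun X P)
    {S : Finset V} {u v : V} (hu : u ∉ S) (hv : v ∉ S) (huv : u ≠ v) (c : C u) (d : C v) :
    P.real (conflictFree H X S ∩ (X u ⁻¹' {c} ∩ X v ⁻¹' {d})) =
      P.real (conflictFree H X S) * (P.real (X u ⁻¹' {c}) * P.real (X v ⁻¹' {d})) := by
  classical
  have hdisj : Disjoint S {u, v} := by simp [hu, hv]
  have hS : conflictFree H X S = (fun ω (w : S) => X w ω) ⁻¹'
      {g | ∀ a b : S, ¬ H.Adj ⟨a, g a⟩ ⟨b, g b⟩} := by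
    ext ω
    simp [conflictFree]
  have huv_event : X u ⁻¹' {c} ∩ X v ⁻¹' {d} =
      (fun ω (w : ({u, v} : Finset V)) => X w ω) ⁻¹'
        {g | g ⟨u, by simp⟩ = c ∧ g ⟨v, by simp⟩ = d} := rfl
  have hpair : P.real (X u ⁻¹' {c} ∩ X v ⁻¹' {d}) =
      P.real (X u ⁻¹' {c}) * P.real (X v ⁻¹' {d}) := by
    simp only [measureReal_def, ← ENNReal.toReal_mul,
      (hindep.indepFun huv).measure_inter_preimage_eq_mul _ _ .of_discrete .of_discrete]
  rw [← hpair, hS, huv_event]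
  simp only [measureReal_def, ← ENNReal.toReal_mul,
    (hindep.indepFun_finset S {u, v} hdisj hX).measure_inter_preimage_eq_mul _ _
      .of_discrete .of_discrete]

theorem measureReal_conflictFree_le_add [DecidableEq V] [∀ v, Fintype (C v)]
    [H.LocallyFinite] (hX : ∀ v, Measurable (X v)) (hindep : iIndepFun X P) {S : Finset V} {v : V}
    (hv : v ∉ S) :
    P.real (conflictFree H X S) ≤ P.real (conflictFree H X (insert v S)) +
      ∑ d, P.real (X v ⁻¹' {d}) * ∑ y ∈ H.neighborFinset ⟨v, d⟩ with y.1 ∈ S,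
        P.real (X y.1 ⁻¹' {y.2}) * P.real (conflictFree H X (S.erase y.1)) := by
  have := hindep.isProbabilityMeasure
  calc P.real (conflictFree H X S)
    _ ≤ P.real (conflictFree H X (insert v S)) +
        P.real (⋃ d, ⋃ y ∈ {y ∈ H.neighborFinset ⟨v, d⟩ | y.1 ∈ S},
          conflictFree H X (S.erase y.1) ∩ (X v ⁻¹' {d} ∩ X y.1 ⁻¹' {y.2})) :=
      (measureReal_mono (conflictFree_subset_insert_union S v)).trans (measureReal_union_le _ _)
    _ ≤ P.real (conflictFree H X (insert v S)) +
        ∑ d, ∑ y ∈ H.neighborFinset ⟨v, d⟩ with y.1 ∈ S,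
          P.real (conflictFree H X (S.erase y.1) ∩ (X v ⁻¹' {d} ∩ X y.1 ⁻¹' {y.2})) := by
      gcongr
      exact (measureReal_iUnion_fintype_le _).trans
        (Finset.sum_le_sum fun d _ => measureReal_biUnion_finset_le _ _)
    _ = _ := by
      simp only [Finset.mul_sum]
      congr! 3 with d _ y hy
      have hyS : y.1 ∈ S := (Finset.mem_filter.mp hy).2
      rw [measureReal_conflictFree_inter hX hindep (fun h => hv (Finset.mem_of_mem_erase h))
        (S.notMem_erase y.1) (ne_of_mem_of_not_mem hyS hv).symm]
      ring

theorem measureReal_conflictFree_le_two_mul_insert [DecidableEq V] [∀ v, Finite (C v)]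
    [H.LocallyFinite] (hX : ∀ v, Measurable (X v)) (hindep : iIndepFun X P)
    (hH : ∀ x, ∑ y ∈ H.neighborFinset x, P.real (X y.1 ⁻¹' {y.2}) ≤ 1 / 4)
    {S : Finset V} {v : V} (hv : v ∉ S) :
    P.real (conflictFree H X S) ≤ 2 * P.real (conflictFree H X (insert v S)) := by
  have (v : V) := Fintype.ofFinite (C v)
  induction S using Finset.strongInduction generalizing v with
  | H S ih =>
  have herase {u : V} (hu : u ∈ S) :
      P.real (conflictFree H X (S.erase u)) ≤ 2 * P.real (conflictFree H X S) := by
    simpa only [Finset.insert_erase hu] using ih _ (Finset.erase_ssubset hu) (S.notMem_erase u)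
  have hconflict (d : C v) :
      ∑ y ∈ H.neighborFinset ⟨v, d⟩ with y.1 ∈ S,
        P.real (X y.1 ⁻¹' {y.2}) * P.real (conflictFree H X (S.erase y.1)) ≤
      P.real (conflictFree H X S) / 2 := by
    calc _ ≤ ∑ y ∈ H.neighborFinset ⟨v, d⟩ with y.1 ∈ S,
            P.real (X y.1 ⁻¹' {y.2}) * (2 * P.real (conflictFree H X S)) := by
          gcongr with y hy
          exact herase (Finset.mem_filter.mp hy).2
      _ ≤ ∑ y ∈ H.neighborFinset ⟨v, d⟩,
            P.real (X y.1 ⁻¹' {y.2}) * (2 * P.real (conflictFree H X S)) :=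
          Finset.sum_le_sum_of_subset_of_nonneg (Finset.filter_subset _ _)
            fun _ _ _ => by positivity
      _ ≤ 1 / 4 * (2 * P.real (conflictFree H X S)) := by
          rw [← Finset.sum_mul]
          gcongr
          exact hH _
      _ = P.real (conflictFree H X S) / 2 := by ring
  have := hindep.isProbabilityMeasure
  have htotal : ∑ d, P.real (X v ⁻¹' {d}) = 1 := by
    rw [sum_measureReal_preimage_singleton _ fun d _ => hX v .of_discrete]
    simp
  have hfail : ∑ d, P.real (X v ⁻¹' {d}) * ∑ y ∈ H.neighborFinset ⟨v, d⟩ with y.1 ∈ S,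
        P.real (X y.1 ⁻¹' {y.2}) * P.real (conflictFree H X (S.erase y.1)) ≤
      P.real (conflictFree H X S) / 2 := by
    rw [← one_mul (_ / 2), ← htotal, Finset.sum_mul]
    gcongr with d
    exact hconflict d
  linarith [measureReal_conflictFree_le_add (H := H) hX hindep hv]

theorem measureReal_conflictFree_pos [∀ v, Finite (C v)] [H.LocallyFinite]
    (hX : ∀ v, Measurable (X v)) (hindep : iIndepFun X P)
    (hH : ∀ x, ∑ y ∈ H.neighborFinset x, P.real (X y.1 ⁻¹' {y.2}) ≤ 1 / 4) (S : Finset V) :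
    0 < P.real (conflictFree H X S) := by
  classical
  have := hindep.isProbabilityMeasure
  induction S using Finset.induction_on with
  | empty => simp [conflictFree]
  | insert v S hv ih =>
    linarith [measureReal_conflictFree_le_two_mul_insert hX hindep hH hv]

end RandomColours

section IndependentTransversals

variable {V : Type*} [Finite V] {C : V → Type*} (H : SimpleGraph (Σ v, C v))
  [H.LocallyFinite]

theorem exists_forall_not_adj_of_sum_pmf_le [∀ v, Finite (C v)] (q : ∀ v, PMF (C v))
    (hH : ∀ x, ∑ y ∈ H.neighborFinset x, (q y.1 y.2).toReal ≤ 1 / 4) :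
    ∃ γ : ∀ v, C v, ∀ u v, ¬ H.Adj ⟨u, γ u⟩ ⟨v, γ v⟩ := by
  have := Fintype.ofFinite V
  let (v : V) : MeasurableSpace (C v) := ⊤
  let P := Measure.pi fun v => (q v).toMeasure
  have hindep : iIndepFun (fun v (γ : ∀ v, C v) => γ v) P :=
    iIndepFun_pi (X := fun _ => id) fun _ => aemeasurable_id
  have hP (v : V) (c : C v) : P.real ((fun γ => γ v) ⁻¹' {c}) = (q v c).toReal := by
    have := (measurePreserving_eval (fun v => (q v).toMeasure) v).measure_preimage
      (MeasurableSet.of_discrete (s := {c})).nullMeasurableSet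
    rw [PMF.toMeasure_apply_singleton _ _ .of_discrete] at this
    exact congrArg ENNReal.toReal this
  have hpos := measureReal_conflictFree_pos (H := H) (fun v => measurable_pi_apply v) hindep
    (by simpa only [hP] using hH) Finset.univ
  obtain ⟨γ, hγ⟩ := nonempty_of_measureReal_ne_zero hpos.ne'
  exact ⟨γ, fun u v => hγ u (Finset.mem_univ u) v (Finset.mem_univ v)⟩

theorem exists_forall_not_adj_of_sum_weight_le [∀ v, Fintype (C v)] (μ : ∀ v, C v → ℝ)
    {ℓ n : ℝ} (hμ : ∀ v c, 0 ≤ μ v c) (hℓ : 0 < ℓ) (hn : 4 * n ≤ ℓ) (hlist : ∀ v, ℓ ≤ ∑ c, μ v c)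
    (hH : ∀ x, ∑ y ∈ H.neighborFinset x, μ y.1 y.2 ≤ n) :
    ∃ γ : ∀ v, C v, ∀ u v, ¬ H.Adj ⟨u, γ u⟩ ⟨v, γ v⟩ := by
  let p (v : V) (c : C v) : ℝ := μ v c / ∑ c, μ v c
  have hp (v : V) (c : C v) : 0 ≤ p v c := div_nonneg (hμ v c) (hℓ.le.trans (hlist v))
  have hp_sum (v : V) : ∑ c, ENNReal.ofReal (p v c) = 1 := by
    rw [← ENNReal.ofReal_sum_of_nonneg fun c _ => hp v c, ← Finset.sum_div,
      div_self (hℓ.trans_le (hlist v)).ne', ENNReal.ofReal_one]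
  refine exists_forall_not_adj_of_sum_pmf_le H (fun v => .ofFintype _ (hp_sum v)) fun x => ?_
  calc ∑ y ∈ H.neighborFinset x, (ENNReal.ofReal (p y.1 y.2)).toReal
    _ = ∑ y ∈ H.neighborFinset x, p y.1 y.2 :=
      Finset.sum_congr rfl fun y _ => ENNReal.toReal_ofReal (hp y.1 y.2)
    _ ≤ ∑ y ∈ H.neighborFinset x, μ y.1 y.2 / ℓ :=
      Finset.sum_le_sum fun y _ => div_le_div_of_nonneg_left (hμ _ _) hℓ (hlist _)
    _ ≤ 1 / 4 := by
      rw [← Finset.sum_div, div_le_iff₀ hℓ]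
      linarith [hH x]

end IndependentTransversals

section VertexCorrespondence

variable {V : Type} {E : Finset (Finset V)} {σ : V → V → ℕ ≃ ℕ}

theorem HAdj.symm {u v : V} (h : HAdj E u v) : HAdj E v u :=
  let ⟨huv, e, he, hu, hv⟩ := h
  ⟨huv.symm, e, he, hv, hu⟩

/-- The graph on the pairs of a vertex and a colour from its list in which adjacency means that
the pairs block each other. -/
def blockingGraph (L : V → Finset ℕ) (hσ : IsVertexCorrespondence E σ) :
    SimpleGraph (Σ v, L v) where
  Adj x y := HAdj E x.1 y.1 ∧ σ x.1 y.1 x.2 = y.2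
  symm := ⟨fun x y h => ⟨h.1.symm, by rw [hσ _ _ h.1, ← h.2, Equiv.symm_apply_apply]⟩⟩
  loopless := ⟨fun _ h => h.1.1 rfl⟩

theorem sum_neighborFinset_blockingGraph [Fintype V] [DecidableEq V] {L : V → Finset ℕ}
    (hσ : IsVertexCorrespondence E σ) [(blockingGraph L hσ).LocallyFinite] (μ : V → ℕ → ℝ)
    (x : Σ v, L v) :
    ∑ y ∈ (blockingGraph L hσ).neighborFinset x, μ y.1 y.2 = NWeightV E L μ σ x.1 x.2 := by
  have hN : (blockingGraph L hσ).neighborFinset x =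
      Finset.univ.filter fun y => HAdj E y.1 x.1 ∧ σ y.1 x.1 y.2 = x.2 := by
    ext y
    rw [SimpleGraph.mem_neighborFinset, SimpleGraph.adj_comm, Finset.mem_filter_univ]
    rfl
  rw [hN, Finset.sum_filter, Fintype.sum_sigma, NWeightV, Finset.sum_filter]
  refine Finset.sum_congr rfl fun w _ => ?_
  by_cases hw : HAdj E w x.1
  · simp only [hw, true_and, if_true, Finset.sum_filter]
    exact Finset.sum_coe_sort (L w) fun c => if σ w x.1 c = x.2 then μ w c else 0
  · simp [hw]

end VertexCorrespondence

theorem stmt_7_general {V : Type} [Fintype V] [DecidableEq V] (E : Finset (Finset V))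
    (σ : V → V → ℕ ≃ ℕ) (L : V → Finset ℕ) (μ : V → ℕ → ℝ) (ℓ n : ℝ)
    (hσ : IsVertexCorrespondence E σ) (hμ : ∀ v, ∀ c ∈ L v, 0 ≤ μ v c) (hℓ : 0 < ℓ)
    (hn : 4 * n ≤ ℓ) (hL : ∀ v, ℓ ≤ ∑ c ∈ L v, μ v c)
    (hN : ∀ v, ∀ c ∈ L v, NWeightV E L μ σ v c ≤ n) :
    ∃ γ : V → ℕ, IsLσVertexColouring E L σ γ := by
  classical
  obtain ⟨γ, hγ⟩ := exists_forall_not_adj_of_sum_weight_le (blockingGraph L hσ)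
    (fun v c => μ v c) (fun v c => hμ v c c.2) hℓ hn
    (fun v => (hL v).trans_eq (Finset.sum_coe_sort (L v) (μ v)).symm)
    (fun x => (sum_neighborFinset_blockingGraph hσ μ x).trans_le (hN x.1 x.2 x.2.2))
  exact ⟨fun v => γ v, fun v => (γ v).2, fun u v huv hblocks => hγ u v ⟨huv, hblocks⟩⟩

theorem stmt_7 :
    ∀ (V : Type) [Fintype V] [DecidableEq V] (k : ℕ)
      (E : Finset (Finset V)) (σ : V → V → ℕ ≃ ℕ)
      (L : V → Finset ℕ) (μ : V → ℕ → ℝ) (ℓ n : ℝ),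
      -- G is k-uniform
      (∀ e ∈ E, e.card = k) →
      -- G is linear
      (∀ e ∈ E, ∀ f ∈ E, e ≠ f → (e ∩ f).card ≤ 1) →
      IsVertexCorrespondence E σ →
      -- (L, μ) is an assignment of weighted lists to the vertices: weights in (0,1]
      (∀ v : V, ∀ c ∈ L v, 0 < μ v c ∧ μ v c ≤ 1) →
      0 < ℓ → 0 < n →
      -- (i)
      3 * Real.exp 1 ≤ ℓ / n →
      -- (ii)
      (∀ v : V, ℓ ≤ ∑ c ∈ L v, μ v c) →
      -- (iii)
      (∀ v : V, ∀ c ∈ L v, NWeightV E L μ σ v c ≤ n) →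
      ∃ γ : V → ℕ, IsLσVertexColouring E L σ γ := by
  intro V _ _ _ E σ L μ ℓ n _ _ hσ hμ hℓ hn hratio
  have hratio' : 4 ≤ ℓ / n := by linarith [Real.add_one_le_exp 1]
  exact stmt_7_general E σ L μ ℓ n hσ (fun v c hc => (hμ v c hc).1.le) hℓ
    ((le_div_iff₀ hn).mp hratio')
end
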